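/- arXiv:1110.5682 — 3 statements merged into one kernel-verified Lean document; each statement's English description precedes it below -/
import Mathlib

section
/- Let μ be a Borel probability measure on [0,1)^d assigning zero mass to the boundary of every dyadic cube, and let ℓ ∈ ℕ. Then for μ-almost every x, limsup_{r→0} log μ(B(x,r))/log r = limsup_{n→∞} (1/(ℓn))·Σ_{i=1}^{n} H(μ_ℓ^{Q_i(x)}), and liminf_{r→0} log μ(B(x,r))/log r = liminf_{n→∞} (1/(ℓn))·Σ_{i=1}^{n} H(μ_ℓ^{Q_i(x)}). -/
open MeasureTheory Filter Metric Set

/-- The lower local dimension of a measure at a point: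
`liminf_{r→0} log μ(B(x,r)) / log r`. -/
noncomputable def lowerLocalDim {X : Type*} [MetricSpace X] [MeasurableSpace X]
    (μ : Measure X) (x : X) : EReal :=
  Filter.liminf (fun r : ℝ =>
    ((Real.log (μ (Metric.ball x r)).toReal / Real.log r : ℝ) : EReal))
    (nhdsWithin 0 (Set.Ioi 0))

/-- The upper local dimension of a measure at a point:
`limsup_{r→0} log μ(B(x,r)) / log r`. -/
noncomputable def upperLocalDim {X : Type*} [MetricSpace X] [MeasurableSpace X]
    (μ : Measure X) (x : X) : EReal :=
  Filter.limsup (fun r : ℝ =>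
    ((Real.log (μ (Metric.ball x r)).toReal / Real.log r : ℝ) : EReal))
    (nhdsWithin 0 (Set.Ioi 0))

/-- The half-open dyadic cell of level `n` with index `j`, i.e. `∏ᵢ [jᵢ/2ⁿ, (jᵢ+1)/2ⁿ)`. -/
def dyadicCell (d n : ℕ) (j : Fin d → ℤ) : Set (EuclideanSpace ℝ (Fin d)) :=
  {y | ∀ i, (j i : ℝ) / 2 ^ n ≤ y i ∧ y i < ((j i : ℝ) + 1) / 2 ^ n}

/-- The index of the level-`n` dyadic cube containing `x`. -/
noncomputable def dyadicIdx (d n : ℕ) (x : EuclideanSpace ℝ (Fin d)) : Fin d → ℤ :=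
  fun i => ⌊(2 : ℝ) ^ n * x i⌋

/-- `Q_n(x)`: the (unique) half-open dyadic cube of level `n` containing `x`. -/
noncomputable def Qcube (d n : ℕ) (x : EuclideanSpace ℝ (Fin d)) :
    Set (EuclideanSpace ℝ (Fin d)) :=
  dyadicCell d n (dyadicIdx d n x)

/-- `Q` is a dyadic cube (of some level) inside the unit cube `[0,1)^d`. -/
def IsDyadicCube (d : ℕ) (Q : Set (EuclideanSpace ℝ (Fin d))) : Prop :=
  ∃ (n : ℕ) (j : Fin d → ℤ), (∀ i, 0 ≤ j i ∧ j i < 2 ^ n) ∧ Q = dyadicCell d n j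

/-- The half-open unit cube `[0,1)^d`. -/
def unitCube (d : ℕ) : Set (EuclideanSpace ℝ (Fin d)) := dyadicCell d 0 0

/-- `H(μ_ℓ^{Q_n(x)})`: the base-2 entropy of the probability vector given by the relative
`μ`-measures of the `2^{ℓd}` level-`ℓ` dyadic subcubes of `Q_n(x)` (with the convention
`0·log 0 = 0`). -/
noncomputable def condEntropy' (d ℓ n : ℕ) (μ : Measure (EuclideanSpace ℝ (Fin d)))
    (x : EuclideanSpace ℝ (Fin d)) : ℝ :=
  ∑ k : Fin d → Fin (2 ^ ℓ),
    (fun p : ℝ => -(p * Real.logb 2 p))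
      ((μ (dyadicCell d (n + ℓ)
          (fun i => 2 ^ ℓ * dyadicIdx d n x i + ((k i : ℕ) : ℤ)))).toReal /
        (μ (Qcube d n x)).toReal)



theorem limsup_eq_of_sub {α : Type*} {l : Filter α} [l.NeBot] (u v : α → ℝ)
    (h : Tendsto (fun x => u x - v x) l (nhds 0)) :
    limsup (fun x => (u x : EReal)) l ≤ limsup (fun x => (v x : EReal)) l := by
  have h1 : Tendsto (fun x => ((u x - v x : ℝ) : EReal)) l (nhds ((0:ℝ) : EReal)) :=
    (continuous_coe_real_ereal.tendsto 0).comp h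
  have h2 := h1.limsup_eq
  have h3 : (fun x => (u x : EReal)) = (fun x => (v x : EReal)) + (fun x => ((u x - v x : ℝ) : EReal)) := by
    funext x
    simp only [Pi.add_apply]
    rw [← EReal.coe_add]; congr 1; ring
  rw [h3]
  refine (EReal.limsup_add_le ?_ ?_).trans ?_
  · right; rw [h2]; simp
  · right; rw [h2]; simp
  · rw [h2]; simp

theorem liminf_eq_of_sub {α : Type*} {l : Filter α} [l.NeBot] (u v : α → ℝ)
    (h : Tendsto (fun x => u x - v x) l (nhds 0)) :
    liminf (fun x => (v x : EReal)) l ≤ liminf (fun x => (u x : EReal)) l := by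
  have h1 : Tendsto (fun x => ((u x - v x : ℝ) : EReal)) l (nhds ((0:ℝ) : EReal)) :=
    (continuous_coe_real_ereal.tendsto 0).comp h
  have h2 := h1.liminf_eq
  have h3 : (fun x => (u x : EReal)) = (fun x => (v x : EReal)) + (fun x => ((u x - v x : ℝ) : EReal)) := by
    funext x
    simp only [Pi.add_apply]
    rw [← EReal.coe_add]; congr 1; ring
  rw [h3]
  refine le_trans ?_ (EReal.le_liminf_add)
  rw [h2]; simp

theorem lims_eq {α : Type*} {l : Filter α} [l.NeBot] (u v : α → ℝ)
    (h : Tendsto (fun x => u x - v x) l (nhds 0)) :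
    limsup (fun x => (u x : EReal)) l = limsup (fun x => (v x : EReal)) l ∧
    liminf (fun x => (u x : EReal)) l = liminf (fun x => (v x : EReal)) l := by
  have h' : Tendsto (fun x => v x - u x) l (nhds 0) := by
    simpa using h.neg
  exact ⟨le_antisymm (limsup_eq_of_sub u v h) (limsup_eq_of_sub v u h'),
    le_antisymm (liminf_eq_of_sub v u h') (liminf_eq_of_sub u v h)⟩

theorem lims_transfer {α : Type*} {l : Filter α} [l.NeBot] (F : α → ℝ) (g : ℕ → ℝ) (N : α → ℕ)
    (R : ℕ → α) (hN : Tendsto N l atTop) (hR : Tendsto R atTop l) (hNR : ∀ n, N (R n) = n)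
    (h : Tendsto (fun x => F x - g (N x)) l (nhds 0)) :
    limsup (fun x => (F x : EReal)) l = limsup (fun n => (g n : EReal)) atTop ∧
    liminf (fun x => (F x : EReal)) l = liminf (fun n => (g n : EReal)) atTop := by
  have hm : map N l = atTop := by
    apply le_antisymm hN
    have : map (N ∘ R) atTop = atTop := by
      have : N ∘ R = id := funext hNR
      rw [this, map_id]
    rw [← this, ← map_map]
    exact map_mono hR
  have := lims_eq F (fun x => g (N x)) h
  rw [← hm]
  exact this

/-- Deterministic part. -/
theorem det_incr (a h : ℕ → ℝ) (C : ℝ) (ℓ : ℕ) (hℓ : 0 < ℓ) (ha : Monotone a)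
    (h0 : ∀ n, 0 ≤ h n) (hC : ∀ n, h n ≤ C)
    (hS : Tendsto (fun n : ℕ => (∑ i ∈ Finset.Icc 1 n, (a (i + ℓ) - a i - h i)) / (n:ℝ)) atTop (nhds 0)) (k : ℕ) :
    Tendsto (fun n : ℕ => (a (n + k) - a n) / (n:ℝ)) atTop (nhds 0) := by
  set S : ℕ → ℝ := fun n => ∑ i ∈ Finset.Icc 1 n, (a (i + ℓ) - a i - h i) with hSdef
  have hnat : Tendsto (fun n : ℕ => (n:ℝ)) atTop atTop := tendsto_natCast_atTop_atTop
  have hh : Tendsto (fun n : ℕ => h n / (n:ℝ)) atTop (nhds 0) := by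
    apply squeeze_zero (g := fun n : ℕ => C / (n:ℝ))
    · intro n; have := h0 n; positivity
    · intro n; gcongr; exact hC n
    · exact tendsto_const_nhds.div_atTop hnat
  have hratio : ∀ c : ℝ, Tendsto (fun n : ℕ => ((n:ℝ) + c) / (n:ℝ)) atTop (nhds 1) := by
    intro c
    have : Tendsto (fun n : ℕ => 1 + c / (n:ℝ)) atTop (nhds (1 + 0)) :=
      tendsto_const_nhds.add (tendsto_const_nhds.div_atTop hnat)
    rw [add_zero] at this
    refine this.congr' ?_
    filter_upwards [eventually_gt_atTop 0] with n hn
    have : (n:ℝ) ≠ 0 := by positivity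
    field_simp
  have hI1 : Tendsto (fun n : ℕ => (a (n + 1 + ℓ) - a (n + 1)) / ((n + 1 : ℕ):ℝ)) atTop (nhds 0) := by
    have e1 := (tendsto_add_atTop_iff_nat 1).2 hS
    have e2 := (tendsto_add_atTop_iff_nat 1).2 hh
    have e3 : Tendsto (fun n : ℕ => (n:ℝ) / ((n + 1 : ℕ):ℝ)) atTop (nhds 1) := by
      simpa using tendsto_natCast_div_add_atTop (1:ℝ)
    have e4 := (e1.sub (hS.mul e3)).add e2
    simp only [mul_one, sub_self, add_zero] at e4
    refine e4.congr' ?_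
    filter_upwards [eventually_gt_atTop 0] with n hn
    have h1 : (n:ℝ) ≠ 0 := by positivity
    rw [Finset.sum_Icc_succ_top (by omega)]
    field_simp
    ring
  have hI : Tendsto (fun n : ℕ => (a (n + ℓ) - a n) / (n:ℝ)) atTop (nhds 0) :=
    (tendsto_add_atTop_iff_nat 1).1 hI1
  have hk : ∀ k : ℕ, Tendsto (fun n : ℕ => (a (n + k * ℓ) - a n) / (n:ℝ)) atTop (nhds 0) := by
    intro k
    induction k with
    | zero => simp
    | succ k ih =>
      have e1 := (tendsto_add_atTop_iff_nat (k * ℓ)).2 hI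
      have e2 := (e1.mul (hratio ((k * ℓ : ℕ) : ℝ))).add ih
      simp only [zero_mul, add_zero] at e2
      refine e2.congr' ?_
      filter_upwards [eventually_gt_atTop 0] with n hn
      have h1 : (n:ℝ) ≠ 0 := by positivity
      have h2 : ((n + k * ℓ : ℕ) : ℝ) ≠ 0 := by positivity
      rw [show n + (k+1) * ℓ = n + k * ℓ + ℓ by ring]
      rw [← Nat.cast_add]
      field_simp
      ring
  apply squeeze_zero (g := fun n : ℕ => (a (n + k * ℓ) - a n) / (n:ℝ)) _ _ (hk k)
  · intro n
    have := ha (show n ≤ n + k by omega)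
    have : 0 ≤ a (n+k) - a n := by linarith
    positivity
  · intro n
    have := ha (show n + k ≤ n + k * ℓ by nlinarith)
    gcongr

theorem det_avg (a h : ℕ → ℝ) (C : ℝ) (ℓ : ℕ) (hℓ : 0 < ℓ) (ha : Monotone a)
    (h0 : ∀ n, 0 ≤ h n) (hC : ∀ n, h n ≤ C)
    (hS : Tendsto (fun n : ℕ => (∑ i ∈ Finset.Icc 1 n, (a (i + ℓ) - a i - h i)) / (n:ℝ)) atTop (nhds 0)) :
    Tendsto (fun n : ℕ => (1 / ((ℓ:ℝ) * n)) * ∑ i ∈ Finset.Icc 1 n, h i - a n / n) atTop (nhds 0) := by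
  have hnat : Tendsto (fun n : ℕ => (n:ℝ)) atTop atTop := tendsto_natCast_atTop_atTop
  have tel : ∀ n, ∑ i ∈ Finset.Icc 1 n, (a (i + ℓ) - a i) = ∑ j ∈ Finset.Icc 1 ℓ, (a (n + j) - a j) := by
    intro n
    induction n with
    | zero => simp
    | succ n ih =>
      rw [Finset.sum_Icc_succ_top (by omega), ih]
      have key : ∑ j ∈ Finset.Icc 1 ℓ, (a (n + 1 + j) - a (n + j)) = a (n + 1 + ℓ) - a (n + 1) := by
        clear ih hS
        clear hℓ
        induction ℓ with
        | zero => simp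
        | succ m ihm =>
          rw [Finset.sum_Icc_succ_top (by omega), ihm]
          rw [show n + 1 + m = n + (m+1) by ring]
          ring
      rw [← key, ← Finset.sum_add_distrib]
      apply Finset.sum_congr rfl; intros; ring
  have e1 : Tendsto (fun n : ℕ => ∑ j ∈ Finset.Icc 1 ℓ, (a (n + j) - a n) / (n:ℝ)) atTop (nhds (∑ j ∈ Finset.Icc 1 ℓ, 0)) :=
    tendsto_finsetSum _ fun j _ => det_incr a h C ℓ hℓ ha h0 hC hS j
  have e2 : Tendsto (fun n : ℕ => (∑ j ∈ Finset.Icc 1 ℓ, a j) / (n:ℝ)) atTop (nhds 0) :=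
    tendsto_const_nhds.div_atTop hnat
  have e3 := ((e1.sub e2).sub hS).const_mul (1 / (ℓ:ℝ))
  simp only [Finset.sum_const_zero, sub_zero, mul_zero] at e3
  refine e3.congr' ?_
  filter_upwards [eventually_gt_atTop 0] with n hn
  have h1 : (n:ℝ) ≠ 0 := by positivity
  have h2 : (ℓ:ℝ) ≠ 0 := by positivity
  rw [Finset.sum_sub_distrib, tel, ← Finset.sum_div, Finset.sum_sub_distrib, Finset.sum_sub_distrib]
  simp only [Finset.sum_const, Nat.card_Icc, add_tsub_cancel_right, nsmul_eq_mul]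
  field_simp
  ring

theorem det_bdd (a h : ℕ → ℝ) (C : ℝ) (ℓ : ℕ) (hℓ : 0 < ℓ) (ha : Monotone a)
    (h0 : ∀ n, 0 ≤ h n) (hC : ∀ n, h n ≤ C)
    (hS : Tendsto (fun n : ℕ => (∑ i ∈ Finset.Icc 1 n, (a (i + ℓ) - a i - h i)) / (n:ℝ)) atTop (nhds 0)) :
    ∀ᶠ n : ℕ in atTop, a n / n ≤ C + 1 := by
  have e := det_avg a h C ℓ hℓ ha h0 hC hS
  have := e.eventually (lt_mem_nhds (show (-1:ℝ) < 0 by norm_num))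
  filter_upwards [this, eventually_gt_atTop 0] with n hn hn0
  have hCp : 0 ≤ C := (h0 0).trans (hC 0)
  have h3 : ∑ i ∈ Finset.Icc 1 n, h i ≤ n * C := by
    refine (Finset.sum_le_sum fun i _ => hC i).trans ?_
    simp
  have h1 : (0:ℝ) < n := by positivity
  have h2 : (1:ℝ) ≤ ℓ := by exact_mod_cast hℓ
  have : (1 / ((ℓ:ℝ) * n)) * ∑ i ∈ Finset.Icc 1 n, h i ≤ C := by
    rw [one_div_mul_eq_div, div_le_iff₀ (by positivity)]
    have : 0 ≤ n * C := by positivity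
    nlinarith
  linarith

/-- SLLN interpolation between squares -/
theorem slln_fill (I h : ℕ → ℝ) (C : ℝ) (hI : ∀ n, 0 ≤ I n) (h0 : ∀ n, 0 ≤ h n) (hC : ∀ n, h n ≤ C)
    (hS : Tendsto (fun k : ℕ => (∑ i ∈ Finset.Icc 1 (k^2), (I i - h i)) / ((k:ℝ)^2)) atTop (nhds 0)) :
    Tendsto (fun n : ℕ => (∑ i ∈ Finset.Icc 1 n, (I i - h i)) / (n:ℝ)) atTop (nhds 0) := by
  set S : ℕ → ℝ := fun n => ∑ i ∈ Finset.Icc 1 n, (I i - h i) with hSdef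
  have hCp : 0 ≤ C := (h0 0).trans (hC 0)
  have hB : ∀ n m, n ≤ m → S n - C * ((m:ℝ) - n) ≤ S m := by
    intro n m hnm
    induction m, hnm using Nat.le_induction with
    | base => simp
    | succ m hm ih =>
      have : S (m+1) = S m + (I (m+1) - h (m+1)) := by
        simp only [hSdef]; rw [Finset.sum_Icc_succ_top (by omega)]
      rw [this]; push_cast
      have := hI (m+1); have := hC (m+1); linarith
  have hnat : Tendsto (fun n : ℕ => (n:ℝ)) atTop atTop := tendsto_natCast_atTop_atTop
  have hsq : Tendsto Nat.sqrt atTop atTop := by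
    rw [Filter.tendsto_atTop]
    intro b
    filter_upwards [eventually_ge_atTop (b^2)] with n hn
    rw [Nat.le_sqrt']; exact hn
  -- bounds as functions of k
  let e : ℕ → ℝ := fun k => |S (k^2) / (k:ℝ)^2| + 4 * |S ((k+1)^2) / ((k+1:ℕ):ℝ)^2| + C * (3 / (k:ℝ))
  have he : Tendsto e atTop (nhds 0) := by
    have e1 := hS.abs
    have e2 := ((tendsto_add_atTop_iff_nat 1).2 hS).abs
    have e3 : Tendsto (fun n : ℕ => (3:ℝ) / (n:ℝ)) atTop (nhds 0) := tendsto_const_nhds.div_atTop hnat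
    have := (e1.add (e2.const_mul 4)).add (e3.const_mul C)
    simpa [e, hSdef] using this
  apply squeeze_zero_norm' _ (he.comp hsq)
  filter_upwards [eventually_gt_atTop 0] with n hn
  have hk0 : 0 < Nat.sqrt n := Nat.sqrt_pos.2 hn
  have hk1 : (Nat.sqrt n)^2 ≤ n := Nat.sqrt_le' n
  have hk2 : n ≤ (Nat.sqrt n + 1)^2 := (Nat.lt_succ_sqrt' n).le
  simp only [Function.comp, e]
  generalize Nat.sqrt n = k at *
  have b1 := hB _ _ hk1
  have b2 := hB _ _ hk2
  have hkr : (1:ℝ) ≤ k := by exact_mod_cast hk0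
  have hk1r : (k:ℝ)^2 ≤ n := by exact_mod_cast hk1
  have hk2r : (n:ℝ) ≤ (k+1)^2 := by exact_mod_cast hk2
  push_cast at b1 b2 ⊢
  rw [Real.norm_eq_abs, abs_div, abs_of_nonneg (show (0:ℝ) ≤ n by positivity), div_le_iff₀ (by linarith [sq_nonneg (k:ℝ), show (0:ℝ) < (k:ℝ)^2 by positivity])]
  have t1 : |S (k^2)| ≤ |S (k^2) / (k:ℝ)^2| * n := by
    rw [abs_div, abs_of_nonneg (sq_nonneg (k:ℝ)), div_mul_eq_mul_div, le_div_iff₀ (by positivity)]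
    gcongr
  have t2 : |S ((k+1)^2)| ≤ 4 * |S ((k+1)^2) / ((k:ℝ)+1)^2| * n := by
    rw [abs_div, abs_of_nonneg (sq_nonneg ((k:ℝ)+1)), mul_assoc, div_mul_eq_mul_div, ← mul_div_assoc, le_div_iff₀ (by positivity)]
    have : ((k:ℝ)+1)^2 ≤ 4 * n := by nlinarith
    have := mul_le_mul_of_nonneg_left this (abs_nonneg (S ((k+1)^2)))
    linarith
  have t3 : C * (((k:ℝ)+1)^2 - k^2) ≤ C * (3 / (k:ℝ)) * n := by
    rw [mul_assoc]; gcongr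
    rw [div_mul_eq_mul_div, le_div_iff₀ (by positivity)]
    nlinarith
  have t4 : C * ((n:ℝ) - k^2) ≤ C * (((k:ℝ)+1)^2 - k^2) := by gcongr
  have t5 : C * (((k:ℝ)+1)^2 - n) ≤ C * (((k:ℝ)+1)^2 - k^2) := by gcongr
  rw [abs_le]
  have := neg_abs_le (S (k^2)); have := le_abs_self (S ((k+1)^2))
  have := abs_nonneg (S (k^2)); have := abs_nonneg (S ((k+1)^2))
  constructor <;> linarith

theorem locdim_det (β : ℝ → ℝ) (a : ℕ → ℝ) (K : ℝ) (c : ℕ)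
    (hmono : Monotone β) (hβ0 : ∀ r, 0 < r → 0 < β r) (hβ1 : ∀ r, β r ≤ 1)
    (hinc : Tendsto (fun n : ℕ => (a (n + c) - a n) / (n:ℝ)) atTop (nhds 0))
    (hbdd : ∀ᶠ n : ℕ in atTop, a n / n ≤ K)
    (h1 : ∀ n : ℕ, - Real.logb 2 (β ((1/2)^(n+1))) ≤ a (n + c))
    (h2 : ∀ᶠ n : ℕ in atTop, a n - 2 * Real.logb 2 n ≤ - Real.logb 2 (β ((1/2)^n))) :
    Tendsto (fun r : ℝ => Real.log (β r) / Real.log r -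
      (fun n : ℕ => a n / (n:ℝ)) ⌊- Real.logb 2 r⌋₊) (nhdsWithin 0 (Set.Ioi 0)) (nhds 0) := by
  have hnat : Tendsto (fun n : ℕ => (n:ℝ)) atTop atTop := tendsto_natCast_atTop_atTop
  have hl2 : 0 < Real.log 2 := Real.log_pos (by norm_num)
  have hN : Tendsto (fun r : ℝ => ⌊- Real.logb 2 r⌋₊) (nhdsWithin 0 (Set.Ioi 0)) atTop := by
    refine tendsto_nat_floor_atTop.comp ?_
    refine tendsto_neg_atBot_atTop.comp ?_
    exact Real.tendsto_logb_nhdsGT_zero (by norm_num)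
  let e : ℕ → ℝ := fun n => |(a (n + c) - a n) / (n:ℝ)| + (2 * (Real.logb 2 n / n) + |K| / n)
  have he : Tendsto e atTop (nhds 0) := by
    have t1 := hinc.abs
    have t2 : Tendsto (fun n : ℕ => Real.logb 2 n / (n:ℝ)) atTop (nhds 0) := by
      have := (Real.isLittleO_log_id_atTop.tendsto_div_nhds_zero.comp hnat).div_const (Real.log 2)
      rw [zero_div] at this
      refine this.congr fun n => ?_
      simp only [Function.comp, id, Real.logb]
      rw [div_right_comm]
    have t3 : Tendsto (fun n : ℕ => |K| / (n:ℝ)) atTop (nhds 0) := tendsto_const_nhds.div_atTop hnat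
    have := t1.add ((t2.const_mul 2).add t3)
    simpa [e] using this
  apply squeeze_zero_norm' _ (he.comp hN)
  have hr0 : ∀ᶠ r : ℝ in nhdsWithin 0 (Set.Ioi 0), 0 < r := eventually_mem_nhdsWithin
  filter_upwards [hr0, hN.eventually (hbdd.and (h2.and (eventually_gt_atTop 0)))] with r hr ⟨hb, hh2, hn0⟩
  simp only [Function.comp]
  have hfl0 : 0 ≤ - Real.logb 2 r := by
    by_contra hneg
    rw [Nat.floor_of_nonpos (by linarith)] at hn0
    exact lt_irrefl _ hn0
  have hf1 := Nat.floor_le hfl0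
  have hf2 := Nat.lt_floor_add_one (- Real.logb 2 r)
  generalize ⌊- Real.logb 2 r⌋₊ = n at *
  have hnr : (0:ℝ) < n := by exact_mod_cast hn0
  have hrup : r ≤ (1/2)^n := by
    have : Real.logb 2 r ≤ -n := by linarith
    rw [Real.logb_le_iff_le_rpow (by norm_num) hr] at this
    rw [Real.rpow_neg (by norm_num), Real.rpow_natCast] at this
    simpa using this
  have hrlo : (1/2)^(n+1) ≤ r := by
    have : -((n+1 : ℕ):ℝ) ≤ Real.logb 2 r := by push_cast; linarith
    rw [Real.le_logb_iff_rpow_le (by norm_num) hr] at this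
    rw [Real.rpow_neg (by norm_num), Real.rpow_natCast] at this
    simpa using this
  have hF : Real.log (β r) / Real.log r = (- Real.logb 2 (β r)) / (- Real.logb 2 r) := by
    rw [neg_div_neg_eq, Real.logb, Real.logb, div_div_div_cancel_right₀ hl2.ne']
  rw [hF]
  have hb0 : 0 ≤ - Real.logb 2 (β r) := by
    have := Real.logb_nonpos (b := 2) (by norm_num) (hβ0 r hr).le (hβ1 r)
    linarith
  have hbu : - Real.logb 2 (β r) ≤ a (n + c) := by
    refine le_trans ?_ (h1 n)
    apply neg_le_neg
    exact Real.logb_le_logb_of_le (by norm_num) (hβ0 _ (by positivity)) (hmono hrlo)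
  have hbl : a n - 2 * Real.logb 2 n ≤ - Real.logb 2 (β r) := by
    refine le_trans hh2 ?_
    apply neg_le_neg
    exact Real.logb_le_logb_of_le (by norm_num) (hβ0 _ hr) (hmono hrup)
  generalize - Real.logb 2 (β r) = b at *
  generalize - Real.logb 2 r = t at *
  have ht : 0 < t := by linarith
  have hlog0 : 0 ≤ Real.logb 2 n := Real.logb_nonneg (by norm_num) (by exact_mod_cast hn0)
  have hup : b / t - a n / n ≤ (a (n + c) - a n) / (n:ℝ) := by
    rw [sub_div]
    have : b / t ≤ a (n + c) / n := by gcongr; exact hb0.trans hbu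
    linarith
  have hlo : a n / n - b / t ≤ 2 * (Real.logb 2 n / n) + |K| / n := by
    have s1 : b / (n+1) ≤ b / t := by gcongr
    have s2 : (a n - 2 * Real.logb 2 n) / (n + 1) ≤ b / (n+1) := by gcongr
    have s3 : a n / n - a n / (n+1) ≤ |K| / n := by
      have : a n / n - a n / (n+1) = (a n / n) / (n+1) := by field_simp; ring
      rw [this]
      have := le_abs_self K
      have : 0 ≤ |K| := abs_nonneg K
      gcongr
      · linarith
      · linarith
    have s4 : Real.logb 2 n / (n+1) ≤ Real.logb 2 n / n := by
      gcongr; linarith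
    have s5 : (a n - 2 * Real.logb 2 n) / (n + 1) = a n / (n+1) - 2 * (Real.logb 2 n / (n+1)) := by ring
    linarith
  have p1 := le_abs_self ((a (n + c) - a n) / (n:ℝ))
  have p2 := abs_nonneg ((a (n + c) - a n) / (n:ℝ))
  have p3 : 0 ≤ 2 * (Real.logb 2 n / n) + |K| / n := by positivity
  rw [Real.norm_eq_abs, abs_le]
  constructor <;> simp only [e] <;> linarith

abbrev EE (d : ℕ) := EuclideanSpace ℝ (Fin d)

theorem mem_dyadicCell_iff {d n : ℕ} {j : Fin d → ℤ} {y : EE d} :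
    y ∈ dyadicCell d n j ↔ dyadicIdx d n y = j := by
  have h2 : (0:ℝ) < 2 ^ n := by positivity
  constructor
  · intro h
    funext i
    obtain ⟨h1, h3⟩ := h i
    rw [div_le_iff₀ h2] at h1
    rw [lt_div_iff₀ h2] at h3
    rw [dyadicIdx, Int.floor_eq_iff]
    constructor <;> linarith
  · rintro rfl i
    simp only [dyadicIdx]
    rw [div_le_iff₀ h2, lt_div_iff₀ h2]
    have h1 := Int.floor_le ((2:ℝ)^n * y i)
    have h3 := Int.lt_floor_add_one ((2:ℝ)^n * y i)
    constructor <;> linarith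

theorem dyadicIdx_measurable (d n : ℕ) : Measurable (dyadicIdx d n) := by
  unfold dyadicIdx
  fun_prop

theorem dyadicCell_eq_preimage (d n : ℕ) (j : Fin d → ℤ) :
    dyadicCell d n j = dyadicIdx d n ⁻¹' {j} := by
  ext y; simp [mem_dyadicCell_iff]

theorem dyadicCell_measurable (d n : ℕ) (j : Fin d → ℤ) : MeasurableSet (dyadicCell d n j) := by
  rw [dyadicCell_eq_preimage]
  exact dyadicIdx_measurable d n (measurableSet_singleton j)

theorem dyadicCell_disjoint (d n : ℕ) (s : Set (Fin d → ℤ)) : s.PairwiseDisjoint (dyadicCell d n) := by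
  intro i _ j _ hij
  rw [Function.onFun, Set.disjoint_left]
  intro x hx hx'
  rw [mem_dyadicCell_iff] at hx hx'
  exact hij (hx.symm.trans hx')

theorem dyadicIdx_parent (d n ℓ : ℕ) (x : EE d) :
    dyadicIdx d n x = fun i => dyadicIdx d (n + ℓ) x i / 2 ^ ℓ := by
  funext i
  simp only [dyadicIdx]
  have := Int.floor_div_natCast ((2:ℝ)^(n+ℓ) * x i) (2^ℓ)
  push_cast at this
  rw [← this]
  congr 1
  rw [pow_add]; field_simp

/-- index set -/
noncomputable def Jset (d n : ℕ) : Finset (Fin d → ℤ) := Fintype.piFinset fun _ => Finset.Ico 0 (2 ^ n)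

def childIdx (d ℓ : ℕ) (q : Fin d → ℤ) (k : Fin d → Fin (2 ^ ℓ)) : Fin d → ℤ :=
  fun i => 2 ^ ℓ * q i + ((k i : ℕ) : ℤ)

def parIdx (d ℓ : ℕ) (r : Fin d → ℤ) : Fin d → ℤ := fun i => r i / 2 ^ ℓ

def digIdx (d ℓ : ℕ) (r : Fin d → ℤ) : Fin d → Fin (2 ^ ℓ) :=
  fun i => ⟨(r i % 2 ^ ℓ).toNat, by
    have h1 : (0:ℤ) < 2 ^ ℓ := by positivity
    have h2 := Int.emod_lt_of_pos (r i) h1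
    have h3 := Int.emod_nonneg (r i) h1.ne'
    zify
    rw [Int.toNat_of_nonneg h3]; exact h2⟩

theorem child_par_dig (d ℓ : ℕ) (r : Fin d → ℤ) : childIdx d ℓ (parIdx d ℓ r) (digIdx d ℓ r) = r := by
  funext i
  simp only [childIdx, parIdx, digIdx]
  have h1 : (0:ℤ) < 2 ^ ℓ := by positivity
  have h3 := Int.emod_nonneg (r i) h1.ne'
  rw [Int.toNat_of_nonneg h3]
  exact Int.mul_ediv_add_emod _ _

theorem par_child (d ℓ : ℕ) (q : Fin d → ℤ) (k) : parIdx d ℓ (childIdx d ℓ q k) = q := by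
  funext i
  simp only [childIdx, parIdx]
  have h1 : (0:ℤ) < 2 ^ ℓ := by positivity
  have h4 : (((k i : ℕ) : ℤ)) < 2 ^ ℓ := by exact_mod_cast (k i).2
  rw [Int.add_comm, Int.add_mul_ediv_left _ _ h1.ne', Int.ediv_eq_zero_of_lt (by positivity) h4]
  simp

theorem dig_child (d ℓ : ℕ) (q : Fin d → ℤ) (k) : digIdx d ℓ (childIdx d ℓ q k) = k := by
  funext i
  apply Fin.ext
  simp only [childIdx, digIdx]
  have h4 : (((k i : ℕ) : ℤ)) < 2 ^ ℓ := by exact_mod_cast (k i).2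
  rw [Int.add_comm, Int.add_mul_emod_self_left, Int.emod_eq_of_lt (by positivity) h4]
  simp

theorem childIdx_mem (d n ℓ : ℕ) (q : Fin d → ℤ) (k) (hq : q ∈ Jset d n) :
    childIdx d ℓ q k ∈ Jset d (n + ℓ) := by
  simp only [Jset, Fintype.mem_piFinset, Finset.mem_Ico] at *
  intro i
  simp only [childIdx]
  have h1 : (0:ℤ) < 2 ^ ℓ := by positivity
  have h4 : (((k i : ℕ) : ℤ)) < 2 ^ ℓ := by exact_mod_cast (k i).2
  have h5 : (0:ℤ) ≤ (((k i : ℕ) : ℤ)) := by positivity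
  obtain ⟨h6, h7⟩ := hq i
  rw [pow_add]
  constructor
  · positivity
  · nlinarith

theorem parIdx_mem (d n ℓ : ℕ) (r : Fin d → ℤ) (hr : r ∈ Jset d (n + ℓ)) :
    parIdx d ℓ r ∈ Jset d n := by
  simp only [Jset, Fintype.mem_piFinset, Finset.mem_Ico] at *
  intro i
  obtain ⟨h6, h7⟩ := hr i
  have h1 : (0:ℤ) < 2 ^ ℓ := by positivity
  simp only [parIdx]
  constructor
  · positivity
  · apply Int.ediv_lt_of_lt_mul h1
    rwa [← pow_add]

theorem sum_Jset (d n ℓ : ℕ) (f : (Fin d → ℤ) → ℝ) :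
    ∑ r ∈ Jset d (n + ℓ), f r = ∑ q ∈ Jset d n, ∑ k, f (childIdx d ℓ q k) := by
  rw [← Finset.sum_product']
  refine Finset.sum_nbij' (fun r => (parIdx d ℓ r, digIdx d ℓ r)) (fun p => childIdx d ℓ p.1 p.2) ?_ ?_ ?_ ?_ ?_
  · intro r hr
    simp [parIdx_mem d n ℓ r hr]
  · intro p hp
    simp only [Finset.mem_product, Finset.mem_univ, and_true] at hp
    exact childIdx_mem d n ℓ _ _ hp
  · intro r _; exact child_par_dig d ℓ r
  · intro p _; simp [par_child, dig_child]
  · intro r _; simp [child_par_dig]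

section
variable {d : ℕ} (μ : Measure (EE d)) [IsProbabilityMeasure μ]

theorem mass_sum (n ℓ : ℕ) (q : Fin d → ℤ) :
    ∑ k, μ.real (dyadicCell d (n + ℓ) (childIdx d ℓ q k)) = μ.real (dyadicCell d n q) := by
  rw [← measureReal_biUnion_finset]
  · congr 1
    ext x
    simp only [Finset.mem_univ, Set.iUnion_true, Set.mem_iUnion, mem_dyadicCell_iff]
    rw [dyadicIdx_parent d n ℓ x]
    change _ ↔ parIdx d ℓ _ = q
    constructor
    · rintro ⟨k, hk⟩
      rw [hk, par_child]
    · rintro rfl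
      exact ⟨digIdx d ℓ _, (child_par_dig d ℓ _).symm⟩
  · intro k _ k' _ hk
    rw [Function.onFun, Set.disjoint_left]
    intro x hx hx'
    rw [mem_dyadicCell_iff] at hx hx'
    apply hk
    rw [← dig_child d ℓ q k, ← dig_child d ℓ q k', ← hx, ← hx']
  · intro k _; exact dyadicCell_measurable _ _ _

theorem ae_mem_J (hsupp : μ (unitCube d) = 1) (n : ℕ) : ∀ᵐ x ∂μ, dyadicIdx d n x ∈ Jset d n := by
  have : ∀ᵐ x ∂μ, x ∈ unitCube d := by
    exact (mem_ae_iff_prob_eq_one (dyadicCell_measurable _ _ _)).2 hsupp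
  filter_upwards [this] with x hx
  simp only [Jset, Fintype.mem_piFinset, Finset.mem_Ico]
  intro i
  have := hx i
  simp at this
  simp only [dyadicIdx]
  have h2 : (0:ℝ) < 2 ^ n := by positivity
  constructor
  · apply Int.floor_nonneg.2
    have := this.1
    positivity
  · rw [Int.floor_lt]
    push_cast
    nlinarith

theorem idx_meas (n : ℕ) (G : (Fin d → ℤ) → ℝ) : Measurable (fun x : EE d => G (dyadicIdx d n x)) :=
  (measurable_of_countable G).comp (dyadicIdx_measurable d n)

theorem idx_memLp (hsupp : μ (unitCube d) = 1) (n : ℕ) (G : (Fin d → ℤ) → ℝ) :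
    MemLp (fun x => G (dyadicIdx d n x)) 2 μ := by
  refine MemLp.of_bound (idx_meas n G).aestronglyMeasurable (∑ q ∈ Jset d n, ‖G q‖) ?_
  filter_upwards [ae_mem_J μ hsupp n] with x hx
  exact Finset.single_le_sum (f := fun q => ‖G q‖) (fun _ _ => norm_nonneg _) hx

theorem idx_integrable (hsupp : μ (unitCube d) = 1) (n : ℕ) (G : (Fin d → ℤ) → ℝ) :
    Integrable (fun x => G (dyadicIdx d n x)) μ :=
  (idx_memLp μ hsupp n G).integrable (by norm_num)

theorem idx_integral (hsupp : μ (unitCube d) = 1) (n : ℕ) (G : (Fin d → ℤ) → ℝ) :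
    ∫ x, G (dyadicIdx d n x) ∂μ = ∑ q ∈ Jset d n, μ.real (dyadicCell d n q) * G q := by
  have : ∫ x, G (dyadicIdx d n x) ∂μ =
      ∫ x, ∑ q ∈ Jset d n, (dyadicCell d n q).indicator (fun _ => G q) x ∂μ := by
    apply integral_congr_ae
    filter_upwards [ae_mem_J μ hsupp n] with x hx
    rw [Finset.sum_eq_single_of_mem _ hx]
    · rw [Set.indicator_of_mem]
      rw [mem_dyadicCell_iff]
    · intro q _ hq
      rw [Set.indicator_of_notMem]
      rw [mem_dyadicCell_iff]
      exact fun h => hq h.symm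
  rw [this, integral_finsetSum]
  · apply Finset.sum_congr rfl
    intro q _
    rw [integral_indicator_const _ (dyadicCell_measurable _ _ _), smul_eq_mul]
  · intro q _
    exact (integrable_const _).indicator (dyadicCell_measurable _ _ _)

theorem ae_pos (n : ℕ) : ∀ᵐ x ∂μ, 0 < μ.real (Qcube d n x) := by
  have : ∀ᵐ x ∂μ, ∀ q : Fin d → ℤ, μ (dyadicCell d n q) = 0 → x ∉ dyadicCell d n q := by
    rw [ae_all_iff]
    intro q
    by_cases h : μ (dyadicCell d n q) = 0
    · filter_upwards [measure_eq_zero_iff_ae_notMem.1 h] with x hx _ using hx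
    · exact Eventually.of_forall fun x h' => absurd h' h
  filter_upwards [this] with x hx
  rw [measureReal_def]
  apply ENNReal.toReal_pos _ (measure_ne_top _ _)
  intro h
  exact hx _ h (mem_dyadicCell_iff.2 rfl)

theorem ae_tendsto_zero_of_summable (f : ℕ → EE d → ℝ) (c : ℕ → ℝ) (hm : ∀ n, Integrable (f n) μ)
    (h0 : ∀ n x, 0 ≤ f n x) (hc : Summable c) (hle : ∀ n, ∫ x, f n x ∂μ ≤ c n) :
    ∀ᵐ x ∂μ, Tendsto (fun n => f n x) atTop (nhds 0) := by
  have hfm : ∀ n, AEMeasurable (fun x => ENNReal.ofReal (f n x)) μ := fun n =>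
    (hm n).aestronglyMeasurable.aemeasurable.ennreal_ofReal
  have h1 : ∫⁻ x, ∑' n, ENNReal.ofReal (f n x) ∂μ ≠ ⊤ := by
    rw [lintegral_tsum hfm]
    have hs : ∀ n, ∫⁻ x, ENNReal.ofReal (f n x) ∂μ ≤ ENNReal.ofReal (c n) := by
      intro n
      rw [← ofReal_integral_eq_lintegral_ofReal (hm n) (Eventually.of_forall (h0 n))]
      exact ENNReal.ofReal_le_ofReal (hle n)
    refine ne_top_of_le_ne_top ?_ (ENNReal.tsum_le_tsum hs)
    exact hc.tsum_ofReal_ne_top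
  have h2 := ae_lt_top' (AEMeasurable.tsum hfm) h1
  filter_upwards [h2] with x hx
  have := ENNReal.tendsto_atTop_zero_of_tsum_ne_top hx.ne
  have := (ENNReal.tendsto_toReal ENNReal.zero_ne_top).comp this
  simp only [ENNReal.toReal_zero] at this
  refine this.congr fun n => ?_
  simp [Function.comp, ENNReal.toReal_ofReal (h0 n x)]


/-- cell entropy -/
noncomputable def Hq (ℓ n : ℕ) (q : Fin d → ℤ) : ℝ :=
  ∑ k : Fin d → Fin (2 ^ ℓ),
    -((μ.real (dyadicCell d (n + ℓ) (childIdx d ℓ q k)) / μ.real (dyadicCell d n q)) *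
      Real.logb 2 (μ.real (dyadicCell d (n + ℓ) (childIdx d ℓ q k)) / μ.real (dyadicCell d n q)))

noncomputable def Gq (ℓ n : ℕ) (r : Fin d → ℤ) : ℝ :=
  - Real.logb 2 (μ.real (dyadicCell d (n + ℓ) r) / μ.real (dyadicCell d n (parIdx d ℓ r)))
    - Hq μ ℓ n (parIdx d ℓ r)

theorem plogp_bounds {p : ℝ} (h0 : 0 ≤ p) (h1 : p ≤ 1) :
    0 ≤ -(p * Real.logb 2 p) ∧ -(p * Real.logb 2 p) ≤ 1 / Real.log 2 := by
  have hl2 : 0 < Real.log 2 := Real.log_pos (by norm_num)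
  have hlog : -(p * Real.log p) ≤ 1 := by
    rcases h0.eq_or_lt with rfl | hp
    · simp
    · have := Real.one_sub_inv_le_log_of_pos hp
      have := mul_le_mul_of_nonneg_left this h0
      rw [mul_sub, mul_inv_cancel₀ hp.ne'] at this
      linarith
  have hlog0 : 0 ≤ -(p * Real.log p) := by
    have := Real.log_nonpos h0 h1
    nlinarith
  have e : -(p * Real.logb 2 p) = -(p * Real.log p) / Real.log 2 := by
    rw [Real.logb]; ring
  rw [e]
  constructor
  · positivity
  · gcongr

theorem plogp_sq {p : ℝ} (h0 : 0 ≤ p) (h1 : p ≤ 1) :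
    p * (Real.logb 2 p)^2 ≤ 4 * (1 / Real.log 2)^2 := by
  have hs0 := Real.sqrt_nonneg p
  have hs1 : √p ≤ 1 := Real.sqrt_le_one.2 h1
  obtain ⟨b1, b2⟩ := plogp_bounds hs0 hs1
  have e : p * (Real.logb 2 p)^2 = 4 * (-(√p * Real.logb 2 √p))^2 := by
    have : Real.logb 2 √p = Real.logb 2 p / 2 := by
      rw [Real.logb, Real.logb, Real.log_sqrt h0]; ring
    rw [this]
    have := Real.sq_sqrt h0
    calc p * (Real.logb 2 p)^2 = (√p)^2 * (Real.logb 2 p)^2 := by rw [this]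
      _ = _ := by ring
  rw [e]
  gcongr

theorem ratio_bounds (ℓ n : ℕ) (q : Fin d → ℤ) (k) :
    0 ≤ μ.real (dyadicCell d (n + ℓ) (childIdx d ℓ q k)) / μ.real (dyadicCell d n q) ∧
    μ.real (dyadicCell d (n + ℓ) (childIdx d ℓ q k)) / μ.real (dyadicCell d n q) ≤ 1 ∧
    μ.real (dyadicCell d (n + ℓ) (childIdx d ℓ q k)) = μ.real (dyadicCell d n q) *
      (μ.real (dyadicCell d (n + ℓ) (childIdx d ℓ q k)) / μ.real (dyadicCell d n q)) := by
  have hle : μ.real (dyadicCell d (n + ℓ) (childIdx d ℓ q k)) ≤ μ.real (dyadicCell d n q) := by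
    rw [← mass_sum μ n ℓ q]
    exact Finset.single_le_sum (f := fun k => μ.real (dyadicCell d (n + ℓ) (childIdx d ℓ q k)))
      (fun _ _ => measureReal_nonneg) (Finset.mem_univ k)
  refine ⟨by positivity, div_le_one_of_le₀ hle measureReal_nonneg, ?_⟩
  rcases (measureReal_nonneg (μ := μ) (s := dyadicCell d n q)).eq_or_lt with h | h
  · rw [← h] at hle ⊢
    simp
    exact le_antisymm hle measureReal_nonneg
  · field_simp

noncomputable def Cbd (d ℓ : ℕ) : ℝ := (Fintype.card (Fin d → Fin (2 ^ ℓ))) * (1 / Real.log 2)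

theorem Hq_bounds (ℓ n : ℕ) (q : Fin d → ℤ) : 0 ≤ Hq μ ℓ n q ∧ Hq μ ℓ n q ≤ Cbd d ℓ := by
  constructor
  · apply Finset.sum_nonneg
    intro k _
    obtain ⟨h0, h1, _⟩ := ratio_bounds μ ℓ n q k
    exact (plogp_bounds h0 h1).1
  · have : Cbd d ℓ = ∑ k : Fin d → Fin (2 ^ ℓ), (1 / Real.log 2) := by simp [Cbd]
    rw [this]
    apply Finset.sum_le_sum
    intro k _
    obtain ⟨h0, h1, _⟩ := ratio_bounds μ ℓ n q k
    exact (plogp_bounds h0 h1).2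

theorem par_idx (n ℓ : ℕ) (x : EE d) : parIdx d ℓ (dyadicIdx d (n + ℓ) x) = dyadicIdx d n x :=
  (dyadicIdx_parent d n ℓ x).symm

theorem orth (hsupp : μ (unitCube d) = 1) (ℓ n : ℕ) (c : (Fin d → ℤ) → ℝ) :
    ∫ x, c (dyadicIdx d n x) * Gq μ ℓ n (dyadicIdx d (n + ℓ) x) ∂μ = 0 := by
  have := idx_integral μ hsupp (n + ℓ) (fun r => c (parIdx d ℓ r) * Gq μ ℓ n r)
  simp only [par_idx] at this
  rw [this, sum_Jset]
  apply Finset.sum_eq_zero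
  intro q _
  simp only [par_child, Gq]
  have e : ∀ k, μ.real (dyadicCell d (n + ℓ) (childIdx d ℓ q k)) * (c q *
      (-Real.logb 2 (μ.real (dyadicCell d (n + ℓ) (childIdx d ℓ q k)) / μ.real (dyadicCell d n q))
        - Hq μ ℓ n q)) =
      c q * μ.real (dyadicCell d n q) *
       (-((μ.real (dyadicCell d (n + ℓ) (childIdx d ℓ q k)) / μ.real (dyadicCell d n q)) *
      Real.logb 2 (μ.real (dyadicCell d (n + ℓ) (childIdx d ℓ q k)) / μ.real (dyadicCell d n q))))
      - c q * Hq μ ℓ n q * μ.real (dyadicCell d (n + ℓ) (childIdx d ℓ q k)) := by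
    intro k
    have h := (ratio_bounds μ ℓ n q k).2.2
    generalize μ.real (dyadicCell d (n + ℓ) (childIdx d ℓ q k)) / μ.real (dyadicCell d n q) = p at *
    rw [h]; ring
  rw [Finset.sum_congr rfl fun k _ => e k, Finset.sum_sub_distrib, ← Finset.mul_sum, ← Finset.mul_sum,
    mass_sum]
  change c q * μ.real (dyadicCell d n q) * Hq μ ℓ n q - _ = 0
  ring

noncomputable def Mbd (d ℓ : ℕ) : ℝ :=
  (Fintype.card (Fin d → Fin (2 ^ ℓ))) * (2 * (4 * (1 / Real.log 2)^2) + 2 * (Cbd d ℓ)^2)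

theorem sum_mass (hsupp : μ (unitCube d) = 1) (n : ℕ) :
    ∑ q ∈ Jset d n, μ.real (dyadicCell d n q) = 1 := by
  have := idx_integral μ hsupp n (fun _ => 1)
  simp at this
  exact this.symm

theorem second_moment (hsupp : μ (unitCube d) = 1) (ℓ n : ℕ) :
    ∫ x, (Gq μ ℓ n (dyadicIdx d (n + ℓ) x))^2 ∂μ ≤ Mbd d ℓ := by
  rw [idx_integral μ hsupp (n + ℓ) (fun r => (Gq μ ℓ n r)^2), sum_Jset]
  have key : ∀ q ∈ Jset d n, ∑ k, μ.real (dyadicCell d (n + ℓ) (childIdx d ℓ q k)) *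
      (Gq μ ℓ n (childIdx d ℓ q k))^2 ≤ μ.real (dyadicCell d n q) * Mbd d ℓ := by
    intro q _
    have : μ.real (dyadicCell d n q) * Mbd d ℓ = ∑ k : Fin d → Fin (2 ^ ℓ),
      μ.real (dyadicCell d n q) * (2 * (4 * (1 / Real.log 2)^2) + 2 * (Cbd d ℓ)^2) := by
      simp [Mbd]; ring
    rw [this]
    apply Finset.sum_le_sum
    intro k _
    simp only [par_child, Gq]
    obtain ⟨h0, h1, h2⟩ := ratio_bounds μ ℓ n q k
    obtain ⟨H0, H1⟩ := Hq_bounds μ ℓ n q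
    generalize μ.real (dyadicCell d (n + ℓ) (childIdx d ℓ q k)) / μ.real (dyadicCell d n q) = p at *
    rw [h2, mul_assoc]
    have hm := measureReal_nonneg (μ := μ) (s := dyadicCell d n q)
    apply mul_le_mul_of_nonneg_left _ hm
    have s1 := plogp_sq h0 h1
    generalize Hq μ ℓ n q = H at *
    have s2 : H^2 ≤ (Cbd d ℓ)^2 := by gcongr
    have s3 : p * H^2 ≤ (Cbd d ℓ)^2 := by nlinarith [sq_nonneg H]
    generalize Real.logb 2 p = L at *
    have s4 : p * (-L - H)^2 ≤ p * (2 * L^2 + 2 * H^2) := by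
      gcongr; nlinarith [sq_nonneg (L - H)]
    linarith
  refine (Finset.sum_le_sum key).trans ?_
  rw [← Finset.sum_mul, sum_mass μ hsupp, one_mul]

theorem cross_zero (hsupp : μ (unitCube d) = 1) (ℓ i j : ℕ) (hij : i + ℓ ≤ j) :
    ∫ x, Gq μ ℓ i (dyadicIdx d (i + ℓ) x) * Gq μ ℓ j (dyadicIdx d (j + ℓ) x) ∂μ = 0 := by
  obtain ⟨t, rfl⟩ := Nat.exists_eq_add_of_le hij
  have := orth μ hsupp ℓ (i + ℓ + t) (fun q => Gq μ ℓ i (parIdx d t q))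
  simpa only [par_idx] using this

theorem prod_integrable (hsupp : μ (unitCube d) = 1) (ℓ i j : ℕ) :
    Integrable (fun x => Gq μ ℓ i (dyadicIdx d (i + ℓ) x) * Gq μ ℓ j (dyadicIdx d (j + ℓ) x)) μ :=
  MemLp.integrable_mul (idx_memLp μ hsupp _ _) (idx_memLp μ hsupp _ _)

theorem cross_le (hsupp : μ (unitCube d) = 1) (ℓ i j : ℕ) :
    ∫ x, Gq μ ℓ i (dyadicIdx d (i + ℓ) x) * Gq μ ℓ j (dyadicIdx d (j + ℓ) x) ∂μ ≤
      if j ∈ Finset.Ico (i + 1 - ℓ) (i + ℓ) then Mbd d ℓ else 0 := by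
  split_ifs with h
  · have I1 : ∀ i, Integrable (fun x => (Gq μ ℓ i (dyadicIdx d (i + ℓ) x))^2) μ := fun i => by
      simpa only [sq] using prod_integrable μ hsupp ℓ i i
    have : ∫ x, Gq μ ℓ i (dyadicIdx d (i + ℓ) x) * Gq μ ℓ j (dyadicIdx d (j + ℓ) x) ∂μ ≤
      ∫ x, ((1/2) * (Gq μ ℓ i (dyadicIdx d (i + ℓ) x))^2 +
        (1/2) * (Gq μ ℓ j (dyadicIdx d (j + ℓ) x))^2) ∂μ := by
      apply integral_mono (prod_integrable μ hsupp ℓ i j) (((I1 i).const_mul _).add ((I1 j).const_mul _))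
      intro x
      simp only [Pi.add_apply]
      nlinarith [sq_nonneg (Gq μ ℓ i (dyadicIdx d (i + ℓ) x) - Gq μ ℓ j (dyadicIdx d (j + ℓ) x))]
    rw [integral_add ((I1 i).const_mul _) ((I1 j).const_mul _), integral_const_mul, integral_const_mul] at this
    have := second_moment μ hsupp ℓ i
    have := second_moment μ hsupp ℓ j
    linarith
  · rw [Finset.mem_Ico] at h
    by_cases h' : i + ℓ ≤ j
    · rw [cross_zero μ hsupp ℓ i j h']
    · have := cross_zero μ hsupp ℓ j i (by omega)
      simp only [mul_comm] at this ⊢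
      rw [this]

theorem Mbd_nonneg (d ℓ : ℕ) : 0 ≤ Mbd d ℓ := by unfold Mbd; positivity

theorem sum_sq_le (hsupp : μ (unitCube d) = 1) (ℓ n : ℕ) :
    ∫ x, (∑ i ∈ Finset.Icc 1 n, Gq μ ℓ i (dyadicIdx d (i + ℓ) x))^2 ∂μ ≤ n * (2 * ℓ * Mbd d ℓ) := by
  simp only [sq, Finset.sum_mul_sum]
  rw [integral_finsetSum _ fun i _ => integrable_finsetSum _ fun j _ => prod_integrable μ hsupp ℓ i j]
  have : (n:ℝ) * (2 * ℓ * Mbd d ℓ) = ∑ i ∈ Finset.Icc 1 n, (2 * ℓ * Mbd d ℓ) := by simp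
  rw [this]
  apply Finset.sum_le_sum
  intro i _
  rw [integral_finsetSum _ fun j _ => prod_integrable μ hsupp ℓ i j]
  refine (Finset.sum_le_sum fun j _ => cross_le μ hsupp ℓ i j).trans ?_
  rw [Finset.sum_ite, Finset.sum_const, Finset.sum_const_zero, add_zero, nsmul_eq_mul]
  apply mul_le_mul_of_nonneg_right _ (Mbd_nonneg d ℓ)
  have : (Finset.filter (fun j => j ∈ Finset.Ico (i + 1 - ℓ) (i + ℓ)) (Finset.Icc 1 n)).card ≤
      (Finset.Ico (i + 1 - ℓ) (i + ℓ)).card := by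
    apply Finset.card_le_card
    intro j hj
    exact (Finset.mem_filter.1 hj).2
  rw [Nat.card_Ico] at this
  have : (Finset.filter (fun j => j ∈ Finset.Ico (i + 1 - ℓ) (i + ℓ)) (Finset.Icc 1 n)).card ≤ 2 * ℓ := by
    omega
  exact_mod_cast this

theorem slln_sq (hsupp : μ (unitCube d) = 1) (ℓ : ℕ) :
    ∀ᵐ x ∂μ, Tendsto (fun k : ℕ => (∑ i ∈ Finset.Icc 1 (k^2), Gq μ ℓ i (dyadicIdx d (i + ℓ) x)) / ((k:ℝ)^2))
      atTop (nhds 0) := by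
  have hint : ∀ n, Integrable (fun x => (∑ i ∈ Finset.Icc 1 n, Gq μ ℓ i (dyadicIdx d (i + ℓ) x))^2) μ := by
    intro n
    simp only [sq, Finset.sum_mul_sum]
    exact integrable_finsetSum _ fun i _ => integrable_finsetSum _ fun j _ => prod_integrable μ hsupp ℓ i j
  have := ae_tendsto_zero_of_summable μ
    (fun k x => ((∑ i ∈ Finset.Icc 1 (k^2), Gq μ ℓ i (dyadicIdx d (i + ℓ) x)) / ((k:ℝ)^2))^2)
    (fun k => (2 * ℓ * Mbd d ℓ) * (1 / (k:ℝ)^2)) ?_ (fun _ _ => sq_nonneg _) ?_ ?_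
  · filter_upwards [this] with x hx
    have := hx.sqrt
    simp only [Real.sqrt_sq_eq_abs, Real.sqrt_zero] at this
    exact (tendsto_zero_iff_abs_tendsto_zero _).2 this
  · intro k
    simp only [div_pow]
    exact (hint _).div_const _
  · apply Summable.mul_left
    exact Real.summable_one_div_nat_pow.2 (by norm_num)
  · intro k
    simp only [div_pow]
    rw [integral_div]
    rcases Nat.eq_zero_or_pos k with rfl | hk
    · simp
    · have := sum_sq_le μ hsupp ℓ (k^2)
      have hk' : (0:ℝ) < k := by exact_mod_cast hk
      rw [div_le_iff₀ (by positivity)]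
      refine this.trans (le_of_eq ?_)
      push_cast
      field_simp

noncomputable def Sh (d : ℕ) : Finset (Fin d → ℤ) := Fintype.piFinset fun _ => Finset.Icc (-1) 1

noncomputable def Tq (n : ℕ) (q : Fin d → ℤ) : ℝ := ∑ s ∈ Sh d, μ.real (dyadicCell d n (q + s))

theorem ball_le_Tq (n : ℕ) (x : EE d) : μ.real (ball x ((1/2)^n)) ≤ Tq μ n (dyadicIdx d n x) := by
  have hsub : ball x ((1/2)^n) ⊆ ⋃ s ∈ Sh d, dyadicCell d n (dyadicIdx d n x + s) := by
    intro y hy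
    rw [mem_ball, dist_eq_norm] at hy
    simp only [Set.mem_iUnion, mem_dyadicCell_iff]
    refine ⟨dyadicIdx d n y - dyadicIdx d n x, ?_, by simp⟩
    simp only [Sh, Fintype.mem_piFinset, Finset.mem_Icc, Pi.sub_apply]
    intro i
    have h1 := (PiLp.norm_apply_le (y - x) i).trans_lt hy
    simp only [PiLp.sub_apply, Real.norm_eq_abs, abs_lt] at h1
    have h2 : (0:ℝ) < 2 ^ n := by positivity
    have e : (2:ℝ)^n * (1/2)^n = 1 := by rw [← mul_pow]; norm_num
    have u1 := mul_lt_mul_of_pos_left h1.1 h2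
    have u2 := mul_lt_mul_of_pos_left h1.2 h2
    rw [mul_neg] at u1
    rw [e] at u1 u2
    simp only [dyadicIdx]
    have f1 := Int.floor_le ((2:ℝ)^n * y i)
    have f2 := Int.lt_floor_add_one ((2:ℝ)^n * y i)
    have f3 := Int.floor_le ((2:ℝ)^n * x i)
    have f4 := Int.lt_floor_add_one ((2:ℝ)^n * x i)
    constructor
    · have : (⌊(2:ℝ)^n * x i⌋ : ℝ) < ⌊(2:ℝ)^n * y i⌋ + 2 := by linarith
      have : ⌊(2:ℝ)^n * x i⌋ < ⌊(2:ℝ)^n * y i⌋ + 2 := by exact_mod_cast this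
      omega
    · have : (⌊(2:ℝ)^n * y i⌋ : ℝ) < ⌊(2:ℝ)^n * x i⌋ + 2 := by linarith
      have : ⌊(2:ℝ)^n * y i⌋ < ⌊(2:ℝ)^n * x i⌋ + 2 := by exact_mod_cast this
      omega
  refine (measureReal_mono hsub (measure_ne_top _ _)).trans ?_
  exact measureReal_biUnion_finset_le _ _

theorem sum_Tq_le (n : ℕ) : ∑ q ∈ Jset d n, Tq μ n q ≤ (Sh d).card := by
  unfold Tq
  rw [Finset.sum_comm]
  have : ((Sh d).card : ℝ) = ∑ s ∈ Sh d, (1:ℝ) := by simp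
  rw [this]
  apply Finset.sum_le_sum
  intro s _
  have := sum_measureReal_le_measureReal_univ (μ := μ) (s := Jset d n) (t := fun q => dyadicCell d n (q + s))
    (fun q _ => dyadicCell_measurable _ _ _) (by
      intro q _ q' _ hq
      exact dyadicCell_disjoint d n Set.univ (Set.mem_univ _) (Set.mem_univ _) (fun h => hq (by simpa using h)))
  simpa using this

theorem ball_bound (hsupp : μ (unitCube d) = 1) :
    ∀ᵐ x ∂μ, ∀ᶠ n : ℕ in atTop, μ.real (ball x ((1/2)^n)) ≤ (n:ℝ)^2 * μ.real (Qcube d n x) := by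
  have hT0 : ∀ n q, 0 ≤ Tq μ n q := fun n q => Finset.sum_nonneg fun _ _ => measureReal_nonneg
  have := ae_tendsto_zero_of_summable μ
    (fun n x => (fun q => Tq μ n q / μ.real (dyadicCell d n q) / (n:ℝ)^2) (dyadicIdx d n x))
    (fun n => (Sh d).card * (1 / (n:ℝ)^2)) (fun n => idx_integrable μ hsupp n (fun q => Tq μ n q / μ.real (dyadicCell d n q) / (n:ℝ)^2)) ?_ ?_ ?_
  · filter_upwards [this, ae_all_iff.2 (ae_pos μ)] with x hx hpos
    filter_upwards [hx.eventually (gt_mem_nhds one_pos), eventually_gt_atTop 0] with n hn hn0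
    refine (ball_le_Tq μ n x).trans ?_
    have hp := hpos n
    unfold Qcube at hp ⊢
    have : (0:ℝ) < n := by exact_mod_cast hn0
    rw [div_lt_one (by positivity), div_lt_iff₀ hp] at hn
    exact hn.le
  · intro n x
    have := hT0 n (dyadicIdx d n x)
    positivity
  · apply Summable.mul_left
    exact Real.summable_one_div_nat_pow.2 (by norm_num)
  · intro n
    rw [idx_integral μ hsupp n (fun q => Tq μ n q / μ.real (dyadicCell d n q) / (n:ℝ)^2)]
    calc _ ≤ ∑ q ∈ Jset d n, Tq μ n q * (1 / (n:ℝ)^2) := by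
          apply Finset.sum_le_sum
          intro q _
          rw [← mul_div_assoc, div_eq_mul_one_div]
          gcongr
          rcases (measureReal_nonneg (μ := μ) (s := dyadicCell d n q)).eq_or_lt with h | h
          · rw [← h]; simpa using hT0 n q
          · rw [mul_div_cancel₀ _ h.ne']
      _ ≤ _ := by
          rw [← Finset.sum_mul]
          gcongr
          exact sum_Tq_le μ n

theorem cube_sub_ball (hd : 0 < d) (n : ℕ) (x : EE d) :
    Qcube d (n + 1 + d) x ⊆ ball x ((1/2)^(n+1)) := by
  intro y hy
  have hx : x ∈ Qcube d (n + 1 + d) x := mem_dyadicCell_iff.2 rfl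
  rw [mem_ball, EuclideanSpace.dist_eq]
  have hc : ∀ i, dist (y i) (x i) ^ 2 ≤ ((1/2:ℝ)^(n+1+d))^2 := by
    intro i
    have h1 := hy i
    have h2 := hx i
    gcongr
    rw [add_div] at h1 h2
    have : (1:ℝ) / 2 ^ (n+1+d) = (1/2)^(n+1+d) := by rw [one_div_pow]
    rw [this] at h1 h2
    rw [Real.dist_eq, abs_le]
    constructor <;> linarith
  have hs : ∑ i, dist (y i) (x i) ^ 2 ≤ d * ((1/2:ℝ)^(n+1+d))^2 := by
    refine (Finset.sum_le_sum fun i _ => hc i).trans ?_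
    simp
  rw [Real.sqrt_lt' (by positivity)]
  refine hs.trans_lt ?_
  rw [pow_add, mul_pow, mul_left_comm]
  have : (d:ℝ) * ((1/2)^d)^2 < 1 := by
    have h1 : (d:ℝ) < 2^d := by exact_mod_cast Nat.lt_two_pow_self
    have h2 : (0:ℝ) < (1/2)^d := by positivity
    have h3 : (2:ℝ)^d * (1/2)^d = 1 := by rw [← mul_pow]; norm_num
    have h4 : ((1:ℝ)/2)^d ≤ 1 := pow_le_one₀ (by norm_num) (by norm_num)
    have h5 : (d:ℝ) * (1/2)^d < 1 := by nlinarith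
    have h6 : (0:ℝ) ≤ (d:ℝ) * (1/2)^d := by positivity
    nlinarith
  have hp : (0:ℝ) < ((1/2)^(n+1))^2 := by positivity
  nlinarith

end
/-- For a Borel probability measure `μ` on `[0,1)^d` giving zero mass to
the boundaries of all dyadic cubes and `ℓ ∈ ℕ`, for `μ`-a.e. `x` the upper (resp. lower)
local dimension of `μ` at `x` equals the `limsup` (resp. `liminf`) of the local entropy
averages `(1/(ℓn))·Σ_{i=1}^n H(μ_ℓ^{Q_i(x)})`. -/
theorem stmt4 (d ℓ : ℕ) (hd : 0 < d) (hℓ : 0 < ℓ)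
    (μ : Measure (EuclideanSpace ℝ (Fin d))) [IsProbabilityMeasure μ]
    (hsupp : μ (unitCube d) = 1)
    (hbd : ∀ Q, IsDyadicCube d Q → μ (frontier Q) = 0) :
    ∀ᵐ x ∂μ,
      (upperLocalDim μ x = Filter.limsup (fun n : ℕ =>
          (((1 / ((ℓ : ℝ) * n)) * ∑ i ∈ Finset.Icc 1 n, condEntropy' d ℓ i μ x : ℝ) : EReal))
        atTop) ∧
      (lowerLocalDim μ x = Filter.liminf (fun n : ℕ =>
          (((1 / ((ℓ : ℝ) * n)) * ∑ i ∈ Finset.Icc 1 n, condEntropy' d ℓ i μ x : ℝ) : EReal))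
        atTop) := by

  have hNt : Tendsto (fun r : ℝ => ⌊- Real.logb 2 r⌋₊) (nhdsWithin 0 (Set.Ioi 0)) atTop := by
    refine tendsto_nat_floor_atTop.comp ?_
    refine tendsto_neg_atBot_atTop.comp ?_
    exact Real.tendsto_logb_nhdsGT_zero (by norm_num)
  have hRt : Tendsto (fun n : ℕ => (1/2:ℝ)^n) atTop (nhdsWithin 0 (Set.Ioi 0)) := by
    rw [tendsto_nhdsWithin_iff]
    refine ⟨tendsto_pow_atTop_nhds_zero_of_lt_one (by norm_num) (by norm_num),
      Eventually.of_forall fun n => ?_⟩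
    simp
  have hNR : ∀ n : ℕ, ⌊- Real.logb 2 ((1/2:ℝ)^n)⌋₊ = n := by
    intro n
    rw [Real.logb_pow, one_div, Real.logb_inv, Real.logb_self_eq_one (by norm_num)]
    simp
  filter_upwards [slln_sq μ hsupp ℓ, ball_bound μ hsupp, ae_all_iff.2 (ae_pos μ)] with x hS hball hpos
  set a : ℕ → ℝ := fun n => - Real.logb 2 (μ.real (Qcube d n x)) with ha
  set h : ℕ → ℝ := fun n => condEntropy' d ℓ n μ x with hh
  have hH : ∀ n, h n = Hq μ ℓ n (dyadicIdx d n x) := fun n => rfl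
  have hsub : ∀ n, Qcube d (n + 1) x ⊆ Qcube d n x := by
    intro n y hy
    unfold Qcube at *
    rw [mem_dyadicCell_iff] at *
    rw [← par_idx n 1 y, hy, par_idx]
  have hamono : Monotone a := by
    apply monotone_nat_of_le_succ
    intro n
    apply neg_le_neg
    exact Real.logb_le_logb_of_le (by norm_num) (hpos _) (measureReal_mono (hsub n) (measure_ne_top _ _))
  have ha0 : ∀ n, 0 ≤ a n := by
    intro n
    have := Real.logb_nonpos (b := 2) (by norm_num) (hpos n).le measureReal_le_one
    simp only [ha]; linarith
  have h0 : ∀ n, 0 ≤ h n := fun n => (Hq_bounds μ ℓ n _).1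
  have hC : ∀ n, h n ≤ Cbd d ℓ := fun n => (Hq_bounds μ ℓ n _).2
  have hG : ∀ i, Gq μ ℓ i (dyadicIdx d (i + ℓ) x) = (a (i + ℓ) - a i) - h i := by
    intro i
    rw [Gq, par_idx, hH]
    congr 1
    simp only [ha]
    change - Real.logb 2 (μ.real (Qcube d (i + ℓ) x) / μ.real (Qcube d i x)) = _
    rw [Real.logb_div (hpos _).ne' (hpos _).ne']
    ring
  simp only [hG] at hS
  have hSL := slln_fill (fun i => a (i + ℓ) - a i) h (Cbd d ℓ)
    (fun n => sub_nonneg.2 (hamono (by omega))) h0 hC hS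
  have havg := det_avg a h (Cbd d ℓ) ℓ hℓ hamono h0 hC hSL
  have hL1 := lims_eq _ _ havg
  have hballpos : ∀ r, 0 < r → 0 < μ.real (ball x r) := by
    intro r hr
    obtain ⟨n, hn⟩ := exists_pow_lt_of_lt_one hr (show (1/2:ℝ) < 1 by norm_num)
    refine (hpos (n + 1 + d)).trans_le (measureReal_mono ?_ (measure_ne_top _ _))
    refine (cube_sub_ball hd n x).trans (ball_subset_ball ?_)
    refine le_trans ?_ hn.le
    exact pow_le_pow_of_le_one (by norm_num) (by norm_num) (by omega)
  have hdim := locdim_det (fun r => μ.real (ball x r)) a (Cbd d ℓ + 1) (1 + d)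
    (fun r s hrs => measureReal_mono (ball_subset_ball hrs) (measure_ne_top _ _))
    hballpos (fun r => measureReal_le_one)
    (det_incr a h (Cbd d ℓ) ℓ hℓ hamono h0 hC hSL (1 + d))
    (det_bdd a h (Cbd d ℓ) ℓ hℓ hamono h0 hC hSL)
    (by
      intro n
      rw [← add_assoc]
      apply neg_le_neg
      exact Real.logb_le_logb_of_le (by norm_num) (hpos _)
        (measureReal_mono (cube_sub_ball hd n x) (measure_ne_top _ _)))
    (by
      filter_upwards [hball, eventually_gt_atTop 0] with n hn hn0
      have hn' : (0:ℝ) < n := by exact_mod_cast hn0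
      have := Real.logb_le_logb_of_le (b := 2) (by norm_num) (hballpos _ (by positivity)) hn
      rw [Real.logb_mul (by positivity) (hpos _).ne', Real.logb_pow] at this
      push_cast at this
      simp only [ha]
      linarith)
  have hL2 := lims_transfer (fun r => Real.log (μ.real (ball x r)) / Real.log r) (fun n : ℕ => a n / (n:ℝ))
    (fun r : ℝ => ⌊- Real.logb 2 r⌋₊) (fun n : ℕ => (1/2:ℝ)^n) hNt hRt hNR hdim
  exact ⟨hL2.1.trans hL1.1.symm, hL2.2.trans hL1.2.symm⟩
end

section
/- For every d ∈ ℕ there is a constant C_d > 0 such that: if α ∈ (0,1/2], ρ ∈ (0,1], and μ is a mean (α,ρ)-porous Borel probability measure on ℝ^d, then the upper packing dimension of μ satisfies udim_P(μ) ≤ d − C_d·ρ·α^d. -/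
open MeasureTheory Filter Metric Set
open scoped Classical

/-- `por(μ,x,r,ε)`: the supremum of `α ≥ 0` such that some ball `B(y,αr) ⊆ B(x,r)` has
`μ(B(y,αr)) ≤ ε·μ(B(x,r))` (an "ε-hole" of relative size `α`). -/
noncomputable def porMeas {X : Type*} [MetricSpace X] [MeasurableSpace X]
    (μ : Measure X) (x : X) (r ε : ℝ) : ℝ :=
  sSup {α : ℝ | 0 ≤ α ∧ ∃ y, Metric.ball y (α * r) ⊆ Metric.ball x r ∧
    μ (Metric.ball y (α * r)) ≤ ENNReal.ofReal ε * μ (Metric.ball x r)}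

/-- `μ` is mean `(α,ρ)`-porous: for every `ε > 0`, at `μ`-a.e. point the lower asymptotic
proportion of scales `i` with `por(μ,x,2^{-i},ε) > α` is at least `ρ`. -/
def IsMeanPorous {X : Type*} [MetricSpace X] [MeasurableSpace X]
    (μ : Measure X) (α ρ : ℝ) : Prop :=
  ∀ ε : ℝ, 0 < ε → ∀ᵐ x ∂μ,
    ρ ≤ Filter.liminf (fun n : ℕ =>
      (((Finset.range n).filter fun i => α < porMeas μ x ((2 : ℝ) ^ (-(i : ℤ))) ε).card : ℝ) / n)
      atTop

/-- The upper packing dimension of a measure: the `μ`-essential supremum of the upper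
local dimensions. -/
noncomputable def upperPackingDim {X : Type*} [MetricSpace X] [MeasurableSpace X]
    (μ : Measure X) : EReal :=
  essSup (upperLocalDim μ) μ


namespace MeanPor

section tree
variable {I : Type*} (p : I → I) (H : ℕ → I → Prop)

/-- indicator of a pending hole `k` levels below `b` -/
noncomputable def u (k n : ℕ) (b : I) : ℝ := if ∃ r, H (n + k) r ∧ p^[k] r = b then 1 else 0

lemma u_nonneg (k n : ℕ) (b : I) : 0 ≤ u p H k n b := by unfold u; split_ifs <;> norm_num
lemma u_le (k n : ℕ) (b : I) : u p H k n b ≤ 1 := by unfold u; split_ifs <;> norm_num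
lemma u_cases (k n : ℕ) (b : I) : u p H k n b = 0 ∨ u p H k n b = 1 := by
  unfold u; split_ifs <;> simp

/-- weighted number of pending holes -/
noncomputable def h (N : ℝ) (m n : ℕ) (b : I) : ℝ :=
  ∑ k ∈ Finset.range m, (N⁻¹) ^ (k + 1) * u p H (k + 1) n b

/-- the weight -/
noncomputable def A (N : ℝ) (m : ℕ) : ℕ → I → ℝ
  | 0, _ => 1
  | n + 1, b => A N m n (p b) *
      ((1 + (N⁻¹) ^ m / 4 * u p H m (n + 1) b) * (1 - u p H 0 (n + 1) b / 2))

noncomputable def V (N : ℝ) (m n : ℕ) (b : I) : ℝ := A p H N m n b * (1 - h p H N m n b / 4)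

lemma geom_bound {q : ℝ} (h0 : 0 ≤ q) (h1 : q ≤ 1 / 2) (m : ℕ) :
    ∑ k ∈ Finset.range m, q ^ (k + 1) ≤ 1 - q ^ m := by
  induction m with
  | zero => simp
  | succ m ih =>
    rw [Finset.sum_range_succ]
    have : 0 ≤ q ^ m := pow_nonneg h0 m
    have : q ^ (m + 1) ≤ q ^ m * (1 / 2) := by
      rw [pow_succ]; exact mul_le_mul_of_nonneg_left h1 this
    linarith

lemma h_nonneg {N : ℝ} (hN : 2 ≤ N) (m n : ℕ) (b : I) : 0 ≤ h p H N m n b :=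
  Finset.sum_nonneg fun k _ => mul_nonneg (by positivity) (u_nonneg _ _ _ _ _)

lemma h_le {N : ℝ} (hN : 2 ≤ N) (m n : ℕ) (b : I) : h p H N m n b ≤ 1 := by
  have hq : N⁻¹ ≤ 1 / 2 := by rw [one_div]; exact inv_anti₀ (by norm_num) hN
  have h0 : 0 ≤ N⁻¹ := by positivity
  calc h p H N m n b ≤ ∑ k ∈ Finset.range m, (N⁻¹) ^ (k + 1) :=
        Finset.sum_le_sum fun k _ => by
          have := u_le p H (k + 1) n b
          have h2 : 0 ≤ (N⁻¹) ^ (k + 1) := by positivity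
          nlinarith
    _ ≤ 1 - (N⁻¹) ^ m := geom_bound h0 hq m
    _ ≤ 1 := by have : 0 ≤ (N⁻¹) ^ m := by positivity
                linarith

lemma A_pos {N : ℝ} (hN : 2 ≤ N) (m n : ℕ) (b : I) : 0 < A p H N m n b := by
  induction n generalizing b with
  | zero => simp [A]
  | succ n ih =>
    rw [A]
    have h1 := u_nonneg p H m (n + 1) b
    have h2 := u_le p H 0 (n + 1) b
    have h3 : 0 < 1 - u p H 0 (n + 1) b / 2 := by linarith
    have := ih (p b)
    positivity

lemma V_lower {N : ℝ} (hN : 2 ≤ N) (m n : ℕ) (b : I) : A p H N m n b * (3 / 4) ≤ V p H N m n b := by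
  unfold V
  have := h_le p H hN m n b
  exact mul_le_mul_of_nonneg_left (by linarith) (A_pos p H hN m n b).le

lemma V_pos {N : ℝ} (hN : 2 ≤ N) (m n : ℕ) (b : I) : 0 < V p H N m n b :=
  lt_of_lt_of_le (mul_pos (A_pos p H hN m n b) (by norm_num)) (V_lower p H hN m n b)

/-- the one-step pointwise inequality -/
lemma step_pt {N : ℝ} (hN : 2 ≤ N) (m n : ℕ) (b : I) :
    (1 + (N⁻¹) ^ (m+1) / 4 * u p H (m+1) n b) * (1 - u p H 0 n b / 2) *
      (1 - h p H N (m+1) n b / 4) ≤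
    1 - (∑ k ∈ Finset.range (m+1), (N⁻¹) ^ k * u p H k n b) / 4 := by
  have e1 : h p H N (m+1) n b = h p H N m n b + (N⁻¹) ^ (m+1) * u p H (m+1) n b := by
    simp [h, Finset.sum_range_succ]
  have e2 : (∑ k ∈ Finset.range (m+1), (N⁻¹) ^ k * u p H k n b) = h p H N m n b + u p H 0 n b := by
    rw [Finset.sum_range_succ']; simp [h]
  rw [e1, e2]
  have b0 := h_nonneg p H hN m n b
  have b1 := h_le p H hN m n b
  generalize h p H N m n b = x at *
  have k0 : 0 ≤ (N⁻¹) ^ (m+1) := by positivity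
  generalize (N⁻¹) ^ (m+1) = κ at *
  rcases u_cases p H (m+1) n b with hu | hu <;> rcases u_cases p H 0 n b with hv | hv <;>
    rw [hu, hv] <;> nlinarith [mul_nonneg k0 b0]

variable (ch : I → Finset I)

lemma sum_u (hch : ∀ a b, b ∈ ch a ↔ p b = a) (k n : ℕ) (b : I) :
    u p H (k + 1) n b ≤ ∑ b' ∈ ch b, u p H k (n + 1) b' := by
  rcases u_cases p H (k+1) n b with hu | hu
  · rw [hu]; exact Finset.sum_nonneg fun _ _ => u_nonneg _ _ _ _ _
  · have : ∃ r, H (n + (k + 1)) r ∧ p^[k + 1] r = b := by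
      by_contra hc
      rw [u, if_neg hc] at hu
      norm_num at hu
    obtain ⟨r, hr, hb⟩ := this
    rw [Function.iterate_succ_apply'] at hb
    have hm : p^[k] r ∈ ch b := (hch _ _).2 hb
    have : u p H k (n + 1) (p^[k] r) = 1 := by
      unfold u
      rw [if_pos ⟨r, by convert hr using 1; omega, rfl⟩]
    rw [hu, ← this]
    exact Finset.single_le_sum (f := fun b' => u p H k (n+1) b')
      (fun _ _ => u_nonneg _ _ _ _ _) hm

lemma step (hch : ∀ a b, b ∈ ch a ↔ p b = a) {M : ℕ} (hM : 2 ≤ M) (hcard : ∀ a, (ch a).card = M)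
    (m n : ℕ) (b : I) :
    ∑ b' ∈ ch b, V p H M (m+1) (n+1) b' ≤ M * V p H M (m+1) n b := by
  have hN : (2:ℝ) ≤ M := by exact_mod_cast hM
  have hA := (A_pos p H hN (m+1) n b).le
  have hM0 : (0:ℝ) < M := by linarith
  calc ∑ b' ∈ ch b, V p H M (m+1) (n+1) b'
      ≤ ∑ b' ∈ ch b, A p H M (m+1) n b *
        (1 - (∑ k ∈ Finset.range (m+1), ((M:ℝ)⁻¹) ^ k * u p H k (n+1) b') / 4) := by
        refine Finset.sum_le_sum fun b' hb' => ?_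
        rw [V, A, (hch _ _).1 hb', mul_assoc]
        exact mul_le_mul_of_nonneg_left (step_pt p H hN m (n+1) b') hA
    _ = A p H M (m+1) n b * (M - (∑ k ∈ Finset.range (m+1), ((M:ℝ)⁻¹) ^ k *
          ∑ b' ∈ ch b, u p H k (n+1) b') / 4) := by
        rw [← Finset.mul_sum, Finset.sum_sub_distrib, ← Finset.sum_div, Finset.sum_comm]
        simp [hcard, Finset.mul_sum]
    _ ≤ A p H M (m+1) n b * (M - (∑ k ∈ Finset.range (m+1), ((M:ℝ)⁻¹) ^ k *
          u p H (k+1) n b) / 4) := by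
        refine mul_le_mul_of_nonneg_left ?_ hA
        have : (∑ k ∈ Finset.range (m+1), ((M:ℝ)⁻¹) ^ k * u p H (k+1) n b) ≤
          (∑ k ∈ Finset.range (m+1), ((M:ℝ)⁻¹) ^ k * ∑ b' ∈ ch b, u p H k (n+1) b') :=
          Finset.sum_le_sum fun k _ =>
            mul_le_mul_of_nonneg_left (sum_u p H ch hch k n b) (by positivity)
        linarith
    _ = M * V p H M (m+1) n b := by
        rw [V, h]
        have : ∑ k ∈ Finset.range (m+1), ((M:ℝ)⁻¹) ^ (k+1) * u p H (k+1) n b =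
          (M:ℝ)⁻¹ * ∑ k ∈ Finset.range (m+1), ((M:ℝ)⁻¹) ^ k * u p H (k+1) n b := by
          rw [Finset.mul_sum]
          exact Finset.sum_congr rfl fun k _ => by rw [pow_succ]; ring
        rw [this]
        field_simp

/-- level-`n` descendants -/
noncomputable def desc : ℕ → I → Finset I
  | 0, a => {a}
  | n + 1, a => (desc n a).biUnion ch

lemma mem_desc (hch : ∀ a b, b ∈ ch a ↔ p b = a) (n : ℕ) (a b : I) :
    b ∈ desc ch n a ↔ p^[n] b = a := by
  induction n generalizing b with
  | zero => simp [desc]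
  | succ n ih => simp [desc, hch, ih]

lemma total (hch : ∀ a b, b ∈ ch a ↔ p b = a) {M : ℕ} (hM : 2 ≤ M) (hcard : ∀ a, (ch a).card = M)
    (m n : ℕ) (a : I) :
    ∑ b ∈ desc ch n a, V p H M (m+1) n b ≤ (M:ℝ) ^ n := by
  have hN : (2:ℝ) ≤ M := by exact_mod_cast hM
  induction n with
  | zero =>
    have := h_nonneg p H hN (m+1) 0 a
    simp [desc, V, A]; linarith
  | succ n ih =>
    rw [desc, Finset.sum_biUnion]
    · calc _ ≤ ∑ b ∈ desc ch n a, M * V p H M (m+1) n b :=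
            Finset.sum_le_sum fun b _ => step p H ch hch hM hcard m n b
        _ ≤ _ := by rw [← Finset.mul_sum, pow_succ, mul_comm]
                    exact mul_le_mul_of_nonneg_right ih (by positivity)
    · intro x _ y _ hxy
      rw [Function.onFun, Finset.disjoint_left]
      intro z hz hz'
      exact hxy (((hch _ _).1 hz).symm.trans ((hch _ _).1 hz'))

/-- lower bound of `log A` along a path -/
lemma logA {N : ℝ} (hN : 2 ≤ N) (m : ℕ) (c : ℕ → I) (hc : ∀ n, p (c (n+1)) = c n) (n : ℕ) :
    (∑ i ∈ Finset.range n, u p H m (i+1) (c (i+1))) * ((N⁻¹)^m / 8) -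
      (∑ i ∈ Finset.range n, u p H 0 (i+1) (c (i+1))) * Real.log 2
      ≤ Real.log (A p H N m n (c n)) := by
  induction n with
  | zero => simp [A]
  | succ n ih =>
    rw [A, hc]
    have hA := A_pos p H hN m n (c n)
    have k0 : 0 ≤ (N⁻¹)^m := by positivity
    have k1 : (N⁻¹)^m ≤ 1 := pow_le_one₀ (by positivity) (inv_le_one_of_one_le₀ (by linarith))
    rw [Finset.sum_range_succ, Finset.sum_range_succ]
    have a1 : u p H m (n+1) (c (n+1)) * ((N⁻¹)^m / 8) ≤
        Real.log (1 + (N⁻¹) ^ m / 4 * u p H m (n + 1) (c (n+1))) := by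
      rcases u_cases p H m (n+1) (c (n+1)) with hu | hu <;> rw [hu]
      · simp
      · have := Real.le_log_one_add_of_nonneg (x := (N⁻¹) ^ m / 4 * 1) (by positivity)
        refine le_trans ?_ this
        rw [le_div_iff₀ (by positivity)]
        nlinarith
    have a2 : -(u p H 0 (n+1) (c (n+1)) * Real.log 2) ≤
        Real.log (1 - u p H 0 (n + 1) (c (n+1)) / 2) := by
      rcases u_cases p H 0 (n+1) (c (n+1)) with hu | hu <;> rw [hu]
      · simp
      · rw [show (1:ℝ) - 1/2 = 2⁻¹ by norm_num, Real.log_inv]; simp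
    have p1 : 0 < 1 + (N⁻¹) ^ m / 4 * u p H m (n + 1) (c (n+1)) := by
      have := u_nonneg p H m (n+1) (c (n+1)); positivity
    have p2 : 0 < 1 - u p H 0 (n + 1) (c (n+1)) / 2 := by
      have := u_le p H 0 (n+1) (c (n+1)); linarith
    rw [Real.log_mul hA.ne' (by positivity), Real.log_mul p1.ne' p2.ne']
    linarith
end tree

/-- Few large drops. -/
lemma drops (f : ℕ → ℝ) (hpos : ∀ n, 0 < f n) (hle : ∀ n, f n ≤ 1) (hanti : Antitone f)
    {ε : ℝ} (he : 0 < ε) (m n : ℕ) :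
    (∑ j ∈ Finset.range n, if f (j + m) ≤ ε * f j then (1:ℝ) else 0) * Real.log ε⁻¹ ≤
      ∑ k ∈ Finset.range m, -Real.log (f (n + k)) := by
  have key : ∀ n, (∑ j ∈ Finset.range n, if f (j + m) ≤ ε * f j then (1:ℝ) else 0) * Real.log ε⁻¹ ≤
      ∑ k ∈ Finset.range m, -Real.log (f (n + k)) := by
    intro n
    induction n with
    | zero =>
      simp only [Finset.range_zero, Finset.sum_empty, zero_mul]
      exact Finset.sum_nonneg fun k _ => by
        have := Real.log_nonpos (hpos (0+k)).le (hle (0+k)); linarith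
    | succ n ih =>
      rw [Finset.sum_range_succ, add_mul]
      have e : ∑ k ∈ Finset.range m, -Real.log (f (n + 1 + k)) =
          ∑ k ∈ Finset.range m, -Real.log (f (n + k)) + (Real.log (f n) - Real.log (f (n+m))) := by
        have h1 := Finset.sum_range_succ (fun k => -Real.log (f (n + k))) m
        have h2 := Finset.sum_range_succ' (fun k => -Real.log (f (n + k))) m
        simp only [add_zero] at h2
        have h3 : ∑ k ∈ Finset.range m, -Real.log (f (n + (k + 1))) =
          ∑ k ∈ Finset.range m, -Real.log (f (n + 1 + k)) :=
          Finset.sum_congr rfl fun k _ => by rw [show n + (k+1) = n+1+k by omega]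
        linarith
      rw [e]
      have : (if f (n + m) ≤ ε * f n then (1:ℝ) else 0) * Real.log ε⁻¹ ≤
          Real.log (f n) - Real.log (f (n+m)) := by
        split_ifs with hh
        · have := Real.log_le_log (hpos _) hh
          rw [Real.log_mul he.ne' (hpos n).ne'] at this
          rw [Real.log_inv]; linarith
        · have := Real.log_le_log (hpos _) (hanti (show n ≤ n+m by omega))
          linarith
      linarith
  exact key n


section geom
variable {d : ℕ}

/-- parent index -/
def par (k : Fin d → ℤ) : Fin d → ℤ := fun i => k i / 2

/-- children -/
noncomputable def chl (a : Fin d → ℤ) : Finset (Fin d → ℤ) :=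
  Fintype.piFinset fun i => {2 * a i, 2 * a i + 1}

lemma mem_chl (a b : Fin d → ℤ) : b ∈ chl a ↔ par b = a := by
  simp only [chl, Fintype.mem_piFinset, Finset.mem_insert, Finset.mem_singleton, par, funext_iff]
  exact forall_congr' fun i => by omega

lemma card_chl (a : Fin d → ℤ) : (chl a).card = 2 ^ d := by
  simp only [chl, Fintype.card_piFinset]
  have : ∀ i, ({2 * a i, 2 * a i + 1} : Finset ℤ).card = 2 := fun i => by
    rw [Finset.card_pair]; omega
  simp [this]

/-- the grid shift -/
noncomputable def sh (t : Fin d → Bool) (i : Fin d) : ℝ := if t i then 1 / 3 else 0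

/-- index of the level `n` cube containing `x` -/
noncomputable def cidx (t : Fin d → Bool) (n : ℕ) (x : EuclideanSpace ℝ (Fin d)) : Fin d → ℤ :=
  fun i => ⌊(2:ℝ) ^ n * (x i - sh t i)⌋

lemma par_cidx (t : Fin d → Bool) (n : ℕ) (x : EuclideanSpace ℝ (Fin d)) :
    par (cidx t (n+1) x) = cidx t n x := by
  funext i
  simp only [par, cidx]
  symm
  rw [Int.floor_eq_iff]
  set y := (2:ℝ) ^ n * (x i - sh t i) with hy
  have e : (2:ℝ) ^ (n+1) * (x i - sh t i) = 2 * y := by rw [hy]; ring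
  rw [e]
  have h1 := Int.floor_le (2 * y)
  have h2 := Int.lt_floor_add_one (2 * y)
  set q := ⌊2 * y⌋
  have h3 : 2 * (q / 2) ≤ q := by omega
  have h4 : q + 1 ≤ 2 * (q / 2) + 2 := by omega
  have h3' : (2:ℝ) * ((q / 2 : ℤ):ℝ) ≤ q := by exact_mod_cast h3
  have h4' : (q:ℝ) + 1 ≤ (2:ℝ) * ((q / 2 : ℤ):ℝ) + 2 := by exact_mod_cast h4
  constructor <;> linarith

lemma par_iter (t : Fin d → Bool) (n k : ℕ) (x : EuclideanSpace ℝ (Fin d)) :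
    par^[k] (cidx t (n+k) x) = cidx t n x := by
  induction k with
  | zero => rfl
  | succ k ih =>
    rw [Function.iterate_succ_apply, ← add_assoc, par_cidx, ih]

/-- dyadic cube -/
def cube (t : Fin d → Bool) (n : ℕ) (b : Fin d → ℤ) : Set (EuclideanSpace ℝ (Fin d)) :=
  {x | cidx t n x = b}

lemma cube_anti (t : Fin d → Bool) (x : EuclideanSpace ℝ (Fin d)) :
    Antitone fun n => cube t n (cidx t n x) := by
  refine antitone_nat_of_succ_le fun n => ?_
  intro y hy
  simp only [cube, mem_ofPred_eq] at hy ⊢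
  rw [← par_cidx, hy, par_cidx]

lemma dist_lt_of_coord (hd : 0 < d) (x y : EuclideanSpace ℝ (Fin d)) {r : ℝ} (hr : 0 < r)
    (hxy : ∀ i, |x i - y i| ≤ r) : dist x y < 2 * d * r := by
  have hd' : (1:ℝ) ≤ d := by exact_mod_cast hd
  rw [EuclideanSpace.dist_eq]
  rw [Real.sqrt_lt' (by positivity)]
  calc ∑ i, dist (x i) (y i) ^ 2 ≤ ∑ i : Fin d, r ^ 2 := by
        refine Finset.sum_le_sum fun i _ => ?_
        rw [Real.dist_eq]
        exact pow_le_pow_left₀ (abs_nonneg _) (hxy i) 2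
    _ = d * r ^ 2 := by simp
    _ < _ := by
      have : 0 < r ^ 2 := by positivity
      nlinarith [mul_pos this (show (0:ℝ) < d by linarith)]

lemma cube_subset_ball (hd : 0 < d) (t : Fin d → Bool) (n : ℕ) (x : EuclideanSpace ℝ (Fin d)) :
    cube t n (cidx t n x) ⊆ ball x (2 * d * ((2:ℝ)^n)⁻¹) := by
  intro y hy
  rw [mem_ball]
  refine dist_lt_of_coord hd y x (by positivity) fun i => ?_
  have h1 : ⌊(2:ℝ) ^ n * (y i - sh t i)⌋ = ⌊(2:ℝ) ^ n * (x i - sh t i)⌋ := congrFun hy i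
  have h2 := Int.abs_sub_lt_one_of_floor_eq_floor h1
  have h3 : (2:ℝ) ^ n * (y i - sh t i) - (2:ℝ) ^ n * (x i - sh t i) = 2 ^ n * (y i - x i) := by ring
  rw [h3, abs_mul, abs_of_pos (by positivity)] at h2
  rw [← one_div, le_div_iff₀ (by positivity)]
  linarith

lemma floor_third (n : ℕ) (y : ℝ) : ∃ b : Bool, ∀ z : ℝ, |z - y| < ((2:ℝ)^(n+3))⁻¹ →
    ⌊(2:ℝ) ^ n * (z - if b then 1/3 else 0)⌋ = ⌊(2:ℝ) ^ n * (y - if b then 1/3 else 0)⌋ := by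
  have red : ∀ z : ℝ, |z - y| < ((2:ℝ)^(n+3))⁻¹ →
      2 ^ n * y - 1/8 < 2 ^ n * z ∧ 2 ^ n * z < 2 ^ n * y + 1/8 := by
    intro z hz
    rw [pow_add, mul_inv, abs_lt] at hz
    have h0 : (0:ℝ) < 2 ^ n := by positivity
    have e : (2:ℝ) ^ n * ((2 ^ n)⁻¹ * (2^3)⁻¹) = 1/8 := by field_simp; norm_num
    have h1 := mul_lt_mul_of_pos_left hz.1 h0
    have h2 := mul_lt_mul_of_pos_left hz.2 h0
    rw [mul_neg, e] at h1
    rw [e] at h2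
    constructor <;> nlinarith
  have key : ∀ Y : ℝ, (∃ k : ℤ, k + 1/8 ≤ Y ∧ Y ≤ k + 7/8) → ∀ Z, Y - 1/8 < Z → Z < Y + 1/8 →
      ⌊Z⌋ = ⌊Y⌋ := by
    rintro Y ⟨k, h1, h2⟩ Z h3 h4
    have a : ⌊Z⌋ = k := by rw [Int.floor_eq_iff]; constructor <;> linarith
    have b : ⌊Y⌋ = k := by rw [Int.floor_eq_iff]; constructor <;> linarith
    rw [a, b]
  by_cases hc : ∃ k : ℤ, k + 1/8 ≤ (2:ℝ)^n * y ∧ (2:ℝ)^n * y ≤ k + 7/8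
  · refine ⟨false, fun z hz => ?_⟩
    obtain ⟨h1, h2⟩ := red z hz
    simp only [Bool.false_eq_true, if_false, sub_zero]
    exact key _ hc _ h1 h2
  · refine ⟨true, fun z hz => ?_⟩
    obtain ⟨h1, h2⟩ := red z hz
    simp only [if_true]
    refine key _ ?_ _ (by linarith) (by linarith)
    push Not at hc
    -- near an integer
    have hk : ∃ k : ℤ, (k:ℝ) - 1/8 ≤ (2:ℝ)^n * y ∧ (2:ℝ)^n * y ≤ k + 1/8 := by
      have f1 := Int.floor_le ((2:ℝ)^n * y)
      have f2 := Int.lt_floor_add_one ((2:ℝ)^n * y)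
      by_cases hh : (⌊(2:ℝ)^n * y⌋ : ℝ) + 1/8 ≤ (2:ℝ)^n * y
      · have := hc _ hh
        exact ⟨⌊(2:ℝ)^n * y⌋ + 1, by push_cast; linarith, by push_cast; linarith⟩
      · push Not at hh
        exact ⟨⌊(2:ℝ)^n * y⌋, by linarith, by linarith⟩
    obtain ⟨k, k1, k2⟩ := hk
    have hq : ∃ q : ℤ, (2:ℝ)^n = 3 * q + 1 ∨ (2:ℝ)^n = 3 * q + 2 := by
      clear * -
      induction n with
      | zero => exact ⟨0, Or.inl (by norm_num)⟩
      | succ n ih =>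
        obtain ⟨q, hq | hq⟩ := ih
        · exact ⟨2 * q, Or.inr (by rw [pow_succ, hq]; push_cast; ring)⟩
        · exact ⟨2 * q + 1, Or.inl (by rw [pow_succ, hq]; push_cast; ring)⟩
    obtain ⟨q, hq⟩ := hq
    refine ⟨k - q - 1, ?_, ?_⟩ <;> push_cast <;> rcases hq with hq | hq <;> rw [mul_sub] <;>
      linarith

lemma abs_coord_le (x y : EuclideanSpace ℝ (Fin d)) (i : Fin d) : |x i - y i| ≤ dist x y := by
  rw [dist_eq_norm]
  have := PiLp.norm_apply_le (x - y) i
  simpa [Real.norm_eq_abs] using this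

lemma ball_subset_cube (n : ℕ) (x : EuclideanSpace ℝ (Fin d)) :
    ∃ t : Fin d → Bool, ball x (((2:ℝ)^(n+3))⁻¹) ⊆ cube t n (cidx t n x) := by
  choose t ht using fun i => floor_third n (x i)
  refine ⟨t, fun y hy => ?_⟩
  funext i
  exact ht i (y i) (lt_of_le_of_lt (abs_coord_le y x i) hy)

/-- sparse descendants -/
def Hole (μ : Measure (EuclideanSpace ℝ (Fin d))) (t : Fin d → Bool) (ε : ℝ) (m l : ℕ)
    (r : Fin d → ℤ) : Prop :=
  ∃ j, l = j + m ∧ μ.real (cube t l r) ≤ ε * μ.real (cube t j (par^[m] r))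

lemma hole_of_por (hd : 0 < d) (μ : Measure (EuclideanSpace ℝ (Fin d))) [IsProbabilityMeasure μ]
    {ε α : ℝ} (he : 0 < ε) (ha : 0 < α) {m : ℕ} (hm : 16 * d < α * 2 ^ m) (n : ℕ)
    (x : EuclideanSpace ℝ (Fin d)) (hx : α < porMeas μ x (((2:ℝ)^(n+3))⁻¹) ε) :
    ∃ t, u par (Hole μ t ε m) m n (cidx t n x) = 1 := by
  obtain ⟨t, ht⟩ := ball_subset_cube n x
  refine ⟨t, ?_⟩
  unfold porMeas at hx
  obtain ⟨β, ⟨hβ0, y, hy1, hy2⟩, hβ⟩ := exists_lt_of_lt_csSup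
    (by exact ⟨0, le_rfl, x, by simp, by simp⟩) hx
  rw [u, if_pos]
  set r := ((2:ℝ)^(n+3))⁻¹ with hr
  have hr0 : 0 < r := by positivity
  have hyb : y ∈ ball y (β * r) := mem_ball_self (mul_pos (by linarith) hr0)
  have hyc : cidx t n y = cidx t n x := ht (hy1 hyb)
  refine ⟨cidx t (n+m) y, ⟨n, rfl, ?_⟩, by rw [par_iter, hyc]⟩
  rw [par_iter, hyc]
  have s1 : cube t (n+m) (cidx t (n+m) y) ⊆ ball y (β * r) := by
    refine (cube_subset_ball hd t (n+m) y).trans (ball_subset_ball ?_)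
    have : 2 * (d:ℝ) * ((2:ℝ)^(n+m))⁻¹ ≤ α * r := by
      rw [hr, pow_add, pow_add, ← div_eq_mul_inv, ← div_eq_mul_inv,
        div_le_div_iff₀ (by positivity) (by positivity)]
      have : (0:ℝ) < 2 ^ n := by positivity
      nlinarith
    nlinarith
  calc μ.real (cube t (n+m) (cidx t (n+m) y)) ≤ μ.real (ball y (β * r)) := measureReal_mono s1
    _ ≤ ε * μ.real (ball x r) := by
      have := ENNReal.toReal_mono (by finiteness) hy2
      rwa [ENNReal.toReal_mul, ENNReal.toReal_ofReal he.le] at this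
    _ ≤ ε * μ.real (cube t n (cidx t n x)) :=
      mul_le_mul_of_nonneg_left (measureReal_mono ht) he.le

lemma ae_lower (hd : 0 < d) (μ : Measure (EuclideanSpace ℝ (Fin d))) [IsProbabilityMeasure μ]
    (t : Fin d → Bool) (H : ℕ → (Fin d → ℤ) → Prop) (m : ℕ) {δ : ℝ} (hδ : 0 < δ) :
    ∀ᵐ x ∂μ, ∀ᶠ n : ℕ in atTop, (Real.exp (-δ)) ^ n * (((2 ^ d : ℕ):ℝ) ^ n)⁻¹ *
      V par H ((2 ^ d : ℕ):ℝ) (m+1) n (cidx t n x) ≤ μ.real (cube t n (cidx t n x)) := by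
  have hM : 2 ≤ 2 ^ d := by
    calc 2 = 2 ^ 1 := rfl
      _ ≤ 2 ^ d := Nat.pow_le_pow_right (by norm_num) hd
  set M : ℕ := 2 ^ d
  have hN : (2:ℝ) ≤ M := by exact_mod_cast hM
  set w : ℕ → (Fin d → ℤ) → ℝ := fun n b => (Real.exp (-δ)) ^ n * ((M:ℝ) ^ n)⁻¹ *
      V par H (M:ℝ) (m+1) n b with hw
  have hw0 : ∀ n b, 0 ≤ w n b := fun n b => by
    have := (V_pos par H hN (m+1) n b).le
    simp only [hw]; positivity
  have main : ∀ a : Fin d → ℤ, ∀ᵐ x ∂μ, ∀ᶠ n : ℕ in atTop,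
      ¬ (cidx t 0 x = a ∧ μ.real (cube t n (cidx t n x)) < w n (cidx t n x)) := by
    intro a
    have hb : ∀ n : ℕ, μ {x | cidx t 0 x = a ∧ μ.real (cube t n (cidx t n x)) < w n (cidx t n x)}
        ≤ ENNReal.ofReal (Real.exp (-δ) ^ n) := by
      intro n
      set F := (desc chl n a).filter fun b => μ.real (cube t n b) < w n b
      have hsub : {x | cidx t 0 x = a ∧ μ.real (cube t n (cidx t n x)) < w n (cidx t n x)} ⊆
          ⋃ b ∈ F, cube t n b := by
        rintro x ⟨hx1, hx2⟩
        simp only [mem_iUnion]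
        refine ⟨cidx t n x, ?_, rfl⟩
        rw [Finset.mem_filter, mem_desc par chl mem_chl]
        refine ⟨?_, hx2⟩
        rw [← hx1]
        simpa using par_iter t 0 n x
      calc _ ≤ μ (⋃ b ∈ F, cube t n b) := measure_mono hsub
        _ ≤ ∑ b ∈ F, μ (cube t n b) := measure_biUnion_finset_le _ _
        _ ≤ ∑ b ∈ F, ENNReal.ofReal (w n b) := by
            refine Finset.sum_le_sum fun b hb => ?_
            rw [← ofReal_measureReal]
            exact ENNReal.ofReal_le_ofReal (Finset.mem_filter.1 hb).2.le
        _ ≤ ∑ b ∈ desc chl n a, ENNReal.ofReal (w n b) :=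
            Finset.sum_le_sum_of_subset (Finset.filter_subset _ _)
        _ = ENNReal.ofReal (∑ b ∈ desc chl n a, w n b) :=
            (ENNReal.ofReal_sum_of_nonneg fun b _ => hw0 n b).symm
        _ ≤ _ := by
            refine ENNReal.ofReal_le_ofReal ?_
            simp only [hw]
            rw [← Finset.mul_sum]
            have := total par H chl mem_chl hM card_chl m n a
            have hMn : (0:ℝ) < (M:ℝ) ^ n := by positivity
            calc _ ≤ (Real.exp (-δ)) ^ n * ((M:ℝ) ^ n)⁻¹ * (M:ℝ) ^ n :=
                  mul_le_mul_of_nonneg_left this (by positivity)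
              _ = _ := by field_simp
    have hs : ∑' n, μ {x | cidx t 0 x = a ∧
        μ.real (cube t n (cidx t n x)) < w n (cidx t n x)} ≠ ⊤ := by
      refine ne_top_of_le_ne_top ?_ (ENNReal.tsum_le_tsum hb)
      have hsum : Summable fun n : ℕ => Real.exp (-δ) ^ n :=
        summable_geometric_of_lt_one (Real.exp_pos _).le (Real.exp_zero ▸ Real.exp_lt_exp.2 (by linarith))
      rw [← ENNReal.ofReal_tsum_of_nonneg (fun n => by positivity) hsum]
      exact ENNReal.ofReal_ne_top
    exact ae_eventually_notMem hs
  filter_upwards [ae_all_iff.2 main] with x hx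
  filter_upwards [hx (cidx t 0 x)] with n hn
  by_contra hc
  exact hn ⟨rfl, not_le.1 hc⟩

/-- The deterministic estimate. -/
lemma det (hd : 0 < d) (μ : Measure (EuclideanSpace ℝ (Fin d))) [IsProbabilityMeasure μ]
    (t : Fin d → Bool) (m : ℕ) {δ ε θ : ℝ} (he : 0 < ε)
    (hθ : θ * Real.log ε⁻¹ = (m+1) * Real.log 2) (hθ0 : 0 ≤ θ)
    (x : EuclideanSpace ℝ (Fin d)) (hpos : ∀ n, 0 < μ.real (cube t n (cidx t n x))) (n : ℕ)
    (hx : (Real.exp (-δ)) ^ n * (((2 ^ d : ℕ):ℝ) ^ n)⁻¹ *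
      V par (Hole μ t ε (m+1)) ((2 ^ d : ℕ):ℝ) (m+1) n (cidx t n x)
        ≤ μ.real (cube t n (cidx t n x))) :
    (1 - θ) * (- Real.log (μ.real (cube t n (cidx t n x)))) ≤
      n * (d * Real.log 2 + δ) + Real.log (4/3) -
      (∑ i ∈ Finset.range n, u par (Hole μ t ε (m+1)) (m+1) (i+1) (cidx t (i+1) x)) *
        (((((2 ^ d : ℕ):ℝ))⁻¹)^(m+1) / 8) := by
  have hM : 2 ≤ 2 ^ d := by
    calc 2 = 2 ^ 1 := rfl
      _ ≤ 2 ^ d := Nat.pow_le_pow_right (by norm_num) hd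
  have hlogM : Real.log ((2 ^ d : ℕ):ℝ) = d * Real.log 2 := by
    push_cast; rw [Real.log_pow]
  set M : ℕ := 2 ^ d
  have hN : (2:ℝ) ≤ M := by exact_mod_cast hM
  set H := Hole μ t ε (m+1) with hH
  set f : ℕ → ℝ := fun n => μ.real (cube t n (cidx t n x)) with hf
  have hanti : Antitone f := fun a b hab => measureReal_mono (cube_anti t x hab)
  have hle : ∀ n, f n ≤ 1 := fun n => measureReal_le_one
  have hA := A_pos par H hN (m+1) n (cidx t n x)
  have h1 := logA par H hN (m+1) (fun n => cidx t n x) (fun n => par_cidx t n x) n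
  have h2 : Real.log (A par H (M:ℝ) (m+1) n (cidx t n x)) - Real.log (4/3)
      - n * (d * Real.log 2 + δ) ≤ Real.log (f n) := by
    have hV := V_lower par H hN (m+1) n (cidx t n x)
    have h3 : (Real.exp (-δ)) ^ n * ((M:ℝ) ^ n)⁻¹ *
        (A par H (M:ℝ) (m+1) n (cidx t n x) * (3/4)) ≤ f n :=
      le_trans (mul_le_mul_of_nonneg_left hV (by positivity)) hx
    have h4 := Real.log_le_log (by positivity) h3
    rw [Real.log_mul (by positivity) (by positivity), Real.log_mul (by positivity) (by positivity),
      Real.log_mul (by positivity) (by positivity), Real.log_inv, Real.log_pow, Real.log_pow,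
      Real.log_exp, hlogM, show (3/4:ℝ) = (4/3)⁻¹ by norm_num, Real.log_inv] at h4
    linarith
  have hlogf : ∀ n, 0 ≤ - Real.log (f n) := fun n => by
    have := Real.log_nonpos (hpos n).le (hle n); exact neg_nonneg.2 this
  have hD : (∑ i ∈ Finset.range n, u par H 0 (i+1) (cidx t (i+1) x)) * Real.log 2 ≤
      θ * (- Real.log (f n)) := by
    have hz : ∀ i < m, u par H 0 (i+1) (cidx t (i+1) x) = 0 := by
      intro i hi
      rw [u, if_neg]
      rintro ⟨r, ⟨j, hj, -⟩, -⟩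
      omega
    rcases le_total n m with hnm | hnm
    · rw [Finset.sum_eq_zero, zero_mul]
      · exact mul_nonneg hθ0 (hlogf n)
      · intro i hi
        exact hz i (lt_of_lt_of_le (Finset.mem_range.1 hi) hnm)
    · obtain ⟨q, rfl⟩ := Nat.exists_eq_add_of_le hnm
      rw [Finset.sum_range_add, Finset.sum_eq_zero fun i hi => hz i (Finset.mem_range.1 hi), zero_add]
      have hd := drops f hpos hle hanti he (m+1) q
      have e : ∑ i ∈ Finset.range q, u par H 0 (m+i+1) (cidx t (m+i+1) x) =
          ∑ j ∈ Finset.range q, if f (j + (m+1)) ≤ ε * f j then (1:ℝ) else 0 := by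
        refine Finset.sum_congr rfl fun i _ => ?_
        rw [u]
        refine if_congr ?_ rfl rfl
        have e1 : m + i + 1 = i + (m+1) := by omega
        rw [e1]
        constructor
        · rintro ⟨r, ⟨j, hj, hr⟩, hr2⟩
          have : j = i := by omega
          subst this
          simp only [Function.iterate_zero, id] at hr2
          subst hr2
          rw [par_iter] at hr
          exact hr
        · intro hh
          refine ⟨cidx t (i + (m+1)) x, ⟨i, rfl, ?_⟩, rfl⟩
          rw [par_iter]
          exact hh
      rw [e]
      set D := ∑ j ∈ Finset.range q, if f (j + (m+1)) ≤ ε * f j then (1:ℝ) else 0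
      have hs : ∑ k ∈ Finset.range (m+1), -Real.log (f (q + k)) ≤
          (m+1) * (-Real.log (f (m+q))) := by
        calc _ ≤ ∑ k ∈ Finset.range (m+1), -Real.log (f (m + q)) := by
              refine Finset.sum_le_sum fun k hk => ?_
              have hk' := Finset.mem_range.1 hk
              exact neg_le_neg (Real.log_le_log (hpos _) (hanti (by omega)))
          _ = _ := by simp
      have h5 := mul_le_mul_of_nonneg_left (hd.trans hs) hθ0
      have h6 : (m+1:ℝ) * (D * Real.log 2) ≤ (m+1) * (θ * (-Real.log (f (m+q)))) := by
        calc (m+1:ℝ) * (D * Real.log 2) = D * ((m+1) * Real.log 2) := by ring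
          _ = θ * (D * Real.log ε⁻¹) := by rw [← hθ]; ring
          _ ≤ _ := h5
          _ = _ := by ring
      exact le_of_mul_le_mul_left h6 (by positivity)
  have : Real.log (f n) = Real.log (μ.real (cube t n (cidx t n x))) := rfl
  rw [← this]
  linarith

end geom

lemma localDim_le {d : ℕ} (hd : 0 < d) (μ : Measure (EuclideanSpace ℝ (Fin d)))
    [IsProbabilityMeasure μ] (x : EuclideanSpace ℝ (Fin d)) {s G : ℝ} (hs : 0 ≤ s) (hG : 0 < G)
    (hsG : d * Real.log 2 - G ≤ s * Real.log 2) (N0 : ℕ)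
    (hx : ∀ n ≥ N0, 0 < μ.real (ball x (2 * d * ((2:ℝ)^n)⁻¹)) ∧
      -Real.log (μ.real (ball x (2 * d * ((2:ℝ)^n)⁻¹))) ≤ n * (d * Real.log 2 - 2 * G)) :
    upperLocalDim μ x ≤ (s : EReal) := by
  have hd' : (1:ℝ) ≤ d := by exact_mod_cast hd
  obtain ⟨N1, hN1⟩ := exists_nat_ge (s * Real.log (4 * d) / G)
  set N2 := max N0 N1
  refine Filter.limsup_le_of_le (by isBoundedDefault) ?_
  have hr0 : (0:ℝ) < min (1:ℝ) (2 * (d:ℝ) / (2:ℝ) ^ N2) := by positivity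
  filter_upwards [Ioo_mem_nhdsGT hr0] with r hr
  obtain ⟨hr0, hr1⟩ := hr
  have hr1' : r < 1 := hr1.trans_le (min_le_left _ _)
  have hr2 : r < 2 * d / 2 ^ N2 := hr1.trans_le (min_le_right _ _)
  obtain ⟨k, hk1, hk2⟩ := exists_nat_pow_near (x := 2 * d / r) (y := (2:ℝ))
    (by rw [le_div_iff₀ hr0]; linarith) (by norm_num)
  set n := k + 1 with hn
  have hnN : N2 ≤ n := by
    by_contra hc
    push Not at hc
    have h1 : (2:ℝ) ^ n ≤ 2 ^ N2 := pow_le_pow_right₀ (by norm_num) hc.le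
    have h2 : (2:ℝ) ^ N2 < 2 * d / r := by
      rw [lt_div_iff₀ (by positivity)] at hr2 ⊢
      linarith
    linarith
  obtain ⟨hp, hl⟩ := hx n ((le_max_left _ _).trans hnN)
  have hsub : ball x (2 * d * ((2:ℝ)^n)⁻¹) ⊆ ball x r := by
    refine ball_subset_ball ?_
    rw [div_lt_iff₀ hr0] at hk2
    rw [← div_eq_mul_inv, div_le_iff₀ (by positivity)]
    linarith
  have hm : μ.real (ball x (2 * d * ((2:ℝ)^n)⁻¹)) ≤ μ.real (ball x r) := measureReal_mono hsub
  have hl2 := Real.log_le_log hp hm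
  have hlr : Real.log r < 0 := Real.log_neg hr0 hr1'
  have hlr2 : Real.log r ≤ Real.log (4 * d) - n * Real.log 2 := by
    have : r ≤ 4 * d / 2 ^ n := by
      rw [le_div_iff₀ (by positivity), hn, pow_succ]
      rw [le_div_iff₀ hr0] at hk1
      linarith
    have := Real.log_le_log hr0 this
    rwa [Real.log_div (by positivity) (by positivity), Real.log_pow] at this
  rw [EReal.coe_le_coe_iff]
  change Real.log (μ.real (ball x r)) / Real.log r ≤ s
  rw [div_le_iff_of_neg hlr]
  have h3 := mul_le_mul_of_nonneg_left hlr2 hs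
  have hnN1 : (N1:ℝ) ≤ n := by exact_mod_cast (le_max_right _ _).trans hnN
  have h4 : s * Real.log (4 * d) ≤ n * G := by
    rw [div_le_iff₀ hG] at hN1
    nlinarith
  have h5 : (n:ℝ) * (d * Real.log 2 - G) ≤ n * (s * Real.log 2) :=
    mul_le_mul_of_nonneg_left hsG (by positivity)
  nlinarith

lemma count_shift (P : ℕ → Prop) (n : ℕ) :
    (((Finset.range n).filter P).card : ℝ) - 4 ≤
      ∑ i ∈ Finset.range n, if P (i + 4) then (1:ℝ) else 0 := by
  have h0 : ∀ i, (0:ℝ) ≤ if P i then (1:ℝ) else 0 := fun i => by split_ifs <;> norm_num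
  have h1 : ∀ i, (if P i then (1:ℝ) else 0) ≤ 1 := fun i => by split_ifs <;> norm_num
  have e : (((Finset.range n).filter P).card : ℝ) = ∑ i ∈ Finset.range n, if P i then (1:ℝ) else 0 := by
    simp
  rw [e]
  have a1 : ∑ i ∈ Finset.range n, (if P i then (1:ℝ) else 0) ≤
      ∑ i ∈ Finset.range (4 + n), if P i then (1:ℝ) else 0 :=
    Finset.sum_le_sum_of_subset_of_nonneg (Finset.range_mono (by omega)) fun i _ _ => h0 i
  rw [Finset.sum_range_add] at a1
  have a2 : ∑ i ∈ Finset.range 4, (if P i then (1:ℝ) else 0) ≤ 4 := by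
    calc _ ≤ ∑ i ∈ Finset.range 4, (1:ℝ) := Finset.sum_le_sum fun i _ => h1 i
      _ = 4 := by simp
  have a3 : ∑ i ∈ Finset.range n, (if P (4 + i) then (1:ℝ) else 0) =
    ∑ i ∈ Finset.range n, if P (i + 4) then (1:ℝ) else 0 :=
    Finset.sum_congr rfl fun i _ => by rw [add_comm]
  linarith

lemma card_clean (Q : ℤ → Prop) (n : ℕ) :
    (Finset.filter Q (do let a ← Finset.range n; pure (a:ℤ))).card =
      ((Finset.range n).filter fun i : ℕ => Q (i:ℤ)).card := by
  have : (do let a ← Finset.range n; pure (a:ℤ)) = (Finset.range n).image (fun a : ℕ => (a:ℤ)) := by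
    ext z
    simp [Finset.bind_def, eq_comm]
  rw [this, Finset.filter_image, Finset.card_image_of_injective _ Nat.cast_injective]

lemma meanPor_clean {d : ℕ} (μ : Measure (EuclideanSpace ℝ (Fin d))) {α ρ : ℝ}
    (hμ : IsMeanPorous μ α ρ) (ε : ℝ) (hε : 0 < ε) : ∀ᵐ x ∂μ,
    ρ ≤ Filter.liminf (fun n : ℕ =>
      (((Finset.range n).filter fun i : ℕ =>
        α < porMeas μ x ((2 : ℝ) ^ (-((i : ℕ) : ℤ))) ε).card : ℝ) / n) atTop := by
  filter_upwards [hμ ε hε] with x hx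
  refine hx.trans (le_of_eq ?_)
  congr 1
  funext n
  have := card_clean (fun i : ℤ => α < porMeas μ x ((2 : ℝ) ^ (-i)) ε) n
  convert congrArg (fun k : ℕ => (k:ℝ) / n) this

/-- final arithmetic -/
lemma final_arith {n Γ θ l y S D : ℝ} (hn : 0 ≤ n) (hΓ : 0 < Γ) (hθ0 : 0 < θ) (hθ1 : θ < 1)
    (hθd : θ * D = Γ / 4) (hl2' : l ≤ 1) (hnΓ : 4 ≤ n * Γ) (hS : n * Γ - 1/2 ≤ S)
    (hdet : (1 - θ) * y ≤ n * (D * l + Γ / 4) + 1/3 - S) :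
    y ≤ n * (D * l - 2 * (Γ / 8)) := by
  by_contra hc
  push Not at hc
  have h1 := mul_lt_mul_of_pos_left hc (show 0 < 1 - θ by linarith)
  have h2 : n * (θ * D * l) ≤ n * (Γ / 4) := by
    refine mul_le_mul_of_nonneg_left ?_ hn
    rw [hθd]; nlinarith
  have h3 : 0 ≤ n * (θ * Γ) := by positivity
  have e : (1 - θ) * (n * (D * l - 2 * (Γ / 8))) =
    n * (D * l) - n * (Γ / 4) - n * (θ * D * l) + n * (θ * Γ) / 4 := by ring
  rw [e] at h1
  linarith

lemma main {d : ℕ} (hd : 0 < d) {α ρ : ℝ} (ha0 : 0 < α) (ha1 : α ≤ 1 / 2) (hρ0 : 0 < ρ)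
    (hρ1 : ρ ≤ 1) (μ : Measure (EuclideanSpace ℝ (Fin d))) [IsProbabilityMeasure μ]
    (hμ : IsMeanPorous μ α ρ) :
    upperPackingDim μ ≤ (((d : ℝ) - ((1 / (64 * d)) ^ d / 128) * ρ * α ^ d : ℝ) : EReal) := by
  have hd' : (1:ℝ) ≤ d := by exact_mod_cast hd
  obtain ⟨m, hm1, hm2⟩ := exists_nat_pow_near (x := 16 * d / α) (y := (2:ℝ))
    (by rw [le_div_iff₀ ha0]; linarith) (by norm_num)
  rw [le_div_iff₀ ha0] at hm1
  rw [div_lt_iff₀ ha0] at hm2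
  set κ : ℝ := ((((2 ^ d : ℕ):ℝ))⁻¹)^(m+1) with hκ
  have hκ0 : 0 < κ := by positivity
  have h2d : (1:ℝ) ≤ ((2 ^ d : ℕ):ℝ) := by exact_mod_cast Nat.one_le_two_pow
  have hκ1 : κ ≤ 1 := pow_le_one₀ (by positivity) (inv_le_one_of_one_le₀ h2d)
  have hκ2 : (α / (32 * d)) ^ d ≤ κ := by
    have : κ = (((2:ℝ) ^ (m+1))⁻¹) ^ d := by
      rw [hκ]; push_cast; rw [inv_pow, inv_pow, ← pow_mul, ← pow_mul, mul_comm]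
    rw [this]
    refine pow_le_pow_left₀ (by positivity) ?_ d
    rw [← one_div, div_le_div_iff₀ (by positivity) (by positivity), pow_succ]
    linarith
  set I : ℝ := (((2 ^ d : ℕ):ℝ))⁻¹ with hI
  have hI0 : 0 < I := by positivity
  have hI1 : I ≤ 1 := inv_le_one_of_one_le₀ h2d
  set Γ : ℝ := ρ * I * κ / 16 with hΓ
  have hΓ0 : 0 < Γ := by positivity
  have hIκ : I * κ ≤ 1 := mul_le_one₀ hI1 hκ0.le hκ1
  have hΓ1 : Γ ≤ 1 / 16 := by
    have : ρ * (I * κ) ≤ 1 := mul_le_one₀ hρ1 (by positivity) hIκ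
    rw [hΓ]; nlinarith
  have hCΓ : ((1 / (64 * d)) ^ d / 128) * ρ * α ^ d ≤ Γ / 8 := by
    have e : (1 / (64 * (d:ℝ))) ^ d * α ^ d = I * (α / (32 * d)) ^ d := by
      rw [hI]; push_cast; rw [← inv_pow, ← mul_pow, ← mul_pow]
      congr 1; field_simp; norm_num
    have : I * (α / (32 * d)) ^ d ≤ I * κ := mul_le_mul_of_nonneg_left hκ2 hI0.le
    rw [← e] at this
    have := mul_le_mul_of_nonneg_left this hρ0.le
    rw [hΓ]; nlinarith
  set C := (1 / (64 * (d:ℝ))) ^ d / 128 with hC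
  have hC0 : 0 ≤ C * ρ * α ^ d := by positivity
  set θ : ℝ := Γ / (4 * d) with hθ
  have hθ0 : 0 < θ := by positivity
  have hθd : θ * d = Γ / 4 := by rw [hθ]; field_simp
  have hθ1 : θ < 1 := by nlinarith
  set ε : ℝ := Real.exp (-((m+1) * Real.log 2 / θ)) with hε
  have hε0 : 0 < ε := Real.exp_pos _
  have hl2 : 0 < Real.log 2 := Real.log_pos (by norm_num)
  have hl2' : Real.log 2 ≤ 1 := by have := Real.log_two_lt_d9; linarith
  have hθε : θ * Real.log ε⁻¹ = (m+1) * Real.log 2 := by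
    rw [Real.log_inv, hε, Real.log_exp, neg_neg]; field_simp
  refine essSup_le_of_ae_le _ ?_
  have hlow := ae_all_iff.2 fun t : Fin d → Bool =>
    ae_lower hd μ t (Hole μ t ε (m+1)) m (δ := Γ / 4) (by positivity)
  filter_upwards [meanPor_clean μ hμ ε hε0, hlow] with x hx1 hx2
  -- positivity of the cubes
  have hpos : ∀ t n, 0 < μ.real (cube t n (cidx t n x)) := by
    intro t n
    obtain ⟨k, hk, hk2⟩ := ((hx2 t).and (eventually_ge_atTop n)).exists
    refine lt_of_lt_of_le ?_ (measureReal_mono (cube_anti t x hk2))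
    refine lt_of_lt_of_le ?_ hk
    have hN : (2:ℝ) ≤ ((2 ^ d : ℕ):ℝ) := by
      have : 2 ≤ 2 ^ d := by
        calc 2 = 2 ^ 1 := rfl
          _ ≤ 2 ^ d := Nat.pow_le_pow_right (by norm_num) hd
      exact_mod_cast this
    have := V_pos par (Hole μ t ε (m+1)) hN (m+1) k (cidx t k x)
    positivity
  -- counting porous scales
  set P : ℕ → Prop := fun i => α < porMeas μ x ((2 : ℝ) ^ (-(i : ℤ))) ε with hP
  have hcount : ∀ᶠ n : ℕ in atTop, ρ / 2 * n ≤ (((Finset.range n).filter P).card : ℝ) := by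
    have hlt : ρ / 2 < Filter.liminf (fun n : ℕ => (((Finset.range n).filter P).card : ℝ) / n) atTop :=
      lt_of_lt_of_le (by linarith) hx1
    have hb : IsBoundedUnder (· ≥ ·) atTop
        (fun n : ℕ => (((Finset.range n).filter P).card : ℝ) / n) :=
      isBoundedUnder_of ⟨0, fun n => by positivity⟩
    filter_upwards [eventually_lt_of_lt_liminf hlt hb, eventually_gt_atTop 0] with n hn hn0
    have : (0:ℝ) < n := by exact_mod_cast hn0
    rw [lt_div_iff₀ this] at hn
    exact hn.le
  obtain ⟨K, hK⟩ := exists_nat_ge (4 / Γ)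
  obtain ⟨N0, hN0⟩ := eventually_atTop.1
    ((hcount.and (eventually_all.2 hx2)).and (eventually_ge_atTop K))
  have hpor : ∀ i, P (i + 4) →
      ∃ t, u par (Hole μ t ε (m+1)) (m+1) (i+1) (cidx t (i+1) x) = 1 := by
    intro i hi
    refine hole_of_por hd μ hε0 ha0 (by linarith) (i+1) x ?_
    simp only [hP, zpow_neg, zpow_natCast] at hi
    exact hi
  have key : ∀ n ≥ N0, ∃ t, -Real.log (μ.real (cube t n (cidx t n x))) ≤
      n * (d * Real.log 2 - 2 * (Γ / 8)) := by
    intro n hn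
    obtain ⟨⟨hn1, hn2⟩, hn3⟩ := hN0 n hn
    set S : (Fin d → Bool) → ℝ := fun t =>
      ∑ i ∈ Finset.range n, u par (Hole μ t ε (m+1)) (m+1) (i+1) (cidx t (i+1) x) with hS
    have hsum : ρ / 2 * n - 4 ≤ ∑ t, S t := by
      calc ρ / 2 * n - 4 ≤ (((Finset.range n).filter P).card : ℝ) - 4 := by linarith
        _ ≤ ∑ i ∈ Finset.range n, if P (i + 4) then (1:ℝ) else 0 := count_shift P n
        _ ≤ ∑ i ∈ Finset.range n, ∑ t, u par (Hole μ t ε (m+1)) (m+1) (i+1) (cidx t (i+1) x) := by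
          refine Finset.sum_le_sum fun i _ => ?_
          split_ifs with hi
          · obtain ⟨t, ht⟩ := hpor i hi
            rw [← ht]
            exact Finset.single_le_sum
              (f := fun t => u par (Hole μ t ε (m+1)) (m+1) (i+1) (cidx t (i+1) x))
              (fun _ _ => u_nonneg _ _ _ _ _) (Finset.mem_univ t)
          · exact Finset.sum_nonneg fun _ _ => u_nonneg _ _ _ _ _
        _ = _ := Finset.sum_comm
    obtain ⟨t, ht⟩ : ∃ t, I * (ρ / 2 * n - 4) ≤ S t := by
      by_contra hc
      push Not at hc
      have : ∑ t, S t < ∑ t : Fin d → Bool, I * (ρ / 2 * n - 4) :=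
        Finset.sum_lt_sum_of_nonempty ⟨fun _ => true, Finset.mem_univ _⟩ fun t _ => hc t
      have hcard : ∑ t : Fin d → Bool, I * (ρ / 2 * n - 4) = ρ / 2 * n - 4 := by
        rw [Finset.sum_const, Finset.card_univ, nsmul_eq_mul, ← mul_assoc]
        have : ((Fintype.card (Fin d → Bool) : ℕ) : ℝ) * I = 1 := by
          rw [hI]; simp
        rw [this, one_mul]
      linarith
    refine ⟨t, ?_⟩
    have hdet := det hd μ t m hε0 hθε hθ0.le x (hpos t) n (hn2 t)
    change _ ≤ _ - S t * (κ / 8) at hdet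
    have hl43 : Real.log (4/3) ≤ 1/3 := by
      have := Real.log_le_sub_one_of_pos (show (0:ℝ) < 4/3 by norm_num); linarith
    have hSk : n * Γ - 1/2 ≤ S t * (κ / 8) := by
      have := mul_le_mul_of_nonneg_right ht (show 0 ≤ κ / 8 by positivity)
      have e : I * (ρ / 2 * n - 4) * (κ / 8) = n * Γ - (I * κ) / 2 := by rw [hΓ]; ring
      linarith
    have hnΓ : 4 ≤ n * Γ := by
      have : (K:ℝ) ≤ n := by exact_mod_cast hn3
      rw [div_le_iff₀ hΓ0] at hK
      nlinarith
    exact final_arith (Nat.cast_nonneg n) hΓ0 hθ0 hθ1 hθd hl2' hnΓ hSk (by linarith)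
  have hs : 0 ≤ (d:ℝ) - C * ρ * α ^ d := by linarith
  refine localDim_le hd μ x hs (G := Γ / 8) (by positivity) ?_ N0 ?_
  · nlinarith
  · intro n hn
    obtain ⟨t, ht⟩ := key n hn
    have hm := measureReal_mono (μ := μ) (cube_subset_ball hd t n x)
    refine ⟨(hpos t n).trans_le hm, ?_⟩
    have := Real.log_le_log (hpos t n) hm
    linarith

end MeanPor

/-- (Sharp small-porosity bound.) For every `d` there is a constant
`C_d > 0` such that every mean `(α,ρ)`-porous Borel probability measure on `ℝ^d`
(with `α ∈ (0,1/2]`, `ρ ∈ (0,1]`) has upper packing dimension at most `d − C_d·ρ·α^d`. -/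
theorem stmt6 (d : ℕ) (hd : 0 < d) :
    ∃ C : ℝ, 0 < C ∧ ∀ α ρ : ℝ, α ∈ Set.Ioc (0 : ℝ) (1 / 2) → ρ ∈ Set.Ioc (0 : ℝ) 1 →
      ∀ μ : Measure (EuclideanSpace ℝ (Fin d)), IsProbabilityMeasure μ →
        IsMeanPorous μ α ρ →
          upperPackingDim μ ≤ (((d : ℝ) - C * ρ * α ^ d : ℝ) : EReal) := by
  refine ⟨(1 / (64 * d)) ^ d / 128, by positivity, ?_⟩
  intro α ρ hα hρ μ hμ hp
  exact MeanPor.main hd hα.1 hα.2 hρ.1 hρ.2 μ hp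
end

section
/- For every d ∈ ℕ there is a constant C_d > 0 such that: if α ∈ (0,1/2), ρ ∈ (0,1], and μ is a mean (α,ρ)-porous Borel probability measure on ℝ^d, then the upper packing dimension of μ satisfies udim_P(μ) ≤ d − ρ + C_d/|log(1−2α)|. -/
open MeasureTheory Filter Metric Set
open scoped Classical

/-- lattice points `s·m` -/
noncomputable def lat {d : ℕ} (s : ℝ) (m : Fin d → ℤ) : EuclideanSpace ℝ (Fin d) :=
  WithLp.toLp 2 (fun l => s * (m l : ℝ))

/-- index of the lattice cell of side `s` containing `x` -/
noncomputable def cellIdx {d : ℕ} (s : ℝ) (x : EuclideanSpace ℝ (Fin d)) : Fin d → ℤ :=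
  fun l => ⌊x l / s⌋

lemma norm_le_of_coord {d : ℕ} (v : EuclideanSpace ℝ (Fin d)) (s : ℝ) (hs : 0 ≤ s)
    (h : ∀ l, |v l| ≤ s) : ‖v‖ ≤ d * s := by
  rw [EuclideanSpace.norm_eq]
  apply Real.sqrt_le_iff.mpr
  refine ⟨by positivity, ?_⟩
  calc ∑ i, ‖v i‖ ^ 2 ≤ ∑ i : Fin d, s ^ 2 := by
        apply Finset.sum_le_sum
        intro i _
        rw [Real.norm_eq_abs]
        exact pow_le_pow_left₀ (abs_nonneg _) (h i) 2
    _ = d * s ^ 2 := by simp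
    _ ≤ (d * s) ^ 2 := by
        rcases Nat.eq_zero_or_pos d with h0 | h0
        · simp [h0]
        · have : (1 : ℝ) ≤ d := by exact_mod_cast h0
          nlinarith [mul_nonneg (sub_nonneg.mpr this) (mul_nonneg (by positivity : (0:ℝ) ≤ d) (sq_nonneg s))]

lemma dist_lat_cell {d : ℕ} (s : ℝ) (hs : 0 < s) (x : EuclideanSpace ℝ (Fin d)) :
    dist x (lat s (cellIdx s x)) ≤ d * s := by
  rw [dist_eq_norm]
  apply norm_le_of_coord _ _ hs.le
  intro l
  have h1 := Int.floor_le (x l / s)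
  have h2 := Int.lt_floor_add_one (x l / s)
  rw [le_div_iff₀ hs] at h1
  rw [div_lt_iff₀ hs] at h2
  simp only [lat, cellIdx, PiLp.sub_apply]
  rw [abs_le]
  constructor <;> nlinarith

lemma le_dist_lat {d : ℕ} (s : ℝ) (hs : 0 < s) (m m' : Fin d → ℤ) (h : m ≠ m') :
    s ≤ dist (lat s m) (lat s m') := by
  obtain ⟨l, hl⟩ := Function.ne_iff.mp h
  rw [dist_eq_norm]
  refine le_trans ?_ (PiLp.norm_apply_le _ l)
  simp only [lat, PiLp.sub_apply, Real.norm_eq_abs]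
  rw [← mul_sub, abs_mul, abs_of_pos hs]
  have : (1 : ℝ) ≤ |(m l : ℝ) - m' l| := by
    have := Int.one_le_abs (sub_ne_zero.mpr hl)
    exact_mod_cast this
  nlinarith

/-- volume of the unit ball -/
noncomputable def omg (d : ℕ) : ℝ := volume.real (ball (0 : EuclideanSpace ℝ (Fin d)) 1)

lemma omg_pos (d : ℕ) : 0 < omg d := by
  unfold omg
  rw [Measure.real, ENNReal.toReal_pos_iff]
  exact ⟨measure_ball_pos _ _ one_pos, measure_ball_lt_top⟩

lemma vol_ball {d : ℕ} (x : EuclideanSpace ℝ (Fin d)) (r : ℝ) (hr : 0 < r) :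
    volume.real (ball x r) = r ^ d * omg d := by
  unfold omg
  rw [Measure.real, Measure.addHaar_ball_of_pos _ _ hr, ENNReal.toReal_mul,
    ENNReal.toReal_ofReal (by positivity), finrank_euclideanSpace_fin]
  rfl

lemma packing {d : ℕ} (s : ℝ) (hs : 0 < s) (S : Finset (Fin d → ℤ))
    (U : Set (EuclideanSpace ℝ (Fin d))) (hU : volume U ≠ ⊤)
    (h : ∀ m ∈ S, ball (lat s m) (s / 2) ⊆ U) :
    (S.card : ℝ) * ((s / 2) ^ d * omg d) ≤ volume.real U := by
  have h1 : volume.real (⋃ m ∈ S, ball (lat s m) (s / 2)) = S.card * ((s / 2) ^ d * omg d) := by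
    rw [measureReal_biUnion_finset]
    · simp [vol_ball _ _ (half_pos hs)]
    · intro m _ m' _ hne
      apply ball_disjoint_ball
      have := le_dist_lat s hs m m' hne
      linarith
    · intro m _; exact measurableSet_ball
  rw [← h1]
  exact measureReal_mono (by simpa using h) hU

lemma lat_card_le {d : ℕ} (s : ℝ) (hs : 0 < s) (x : EuclideanSpace ℝ (Fin d)) (t : ℝ) (ht : 0 ≤ t)
    (S : Finset (Fin d → ℤ)) (h : ∀ m ∈ S, dist (lat s m) x ≤ t) :
    (S.card : ℝ) ≤ (2 * (t + s) / s) ^ d := by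
  have h1 := packing s hs S (ball x (t + s)) measure_ball_lt_top.ne (by
    intro m hm
    apply ball_subset_ball'
    linarith [h m hm])
  rw [vol_ball _ _ (by linarith), ← mul_assoc] at h1
  have h2 := le_of_mul_le_mul_right h1 (omg_pos d)
  have h3 : (2 * (t + s) / s) ^ d = (t + s) ^ d / (s / 2) ^ d := by
    rw [← div_pow]; congr 1; field_simp
  rw [h3, le_div_iff₀ (by positivity)]
  exact h2

lemma lat_finite {d : ℕ} (s : ℝ) (hs : 0 < s) (x : EuclideanSpace ℝ (Fin d)) (t : ℝ) :
    {m : Fin d → ℤ | dist (lat s m) x ≤ t}.Finite := by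
  by_contra hinf
  obtain ⟨N, hN⟩ := exists_nat_gt ((2 * (max t 0 + s) / s) ^ d)
  obtain ⟨S, hS, hc⟩ := Set.Infinite.exists_subset_card_eq hinf N
  have := lat_card_le s hs x (max t 0) (le_max_right _ _) S (fun m hm => (hS hm).trans (le_max_left _ _))
  rw [hc] at this
  linarith

/-- Kneser-type inequality -/
lemma kneser_fin {d : ℕ} (n : ℕ) (y : Fin n → EuclideanSpace ℝ (Fin d)) (t u : ℝ) (ht : 0 < t)
    (htu : t ≤ u) :
    volume.real (⋃ a, ball (y a) u) ≤ (u / t) ^ d * volume.real (⋃ a, ball (y a) t) := by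
  set c : Fin n → Set (EuclideanSpace ℝ (Fin d)) := fun a =>
    {z | (∀ b, b < a → dist z (y a) < dist z (y b)) ∧ ∀ b, a < b → dist z (y a) ≤ dist z (y b)} with hc
  have hu : 0 < u := ht.trans_le htu
  have hcm : ∀ a, MeasurableSet (c a) := by
    intro a
    have : c a = (⋂ b, ⋂ (_ : b < a), {z | dist z (y a) < dist z (y b)}) ∩
      (⋂ b, ⋂ (_ : a < b), {z | dist z (y a) ≤ dist z (y b)}) := by
      ext z; simp [hc]
    rw [this]
    apply MeasurableSet.inter
    · refine MeasurableSet.iInter fun b => MeasurableSet.iInter fun _ => ?_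
      exact (isOpen_lt (by fun_prop) (by fun_prop)).measurableSet
    · refine MeasurableSet.iInter fun b => MeasurableSet.iInter fun _ => ?_
      exact (isClosed_le (by fun_prop) (by fun_prop)).measurableSet
  have hdisj : ∀ a b, a ≠ b → Disjoint (c a) (c b) := by
    have key : ∀ a b, a < b → Disjoint (c a) (c b) := by
      intro a b hab
      rw [Set.disjoint_left]
      intro z hza hzb
      exact absurd (hza.2 b hab) (not_le.mpr (hzb.1 a hab))
    intro a b hab
    rcases lt_or_gt_of_ne hab with h | h
    · exact key a b h
    · exact (key b a h).symm
  have hcover : ∀ w, (⋃ a, ball (y a) w) = ⋃ a, (ball (y a) w ∩ c a) := by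
    intro w
    apply Set.Subset.antisymm
    · intro z hz
      obtain ⟨a0, ha0⟩ := Set.mem_iUnion.mp hz
      -- least index among minimizers
      have hne : (Finset.univ : Finset (Fin n)).Nonempty := ⟨a0, Finset.mem_univ _⟩
      obtain ⟨a1, -, ha1⟩ := Finset.exists_min_image Finset.univ (fun a => dist z (y a)) hne
      set M := Finset.univ.filter (fun a => dist z (y a) = dist z (y a1)) with hM
      have hMne : M.Nonempty := ⟨a1, by simp [hM]⟩
      set a := M.min' hMne
      have haM : dist z (y a) = dist z (y a1) := by
        have := Finset.min'_mem M hMne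
        exact (Finset.mem_filter.mp this).2
      refine Set.mem_iUnion.mpr ⟨a, ?_, ?_, ?_⟩
      · rw [mem_ball, haM]
        exact (ha1 a0 (Finset.mem_univ _)).trans_lt ha0
      · intro b hb
        rw [haM]
        refine lt_of_le_of_ne (ha1 b (Finset.mem_univ _)) ?_
        intro heq
        have : b ∈ M := by simp [hM, heq]
        exact absurd (Finset.min'_le M b this) (not_le.mpr hb)
      · intro b _
        rw [haM]
        exact ha1 b (Finset.mem_univ _)
    · exact Set.iUnion_mono fun a => Set.inter_subset_left
  have hvol : ∀ w, volume.real (⋃ a, ball (y a) w) = ∑ a, volume.real (ball (y a) w ∩ c a) := by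
    intro w
    rw [hcover w]
    rw [measureReal_iUnion_fintype]
    · intro a b hab
      exact (hdisj a b hab).mono Set.inter_subset_right Set.inter_subset_right
    · intro a; exact measurableSet_ball.inter (hcm a)
  rw [hvol, hvol, Finset.mul_sum]
  apply Finset.sum_le_sum
  intro a _
  have hsub : ball (y a) u ∩ c a ⊆ AffineMap.homothety (y a) (u / t) '' (ball (y a) t ∩ c a) := by
    rintro z ⟨hz, hz1, hz2⟩
    refine ⟨AffineMap.homothety (y a) (t / u) z, ?_, ?_⟩
    · set w := AffineMap.homothety (y a) (t / u) z with hw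
      have hwy : dist w (y a) = t / u * dist z (y a) := by
        rw [hw, dist_homothety_center, Real.norm_of_nonneg (by positivity), dist_comm]
      have hwz : dist z w = (1 - t / u) * dist z (y a) := by
        rw [hw, dist_self_homothety, Real.norm_of_nonneg, dist_comm]
        rw [sub_nonneg, div_le_one hu]; exact htu
      have htri : ∀ b, dist z (y b) ≤ dist z w + dist w (y b) := fun b => dist_triangle _ _ _
      refine ⟨?_, ?_, ?_⟩
      · rw [mem_ball, hwy]
        rw [mem_ball] at hz
        calc t / u * dist z (y a) < t / u * u := by
              apply mul_lt_mul_of_pos_left hz (by positivity)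
          _ = t := by field_simp
      · intro b hb
        have := hz1 b hb
        have := htri b
        linarith
      · intro b hb
        have := hz2 b hb
        have := htri b
        linarith
    · rw [← AffineMap.homothety_mul_apply]
      have : u / t * (t / u) = 1 := by field_simp
      rw [this]; simp
  calc volume.real (ball (y a) u ∩ c a)
      ≤ volume.real (AffineMap.homothety (y a) (u / t) '' (ball (y a) t ∩ c a)) := by
        refine measureReal_mono hsub ?_
        rw [Measure.addHaar_image_homothety]
        exact ENNReal.mul_ne_top ENNReal.ofReal_ne_top
          (measure_mono Set.inter_subset_left |>.trans_lt measure_ball_lt_top).ne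
    _ = (u / t) ^ d * volume.real (ball (y a) t ∩ c a) := by
        rw [Measure.real, Measure.addHaar_image_homothety, ENNReal.toReal_mul,
          ENNReal.toReal_ofReal (abs_nonneg _), finrank_euclideanSpace_fin,
          abs_of_nonneg (by positivity)]
        rfl

lemma kneser {d : ℕ} (Y : Finset (EuclideanSpace ℝ (Fin d))) (t u : ℝ) (ht : 0 < t)
    (htu : t ≤ u) :
    volume.real (⋃ y ∈ Y, ball y u) ≤ (u / t) ^ d * volume.real (⋃ y ∈ Y, ball y t) := by
  have h : ∀ w, (⋃ y ∈ Y, ball y w) = ⋃ a, ball (Y.equivFin.symm a : EuclideanSpace ℝ (Fin d)) w := by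
    intro w
    have h0 := Equiv.iSup_comp (g := fun y : Y => ball (y : EuclideanSpace ℝ (Fin d)) w) Y.equivFin.symm
    simp only [Set.iSup_eq_iUnion] at h0
    rw [h0]
    ext z; simp
  rw [h, h]
  exact kneser_fin _ _ t u ht htu

lemma one_add_pow_le (d : ℕ) (u : ℝ) (h0 : 0 ≤ u) (h1 : u ≤ 1) : (1 + u) ^ d - 1 ≤ 2 ^ d * u := by
  have : (1 + u) ^ d ≤ 1 + (2 ^ d - 1) * u := by
    induction d with
    | zero => simp
    | succ d ih =>
      have h2 : (1 : ℝ) ≤ 2 ^ d := one_le_pow₀ (by norm_num)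
      calc (1 + u) ^ (d + 1) = (1 + u) ^ d * (1 + u) := pow_succ _ _
        _ ≤ (1 + (2 ^ d - 1) * u) * (1 + u) := by gcongr
        _ ≤ 1 + (2 ^ (d + 1) - 1) * u := by
          rw [pow_succ]
          nlinarith [mul_nonneg (mul_nonneg (sub_nonneg.mpr h2) h0) (sub_nonneg.mpr h1)]
  nlinarith

lemma block_count {d : ℕ} (L c0 : ℕ) (hc0 : 16 * (2 * d + 6) ≤ 2 ^ c0) (R : ℝ) (hR : 0 < R)
    (s : ℝ) (hs : s = R / 2 ^ L) (x0 : EuclideanSpace ℝ (Fin d))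
    (hol : ℕ → Set (Fin d → ℤ)) (S : ℕ → Finset (Fin d → ℤ))
    (hS : ∀ j, j + c0 ≤ L → ∀ m ∈ S j, ∃ x, dist x x0 ≤ d * R ∧ cellIdx s x = m ∧
      (∀ j', j' + c0 ≤ L → ∀ y ∈ hol j', R / 2 ^ j' / 2 - (d + 5) * s ≤ dist x (lat s y)) ∧
      ∃ y ∈ hol j, dist x (lat s y) ≤ R / 2 ^ j / 2 + (d + 5) * s) :
    ∑ j ∈ (Finset.range (L + 1)).filter (fun j => j + c0 ≤ L), (2 : ℝ) ^ (L - j) * (S j).card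
      ≤ 32 ^ d * (8 * (2 * d + 6)) * (d + 2) ^ d * 2 ^ (d * L) := by
  have hs0 : 0 < s := by rw [hs]; positivity
  have hc0' : (16 : ℝ) * (2 * d + 6) ≤ 2 ^ c0 := by exact_mod_cast hc0
  have hr0 : ∀ j : ℕ, 0 < R / 2 ^ j := fun j => by positivity
  have hrR : ∀ j : ℕ, R / 2 ^ j ≤ R := fun j =>
    div_le_self hR.le (one_le_pow₀ (by norm_num))
  -- s is small relative to r
  have hrs : ∀ j, j + c0 ≤ L → 16 * (2 * d + 6) * s ≤ R / 2 ^ j := by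
    intro j hj
    have h1 : (2 : ℝ) ^ L = 2 ^ j * 2 ^ c0 * 2 ^ (L - (j + c0)) := by
      rw [← pow_add, ← pow_add]; congr 1; omega
    have h2 : R / 2 ^ j = s * (2 ^ c0 * 2 ^ (L - (j + c0))) := by
      rw [hs, h1]; field_simp
    rw [h2]
    have h3 : (1 : ℝ) ≤ 2 ^ (L - (j + c0)) := one_le_pow₀ (by norm_num)
    calc 16 * (2 * (d:ℝ) + 6) * s ≤ 2 ^ c0 * s := by gcongr
      _ = s * (2 ^ c0 * 1) := by ring
      _ ≤ _ := by gcongr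
  set YS : ℕ → Set (Fin d → ℤ) := fun j => {y | j + c0 ≤ L ∧ y ∈ hol j ∧ ∃ x, dist x x0 ≤ d * R ∧
      (∀ j', j' + c0 ≤ L → ∀ y ∈ hol j', R / 2 ^ j' / 2 - (d + 5) * s ≤ dist x (lat s y)) ∧
      dist x (lat s y) ≤ R / 2 ^ j / 2 + (d + 5) * s} with hYS
  have hYdist : ∀ j, ∀ y ∈ YS j, dist (lat s y) x0 ≤ (d + 1) * R := by
    rintro j y ⟨hj, -, x, hx, -, hxy⟩
    have h1 := dist_triangle_left (lat s y) x0 x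
    have h2 := hrs j hj
    have h3 := hrR j
    have : (d + 5) * s ≤ 16 * (2 * (d : ℝ) + 6) * s / 16 := by nlinarith [mul_nonneg (Nat.cast_nonneg (α := ℝ) d) hs0.le]
    nlinarith [hr0 j]
  have hYfin : ∀ j, (YS j).Finite := fun j =>
    (lat_finite s hs0 x0 ((d + 1) * R)).subset (hYdist j)
  set YF : ℕ → Finset (EuclideanSpace ℝ (Fin d)) := fun j => (hYfin j).toFinset.image (lat s) with hYF
  have hmemYF : ∀ j z, z ∈ YF j ↔ ∃ y ∈ YS j, lat s y = z := by
    intro j z; simp [hYF]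
  set V : ℕ → ℝ → Set (EuclideanSpace ℝ (Fin d)) := fun j t => ⋃ y ∈ YF j, ball y t with hV
  have hVm : ∀ j t, MeasurableSet (V j t) := fun j t =>
    (isOpen_biUnion fun _ _ => isOpen_ball).measurableSet
  have hVfin : ∀ j t, volume (V j t) ≠ ⊤ := by
    intro j t
    refine (measure_biUnion_finset_le _ _ |>.trans_lt ?_).ne
    exact ENNReal.sum_lt_top.mpr fun _ _ => measure_ball_lt_top
  have hVmono : ∀ j t u, t ≤ u → V j t ⊆ V j u := fun j t u h =>
    Set.iUnion₂_mono fun y _ => ball_subset_ball h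
  -- per scale estimate
  have hper : ∀ j, j + c0 ≤ L → (2 : ℝ) ^ (L - j) * (S j).card * (s ^ d * omg d) ≤
      32 ^ d * (8 * (2 * d + 6)) * volume.real (V j (R / 2 ^ j / 16)) := by
    intro j hj
    set r := R / 2 ^ j with hr
    have hrp : 0 < r := hr0 j
    have hA := hrs j hj
    set a := (2 * (d : ℝ) + 6) * s with ha
    have ha0 : 0 < a := by positivity
    have hA' : 16 * a ≤ r := by rw [ha]; linarith
    have h1 := packing s hs0 (S j) (V j (r / 2 + a) \ V j (r / 2 - a))
      (measure_mono Set.sdiff_subset |>.trans_lt (hVfin j _).lt_top).ne (by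
        intro m hm z hz
        obtain ⟨x, hx, hxm, hg, y, hy, hxy⟩ := hS j hj m hm
        have hzx : dist z x < (d + 1) * s := by
          have := dist_lat_cell s hs0 x
          rw [hxm] at this
          have h3 := dist_triangle_right z x (lat s m)
          rw [mem_ball] at hz
          linarith
        constructor
        · refine Set.mem_iUnion₂.mpr ⟨lat s y, (hmemYF j _).mpr ⟨y, ⟨hj, hy, x, hx, hg, hxy⟩, rfl⟩, ?_⟩
          rw [mem_ball]
          have := dist_triangle z x (lat s y)
          rw [ha]; linarith
        · intro hz2
          obtain ⟨w, hw, hzw⟩ := Set.mem_iUnion₂.mp hz2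
          obtain ⟨y', hy', rfl⟩ := (hmemYF j _).mp hw
          have := hg j hj y' hy'.2.1
          rw [mem_ball] at hzw
          have h4 := dist_triangle_left x (lat s y') z
          rw [ha] at hzw
          linarith)
    rw [measureReal_sdiff (hVmono j _ _ (by linarith)) (hVm _ _) (hVfin _ _)] at h1
    have h2 := kneser (YF j) (r / 2 - a) (r / 2 + a) (by linarith) (by linarith)
    have h3 := kneser (YF j) (r / 16) (r / 2) (by linarith) (by linarith)
    change volume.real (V j _) ≤ _ * volume.real (V j _) at h2
    change volume.real (V j _) ≤ _ * volume.real (V j _) at h3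
    have h4 : volume.real (V j (r / 2 - a)) ≤ volume.real (V j (r / 2)) :=
      measureReal_mono (hVmono j _ _ (by linarith)) (hVfin _ _)
    have h5 : r / 2 / (r / 16) = 8 := by field_simp; norm_num
    rw [h5] at h3
    have h6 : (r / 2 + a) / (r / 2 - a) ≤ 1 + 8 * a / r := by
      rw [div_le_iff₀ (by linarith)]
      have : (1 + 8 * a / r) * (r / 2 - a) = r / 2 + a + (2 * a - 8 * a * a / r) := by field_simp; ring
      rw [this]
      have : 8 * a * a / r ≤ 2 * a := by
        rw [div_le_iff₀ hrp]; nlinarith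
      linarith
    have h6' : 0 ≤ (r / 2 + a) / (r / 2 - a) := div_nonneg (by linarith) (by linarith)
    have h7 : ((r / 2 + a) / (r / 2 - a)) ^ d - 1 ≤ 2 ^ d * (8 * a / r) := by
      refine le_trans ?_ (one_add_pow_le d (8 * a / r) (by positivity) ?_)
      · gcongr
      · rw [div_le_one hrp]; linarith
    have h8 : (S j).card * ((s / 2) ^ d * omg d) ≤ 2 ^ d * (8 * a / r) * (8 ^ d * volume.real (V j (r / 16))) := by
      calc _ ≤ (((r / 2 + a) / (r / 2 - a)) ^ d - 1) * volume.real (V j (r / 2 - a)) := by linarith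
        _ ≤ 2 ^ d * (8 * a / r) * volume.real (V j (r / 2 - a)) := by gcongr
        _ ≤ _ := by gcongr; linarith
    have h9 : (2 : ℝ) ^ (L - j) = r / s := by
      rw [hr, hs, show L = j + (L - j) by omega, pow_add]
      simp only [add_tsub_cancel_left]
      field_simp
    rw [h9]
    have h10 : (32 : ℝ) ^ d = 2 ^ d * 2 ^ d * 8 ^ d := by rw [← mul_pow, ← mul_pow]; norm_num
    have h11 : s ^ d = 2 ^ d * (s / 2) ^ d := by rw [← mul_pow]; congr 1; ring
    rw [h10]
    calc r / s * (S j).card * (s ^ d * omg d) = r / s * 2 ^ d * ((S j).card * ((s / 2) ^ d * omg d)) := by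
          rw [h11]; ring
      _ ≤ r / s * 2 ^ d * (2 ^ d * (8 * a / r) * (8 ^ d * volume.real (V j (r / 16)))) := by gcongr
      _ = _ := by rw [ha]; field_simp
  -- disjointness
  have hdisj : ∀ j j', j < j' → Disjoint (V j (R / 2 ^ j / 16)) (V j' (R / 2 ^ j' / 16)) := by
    intro j j' hjj
    rw [Set.disjoint_left]
    intro z hz hz'
    obtain ⟨w, hw, hzw⟩ := Set.mem_iUnion₂.mp hz
    obtain ⟨y, hy, rfl⟩ := (hmemYF j _).mp hw
    obtain ⟨w', hw', hzw'⟩ := Set.mem_iUnion₂.mp hz'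
    obtain ⟨y', hy', rfl⟩ := (hmemYF j' _).mp hw'
    obtain ⟨hj', -, x', -, hg', hxy'⟩ := hy'
    have h1 := hg' j hy.1 y hy.2.1
    have h2 : R / 2 ^ j' ≤ R / 2 ^ j / 2 := by
      rw [div_div, ← pow_succ]
      gcongr
      · norm_num
      · omega
    have h3 := hrs j hy.1
    rw [mem_ball] at hzw hzw'
    have h4 := dist_triangle_left x' (lat s y) (lat s y')
    have h5 := dist_triangle x' (lat s y') (lat s y)
    have h6 := dist_triangle_left (lat s y') (lat s y) z
    have h7 := hr0 j
    nlinarith [mul_nonneg (Nat.cast_nonneg (α := ℝ) d) hs0.le]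
  have hsumV : ∑ j ∈ (Finset.range (L + 1)).filter (fun j => j + c0 ≤ L), volume.real (V j (R / 2 ^ j / 16))
      ≤ ((d + 2) * R) ^ d * omg d := by
    rw [← measureReal_biUnion_finset (h := fun j _ => hVfin j _), ← vol_ball x0 _ (by positivity)]
    · apply measureReal_mono _ measure_ball_lt_top.ne
      intro z hz
      obtain ⟨j, hj, hz⟩ := Set.mem_iUnion₂.mp hz
      obtain ⟨w, hw, hzw⟩ := Set.mem_iUnion₂.mp hz
      obtain ⟨y, hy, rfl⟩ := (hmemYF j _).mp hw
      have h1 := hYdist j y hy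
      rw [mem_ball] at hzw ⊢
      have h2 := dist_triangle z (lat s y) x0
      have h3 := hrR j
      linarith
    · intro j _ j' _ hne
      rcases lt_or_gt_of_ne hne with h | h
      · exact hdisj j j' h
      · exact (hdisj j' j h).symm
    · intro j _; exact hVm _ _
  have hfinal : (∑ j ∈ (Finset.range (L + 1)).filter (fun j => j + c0 ≤ L), (2 : ℝ) ^ (L - j) * (S j).card)
      * (s ^ d * omg d) ≤ (32 ^ d * (8 * (2 * d + 6)) * (d + 2) ^ d * 2 ^ (d * L)) * (s ^ d * omg d) := by
    rw [Finset.sum_mul]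
    calc _ ≤ ∑ j ∈ (Finset.range (L + 1)).filter (fun j => j + c0 ≤ L),
          32 ^ d * (8 * (2 * (d:ℝ) + 6)) * volume.real (V j (R / 2 ^ j / 16)) := by
          apply Finset.sum_le_sum
          intro j hj
          exact hper j (Finset.mem_filter.mp hj).2
      _ = 32 ^ d * (8 * (2 * (d:ℝ) + 6)) * ∑ j ∈ (Finset.range (L + 1)).filter (fun j => j + c0 ≤ L),
          volume.real (V j (R / 2 ^ j / 16)) := by rw [Finset.mul_sum]
      _ ≤ 32 ^ d * (8 * (2 * (d:ℝ) + 6)) * (((d + 2) * R) ^ d * omg d) := by gcongr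
      _ = _ := by
        have : R = s * 2 ^ L := by rw [hs]; field_simp
        rw [this, mul_pow, mul_pow, mul_comm d L, pow_mul]
        ring
  exact le_of_mul_le_mul_right hfinal (mul_pos (by positivity) (omg_pos d))

/-- indices of hollow lattice points in block `k`, scale `j` -/
def hollow {d : ℕ} (μ : Measure (EuclideanSpace ℝ (Fin d))) (L : ℕ) (ε : ℝ) (k j : ℕ) :
    Set (Fin d → ℤ) :=
  {y | μ (ball (lat ((2 : ℝ) ^ ((k + 1) * L))⁻¹ y)
        (((2 : ℝ) ^ (k * L))⁻¹ / 2 ^ j / 2 - (d + 1) * ((2 : ℝ) ^ ((k + 1) * L))⁻¹)) ≤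
      ENNReal.ofReal ε * μ (ball (lat ((2 : ℝ) ^ ((k + 1) * L))⁻¹ y)
        (3 * (((2 : ℝ) ^ (k * L))⁻¹ / 2 ^ j)))}

/-- points which are well inside some hole in block `k` -/
def badSet {d : ℕ} (μ : Measure (EuclideanSpace ℝ (Fin d))) (L c0 : ℕ) (ε : ℝ) (k : ℕ) :
    Set (EuclideanSpace ℝ (Fin d)) :=
  {x | ∃ j, j + c0 ≤ L ∧ ∃ y ∈ hollow μ L ε k j,
    dist x (lat ((2 : ℝ) ^ ((k + 1) * L))⁻¹ y) <
      ((2 : ℝ) ^ (k * L))⁻¹ / 2 ^ j / 2 - (d + 5) * ((2 : ℝ) ^ ((k + 1) * L))⁻¹}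

lemma overlap {d : ℕ} (μ : Measure (EuclideanSpace ℝ (Fin d))) (s t : ℝ) (hs : 0 < s) (ht : 0 ≤ t)
    (K : ℕ) (hK : (2 * (t + s) / s) ^ d ≤ K) (N : Set (Fin d → ℤ))
    (T : Set (EuclideanSpace ℝ (Fin d))) (h : ∀ y ∈ N, ball (lat s y) t ⊆ T) :
    ∑' y : N, μ (ball (lat s (y : Fin d → ℤ)) t) ≤ K * μ T := by
  calc ∑' y : N, μ (ball (lat s (y : Fin d → ℤ)) t)
      = ∑' y : N, ∫⁻ z, (ball (lat s (y : Fin d → ℤ)) t).indicator (fun _ => (1 : ENNReal)) z ∂μ := by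
        congr 1; ext y
        rw [lintegral_indicator_const measurableSet_ball, one_mul]
    _ = ∫⁻ z, ∑' y : N, (ball (lat s (y : Fin d → ℤ)) t).indicator (fun _ => (1 : ENNReal)) z ∂μ := by
        rw [lintegral_tsum]
        intro y
        exact (measurable_const.indicator measurableSet_ball).aemeasurable
    _ ≤ ∫⁻ z, T.indicator (fun _ => (K : ENNReal)) z ∂μ := by
        apply lintegral_mono
        intro z
        dsimp only
        by_cases hz : z ∈ T
        · rw [Set.indicator_of_mem hz, ENNReal.tsum_eq_iSup_sum]
          apply iSup_le
          intro F
          have h1 : ∑ y ∈ F, (ball (lat s (y : Fin d → ℤ)) t).indicator (fun _ => (1 : ENNReal)) z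
              = (((F.filter fun y : N => z ∈ ball (lat s (y : Fin d → ℤ)) t).card : ℕ) : ENNReal) := by
            simp only [Set.indicator_apply, Finset.sum_boole]
          rw [h1]
          have h2 := lat_card_le s hs z t ht
            ((F.filter fun y : N => z ∈ ball (lat s (y : Fin d → ℤ)) t).image Subtype.val) (by
              intro m hm
              obtain ⟨y, hy, rfl⟩ := Finset.mem_image.mp hm
              have := (Finset.mem_filter.mp hy).2
              rw [mem_ball, dist_comm] at this
              exact this.le)
          rw [Finset.card_image_of_injective _ Subtype.val_injective] at h2
          have h3 := h2.trans hK
          exact_mod_cast h3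
        · rw [Set.indicator_of_notMem hz]
          rw [ENNReal.tsum_eq_zero.mpr]
          intro y
          rw [Set.indicator_of_notMem]
          intro hz2
          exact hz (h y y.2 hz2)
    _ ≤ K * μ T := lintegral_indicator_const_le _ _

lemma bad_inter {d : ℕ} (μ : Measure (EuclideanSpace ℝ (Fin d))) (L c0 : ℕ) (ε : ℝ)
    (F : Finset ℕ) : ∀ k0, (∀ k ∈ F, k0 ≤ k) → ∀ A : Set (EuclideanSpace ℝ (Fin d)),
    μ (A ∩ {x | ∀ k ∈ F, x ∈ badSet μ L c0 ε k}) ≤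
      ((L + 1 : ℕ) * (((8 * 2 ^ L) ^ d : ℕ) : ENNReal) * ENNReal.ofReal ε) ^ F.card *
        μ (thickening (4 * ((2 : ℝ) ^ (k0 * L))⁻¹) A) := by
  induction F using Finset.induction_on_min with
  | empty =>
    intro k0 _ A
    simp only [Finset.card_empty, pow_zero, one_mul]
    refine measure_mono (Set.inter_subset_left.trans (self_subset_thickening (by positivity) A))
  | insert a F haF ih =>
    intro k0 hk0 A
    set ε' : ENNReal := (L + 1 : ℕ) * (((8 * 2 ^ L) ^ d : ℕ) : ENNReal) * ENNReal.ofReal ε with hε'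
    have hk0a : k0 ≤ a := hk0 a (Finset.mem_insert_self _ _)
    have hcard : (insert a F).card = F.card + 1 := by
      rw [Finset.card_insert_of_notMem]
      intro h; exact absurd (haF a h) (lt_irrefl _)
    set R : ℝ := ((2 : ℝ) ^ (a * L))⁻¹ with hR
    set s : ℝ := ((2 : ℝ) ^ ((a + 1) * L))⁻¹ with hs
    have hR0 : 0 < R := by positivity
    have hs0 : 0 < s := by positivity
    have hRs : R = s * 2 ^ L := by
      rw [hR, hs, add_mul, one_mul, pow_add]; field_simp
    have hsR : s ≤ R := by
      rw [hRs]
      have : (1 : ℝ) ≤ 2 ^ L := one_le_pow₀ (by norm_num)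
      nlinarith
    have hRk0 : R ≤ ((2 : ℝ) ^ (k0 * L))⁻¹ := by
      rw [hR]; gcongr
      norm_num
    set T := thickening (4 * ((2 : ℝ) ^ (k0 * L))⁻¹) A with hT
    set G := {x | ∀ k ∈ F, x ∈ badSet μ L c0 ε k} with hG
    set N : ℕ → Set (Fin d → ℤ) := fun j => {y | y ∈ hollow μ L ε a j ∧
      (ball (lat s y) (R / 2 ^ j / 2 - (d + 5) * s) ∩ A).Nonempty} with hN
    have hsub : A ∩ {x | ∀ k ∈ insert a F, x ∈ badSet μ L c0 ε k} ⊆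
        ⋃ j ∈ Finset.range (L + 1), ⋃ y : N j,
          (ball (lat s (y : Fin d → ℤ)) (R / 2 ^ j / 2 - (d + 5) * s) ∩ G) := by
      rintro x ⟨hxA, hx⟩
      obtain ⟨j, hj, y, hy, hxy⟩ := hx a (Finset.mem_insert_self _ _)
      refine Set.mem_iUnion₂.mpr ⟨j, Finset.mem_range.mpr (by omega), ?_⟩
      refine Set.mem_iUnion.mpr ⟨⟨y, hy, x, hxy, hxA⟩, hxy, ?_⟩
      intro k hk
      exact hx k (Finset.mem_insert_of_mem hk)
    have hj : ∀ j, ∑' y : N j, μ (ball (lat s (y : Fin d → ℤ)) (R / 2 ^ j / 2 - (d + 5) * s) ∩ G) ≤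
        ε' ^ F.card * (ENNReal.ofReal ε * ((((8 * 2 ^ L) ^ d : ℕ) : ENNReal) * μ T)) := by
      intro j
      have hrR : R / 2 ^ j ≤ R := div_le_self hR0.le (one_le_pow₀ (by norm_num))
      have hr0 : 0 < R / 2 ^ j := by positivity
      have hone : ∀ y : N j, μ (ball (lat s (y : Fin d → ℤ)) (R / 2 ^ j / 2 - (d + 5) * s) ∩ G) ≤
          ε' ^ F.card * (ENNReal.ofReal ε * μ (ball (lat s (y : Fin d → ℤ)) (3 * (R / 2 ^ j)))) := by
        intro y
        refine (ih (a + 1) (fun k hk => haF k hk) _).trans ?_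
        gcongr
        refine le_trans (measure_mono ?_) y.2.1
        intro z hz
        obtain ⟨w, hw, hzw⟩ := mem_thickening_iff.mp hz
        rw [mem_ball] at hw ⊢
        have := dist_triangle z w (lat s (y : Fin d → ℤ))
        change dist z w < 4 * s at hzw
        change _ < R / 2 ^ j / 2 - (d + 1) * s
        linarith
      refine (ENNReal.tsum_le_tsum hone).trans ?_
      rw [ENNReal.tsum_mul_left, ENNReal.tsum_mul_left]
      gcongr
      apply overlap μ s _ hs0 (by positivity)
      · push_cast
        gcongr
        rw [div_le_iff₀ hs0]
        have : (1 : ℝ) ≤ 2 ^ L := one_le_pow₀ (by norm_num)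
        nlinarith
      · rintro y ⟨-, w, hw, hwA⟩ z hz
        rw [hT, mem_thickening_iff]
        refine ⟨w, hwA, ?_⟩
        rw [mem_ball] at hw hz
        have := dist_triangle_right z w (lat s y)
        have h5 : 0 ≤ ((d : ℝ) + 5) * s := by positivity
        linarith
    calc μ (A ∩ {x | ∀ k ∈ insert a F, x ∈ badSet μ L c0 ε k})
        ≤ ∑ j ∈ Finset.range (L + 1), ∑' y : N j,
          μ (ball (lat s (y : Fin d → ℤ)) (R / 2 ^ j / 2 - (d + 5) * s) ∩ G) := by
          refine (measure_mono hsub).trans ((measure_biUnion_finset_le _ _).trans ?_)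
          exact Finset.sum_le_sum fun j _ => measure_iUnion_le _
      _ ≤ ∑ j ∈ Finset.range (L + 1), ε' ^ F.card * (ENNReal.ofReal ε * ((((8 * 2 ^ L) ^ d : ℕ) : ENNReal) * μ T)) :=
          Finset.sum_le_sum fun j _ => hj j
      _ = ε' ^ (insert a F).card * μ T := by
          rw [Finset.sum_const, Finset.card_range, nsmul_eq_mul, hcard, pow_succ]
          nth_rewrite 3 [hε']
          ring

lemma bad_freq {d : ℕ} (μ : Measure (EuclideanSpace ℝ (Fin d))) [IsProbabilityMeasure μ]
    (L c0 : ℕ) (ε : ℝ) (p : ℕ)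
    (hε : (L + 1 : ℕ) * (((8 * 2 ^ L) ^ d : ℕ) : ENNReal) * ENNReal.ofReal ε ≤ (4⁻¹) ^ p) :
    ∀ᵐ x ∂μ, ∀ᶠ k : ℕ in atTop,
      p * ((Finset.range k).filter fun b => x ∈ badSet μ L c0 ε b).card ≤ k := by
  have hk : ∀ k : ℕ, μ {x | k < p * ((Finset.range k).filter fun b => x ∈ badSet μ L c0 ε b).card}
      ≤ (2⁻¹ : ENNReal) ^ k := by
    intro k
    have hsub : {x | k < p * ((Finset.range k).filter fun b => x ∈ badSet μ L c0 ε b).card} ⊆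
        ⋃ F ∈ (Finset.range k).powerset.filter (fun F => k < p * F.card),
          (Set.univ ∩ {x | ∀ b ∈ F, x ∈ badSet μ L c0 ε b}) := by
      intro x hx
      refine Set.mem_iUnion₂.mpr ⟨(Finset.range k).filter fun b => x ∈ badSet μ L c0 ε b, ?_, ?_⟩
      · rw [Finset.mem_filter, Finset.mem_powerset]
        exact ⟨Finset.filter_subset _ _, hx⟩
      · refine ⟨Set.mem_univ _, ?_⟩
        intro b hb
        exact (Finset.mem_filter.mp hb).2
    calc _ ≤ ∑ F ∈ (Finset.range k).powerset.filter (fun F => k < p * F.card),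
          μ (Set.univ ∩ {x | ∀ b ∈ F, x ∈ badSet μ L c0 ε b}) :=
          (measure_mono hsub).trans (measure_biUnion_finset_le _ _)
      _ ≤ ∑ F ∈ (Finset.range k).powerset.filter (fun F => k < p * F.card), (4⁻¹ : ENNReal) ^ k := by
          apply Finset.sum_le_sum
          intro F hF
          have hF2 := (Finset.mem_filter.mp hF).2
          refine (bad_inter μ L c0 ε F 0 (fun _ _ => Nat.zero_le _) _).trans ?_
          calc _ ≤ ((4⁻¹ : ENNReal) ^ p) ^ F.card * 1 := by
                gcongr
                exact prob_le_one
            _ = (4⁻¹ : ENNReal) ^ (p * F.card) := by rw [mul_one, pow_mul]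
            _ ≤ _ := by
                refine pow_le_pow_right_of_le_one' ?_ hF2.le
                simp
      _ ≤ ∑ F ∈ (Finset.range k).powerset, (4⁻¹ : ENNReal) ^ k :=
          Finset.sum_le_sum_of_subset (Finset.filter_subset _ _)
      _ = (2⁻¹ : ENNReal) ^ k := by
          rw [Finset.sum_const, Finset.card_powerset, Finset.card_range, nsmul_eq_mul]
          push_cast
          rw [← mul_pow]
          congr 1
          rw [show (4 : ENNReal) = 2 * 2 by norm_num, ENNReal.mul_inv (by simp) (by simp), ← mul_assoc,
            ENNReal.mul_inv_cancel (by simp) (by simp), one_mul]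
  have hsum : ∑' k : ℕ, μ {x | k < p * ((Finset.range k).filter fun b => x ∈ badSet μ L c0 ε b).card} ≠ ⊤ := by
    refine ((ENNReal.tsum_le_tsum hk).trans_lt ?_).ne
    rw [ENNReal.tsum_geometric]
    simp
  filter_upwards [ae_eventually_notMem hsum] with x hx
  filter_upwards [hx] with k hk
  simpa using hk

lemma markov_weights {ι X : Type*} [Countable ι] [MeasurableSpace X] (μ : Measure X)
    (q : ℕ → X → ι) (c : ℕ → X → ENNReal) (P : ℕ → ι → ι → ENNReal)
    (hP : ∀ k m, ∑' m', P k m m' ≤ 1) (hc : ∀ k x, c k x ≤ P k (q k x) (q (k + 1) x)) :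
    ∃ W0 : ι → ENNReal, (∀ m, 0 < W0 m) ∧ ∀ᵐ x ∂μ, ∀ᶠ k : ℕ in atTop,
      W0 (q 0 x) * (∏ j ∈ Finset.range k, c j x) * (2⁻¹) ^ k ≤ μ {z | q k z = q k x} := by
  obtain ⟨W0, hW0, hsum0⟩ := ENNReal.exists_pos_sum_of_countable' (one_ne_zero) ι
  refine ⟨W0, hW0, ?_⟩
  let W : ℕ → ι → ENNReal := fun k => Nat.rec W0 (fun k w m' => ∑' m, w m * P k m m') k
  have hWs : ∀ k m', W (k + 1) m' = ∑' m, W k m * P k m m' := fun k m' => rfl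
  have hWsum : ∀ k, ∑' m, W k m ≤ 1 := by
    intro k
    induction k with
    | zero => exact hsum0.le
    | succ k ih =>
      simp only [hWs]
      rw [ENNReal.tsum_comm]
      refine le_trans (ENNReal.tsum_le_tsum fun m => ?_) ih
      rw [ENNReal.tsum_mul_left]
      exact mul_le_of_le_one_right' (hP k m)
  have hWlow : ∀ k x, W0 (q 0 x) * (∏ j ∈ Finset.range k, c j x) ≤ W k (q k x) := by
    intro k x
    induction k with
    | zero => simp [W]
    | succ k ih =>
      rw [Finset.prod_range_succ, ← mul_assoc, hWs]
      refine le_trans ?_ (ENNReal.le_tsum (q k x))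
      exact mul_le_mul' ih (hc k x)
  have hk : ∀ k, μ {x | μ {z | q k z = q k x} < W k (q k x) * (2⁻¹) ^ k} ≤ (2⁻¹) ^ k := by
    intro k
    have hsub : {x | μ {z | q k z = q k x} < W k (q k x) * (2⁻¹) ^ k} ⊆
        ⋃ m, {x | q k x = m ∧ μ {z | q k z = m} < W k m * (2⁻¹) ^ k} := by
      intro x hx
      exact Set.mem_iUnion.mpr ⟨q k x, rfl, hx⟩
    calc _ ≤ ∑' m, μ {x | q k x = m ∧ μ {z | q k z = m} < W k m * (2⁻¹) ^ k} :=
          (measure_mono hsub).trans (measure_iUnion_le _)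
      _ ≤ ∑' m, W k m * (2⁻¹) ^ k := by
          refine ENNReal.tsum_le_tsum fun m => ?_
          by_cases h : μ {z | q k z = m} < W k m * (2⁻¹) ^ k
          · exact (measure_mono fun x hx => hx.1).trans h.le
          · simp [h]
      _ = (∑' m, W k m) * (2⁻¹) ^ k := ENNReal.tsum_mul_right
      _ ≤ _ := mul_le_of_le_one_left' (hWsum k)
  have hsum : ∑' k : ℕ, μ {x | μ {z | q k z = q k x} < W k (q k x) * (2⁻¹) ^ k} ≠ ⊤ := by
    refine ((ENNReal.tsum_le_tsum hk).trans_lt ?_).ne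
    rw [ENNReal.tsum_geometric]
    simp
  filter_upwards [ae_eventually_notMem hsum] with x hx
  filter_upwards [hx] with k hk
  have hk' : W k (q k x) * (2⁻¹) ^ k ≤ μ {z | q k z = q k x} := by simpa using hk
  exact (mul_le_mul_left (hWlow k x) _).trans hk'

lemma markov_count {ι X : Type*} [Countable ι] [MeasurableSpace X] (μ : Measure X)
    (q : ℕ → X → ι) (L M : ℕ) (hM : 0 < M) (g : ℕ → X → ℕ) (hg : ∀ k x, g k x ≤ L)
    (hcount : ∀ k m (F : Finset ι), ∑ γ ∈ Finset.range (L + 1),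
      2 ^ γ * (F.filter fun m' => ∃ x, q k x = m ∧ q (k + 1) x = m' ∧ g k x = γ).card ≤ M) :
    ∃ W0 : ι → ENNReal, (∀ m, 0 < W0 m) ∧ ∀ᵐ x ∂μ, ∀ᶠ k : ℕ in atTop,
      W0 (q 0 x) * (2 ^ (∑ j ∈ Finset.range k, g j x) * ((M : ENNReal)⁻¹) ^ k) * (2⁻¹) ^ k
        ≤ μ {z | q k z = q k x} := by
  have hM0 : (M : ENNReal) ≠ 0 := by exact_mod_cast hM.ne'
  have := markov_weights μ q (fun k x => 2 ^ (g k x) * (M : ENNReal)⁻¹)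
    (fun k m m' => ∑ γ ∈ Finset.range (L + 1),
      (if ∃ x, q k x = m ∧ q (k + 1) x = m' ∧ g k x = γ then 2 ^ γ else 0) * (M : ENNReal)⁻¹) (by
      intro k m
      rw [ENNReal.tsum_eq_iSup_sum]
      apply iSup_le
      intro F
      rw [Finset.sum_comm]
      simp only [← Finset.sum_mul]
      rw [← ENNReal.div_eq_inv_mul.trans (mul_comm _ _), ENNReal.div_le_iff hM0 (by simp), one_mul]
      refine le_trans (le_of_eq ?_) (Nat.cast_le.mpr (hcount k m F))
      push_cast
      apply Finset.sum_congr rfl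
      intro γ _
      rw [← Finset.sum_filter, Finset.sum_const, nsmul_eq_mul, mul_comm]) (by
      intro k x
      refine le_trans ?_ (Finset.single_le_sum (f := fun γ => (if ∃ z, q k z = q k x ∧ q (k + 1) z = q (k + 1) x ∧ g k z = γ then (2 : ENNReal) ^ γ else 0) * (M : ENNReal)⁻¹) (fun _ _ => zero_le)
        (Finset.mem_range.mpr (Nat.lt_succ_of_le (hg k x))))
      rw [if_pos ⟨x, rfl, rfl, rfl⟩])
  obtain ⟨W0, h0, h1⟩ := this
  refine ⟨W0, h0, ?_⟩
  filter_upwards [h1] with x hx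
  filter_upwards [hx] with k hk
  refine le_trans (le_of_eq ?_) hk
  rw [Finset.prod_mul_distrib, Finset.prod_pow_eq_pow_sum]
  simp

lemma localDim_le {d : ℕ} (μ : Measure (EuclideanSpace ℝ (Fin d))) [IsProbabilityMeasure μ]
    (x : EuclideanSpace ℝ (Fin d)) (C b t : ℝ) (hC : 0 < C) (hb : 1 < b) (ht : 0 ≤ t)
    (h : ∀ᶠ k : ℕ in atTop, b ^ (-((k : ℝ) * t)) ≤ (μ (ball x (C * (b ^ k)⁻¹))).toReal) :
    upperLocalDim μ x ≤ (t : EReal) := by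
  have hlb : 0 < Real.log b := Real.log_pos hb
  apply le_of_forall_gt_imp_ge_of_dense
  intro y hy
  obtain ⟨u, hu1, hu2⟩ := EReal.lt_iff_exists_real_btwn.mp hy
  refine le_trans ?_ hu2.le
  have htu : t < u := by exact_mod_cast hu1
  unfold upperLocalDim
  apply Filter.limsup_le_of_le
  · isBoundedDefault
  have hlogr : Tendsto (fun r : ℝ => -Real.log r) (nhdsWithin 0 (Set.Ioi 0)) atTop :=
    tendsto_neg_atBot_atTop.comp Real.tendsto_log_nhdsGT_zero
  have hkt : Tendsto (fun r : ℝ => ⌊(Real.log C + -Real.log r) / Real.log b⌋₊ + 1)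
      (nhdsWithin 0 (Set.Ioi 0)) atTop := by
    apply (tendsto_add_atTop_nat 1).comp
    apply tendsto_nat_floor_atTop.comp
    apply Tendsto.atTop_div_const hlb
    exact tendsto_atTop_add_const_left _ _ hlogr
  filter_upwards [hkt.eventually h, hlogr.eventually_gt_atTop 0,
    hlogr.eventually_ge_atTop (t * (Real.log C + Real.log b) / (u - t)),
    hlogr.eventually_ge_atTop (-Real.log C), self_mem_nhdsWithin] with r hr h0 h1 h2 hrpos
  have hrpos : 0 < r := hrpos
  set k := ⌊(Real.log C + -Real.log r) / Real.log b⌋₊ + 1 with hk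
  have hkl : (Real.log C + -Real.log r) / Real.log b < k := by
    rw [hk]; push_cast; exact Nat.lt_floor_add_one _
  have hku : (k : ℝ) ≤ (Real.log C + -Real.log r) / Real.log b + 1 := by
    rw [hk]; push_cast
    gcongr
    apply Nat.floor_le
    apply div_nonneg _ hlb.le
    linarith
  have hball : C * (b ^ k)⁻¹ ≤ r := by
    rw [← Real.log_le_log_iff (by positivity) hrpos, Real.log_mul hC.ne' (by positivity), Real.log_inv,
      Real.log_pow]
    rw [div_lt_iff₀ hlb] at hkl
    linarith
  have hmu : (μ (ball x (C * (b ^ k)⁻¹))).toReal ≤ (μ (ball x r)).toReal :=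
    ENNReal.toReal_mono (measure_ne_top _ _) (measure_mono (ball_subset_ball hball))
  have hlog : -((k : ℝ) * t) * Real.log b ≤ Real.log (μ (ball x r)).toReal := by
    rw [← Real.log_rpow (by linarith)]
    exact Real.log_le_log (by positivity) (hr.trans hmu)
  have hfin : Real.log (μ (ball x r)).toReal / Real.log r ≤ u := by
    rw [div_le_iff_of_neg (by linarith)]
    refine le_trans ?_ hlog
    have h3 : (k : ℝ) * Real.log b ≤ Real.log C + -Real.log r + Real.log b := by
      calc (k : ℝ) * Real.log b ≤ ((Real.log C + -Real.log r) / Real.log b + 1) * Real.log b := by gcongr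
        _ = _ := by field_simp
    rw [div_le_iff₀ (by linarith)] at h1
    nlinarith
  exact_mod_cast hfin

lemma dist_le_of_ball_subset {d : ℕ} (x y : EuclideanSpace ℝ (Fin d)) (a r : ℝ) (ha : 0 < a)
    (har : a ≤ r)
    (h : ball y a ⊆ ball x r) : dist x y ≤ r - a := by
  by_cases hxy : x = y
  · subst hxy; simp; exact har
  have hD : 0 < dist x y := dist_pos.mpr hxy
  by_contra hcon
  push Not at hcon
  -- choose t with r - dist < t < a
  obtain ⟨t, ht1, ht2⟩ := exists_between (show max 0 (r - dist x y) < a by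
    apply max_lt ha; linarith)
  have ht0 : 0 < t := (le_max_left _ _).trans_lt ht1
  have htr : r - dist x y < t := (le_max_right _ _).trans_lt ht1
  set z := y + (t / dist x y) • (y - x) with hz
  have hn : ‖y - x‖ = dist x y := by rw [dist_comm, dist_eq_norm]
  have h1 : z ∈ ball y a := by
    rw [mem_ball, dist_eq_norm, hz, add_sub_cancel_left, norm_smul, hn,
      Real.norm_of_nonneg (by positivity)]
    rw [div_mul_cancel₀ _ hD.ne']; exact ht2
  have h2 := h h1
  have h3 : z - x = (1 + t / dist x y) • (y - x) := by
    rw [hz, add_smul, one_smul]; abel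
  rw [mem_ball, dist_eq_norm, h3, norm_smul, hn, Real.norm_of_nonneg (by positivity), add_mul,
    div_mul_cancel₀ _ hD.ne'] at h2
  linarith

lemma porous_hole {d : ℕ} (μ : Measure (EuclideanSpace ℝ (Fin d))) (x : EuclideanSpace ℝ (Fin d))
    (α r ε : ℝ) (hα : 0 < α) (hα2 : α < 1 / 2) (hr : 0 < r) (h : α < porMeas μ x r ε) :
    ∃ y, dist x y ≤ (1 - α) * r ∧ μ (ball y (α * r)) ≤ ENNReal.ofReal ε * μ (ball x r) := by
  unfold porMeas at h
  have hne : {α : ℝ | 0 ≤ α ∧ ∃ y, Metric.ball y (α * r) ⊆ Metric.ball x r ∧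
    μ (Metric.ball y (α * r)) ≤ ENNReal.ofReal ε * μ (Metric.ball x r)}.Nonempty := by
    by_contra hemp
    rw [Set.not_nonempty_iff_eq_empty] at hemp
    rw [hemp, Real.sSup_empty] at h
    linarith
  obtain ⟨a, ⟨-, y, hsub, hmu⟩, ha⟩ := exists_lt_of_lt_csSup hne h
  have hb : ball y (α * r) ⊆ ball y (a * r) := ball_subset_ball (by gcongr)
  refine ⟨y, ?_, (measure_mono hb).trans hmu⟩
  have := dist_le_of_ball_subset x y (α * r) r (by positivity) (by nlinarith) (hb.trans hsub)
  linarith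

lemma porous_hollow {d : ℕ} (μ : Measure (EuclideanSpace ℝ (Fin d))) (L c0 : ℕ)
    (hc0 : 16 * (2 * d + 6) ≤ 2 ^ c0) (α ε : ℝ) (hα : 0 < α) (hα2 : α < 1 / 2)
    (hδ : c0 ≤ L → 1 - 2 * α ≤ ((2 : ℝ) ^ L)⁻¹)
    (k j : ℕ) (hj : j + c0 ≤ L) (x : EuclideanSpace ℝ (Fin d))
    (h : α < porMeas μ x ((2 : ℝ) ^ (-((k * L + j : ℕ) : ℤ))) ε) :
    ∃ y ∈ hollow μ L ε k j, dist x (lat ((2 : ℝ) ^ ((k + 1) * L))⁻¹ y) ≤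
      ((2 : ℝ) ^ (k * L))⁻¹ / 2 ^ j / 2 + (d + 5) * ((2 : ℝ) ^ ((k + 1) * L))⁻¹ := by
  unfold hollow
  set R : ℝ := ((2 : ℝ) ^ (k * L))⁻¹ with hR
  set s : ℝ := ((2 : ℝ) ^ ((k + 1) * L))⁻¹ with hs
  have hR0 : 0 < R := by positivity
  have hs0 : 0 < s := by positivity
  have hRs : R = s * 2 ^ L := by
    rw [hR, hs, add_mul, one_mul, pow_add]; field_simp
  have hr : (2 : ℝ) ^ (-((k * L + j : ℕ) : ℤ)) = R / 2 ^ j := by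
    rw [zpow_neg, zpow_natCast, pow_add, hR]; field_simp
  rw [hr] at h
  set r := R / 2 ^ j with hrdef
  have hr0 : 0 < r := by positivity
  have hrR : r ≤ R := div_le_self hR0.le (one_le_pow₀ (by norm_num))
  have hc0' : (16 : ℝ) * (2 * d + 6) ≤ 2 ^ c0 := by exact_mod_cast hc0
  have hrs : 16 * (2 * d + 6) * s ≤ r := by
    have h1 : (2 : ℝ) ^ L = 2 ^ j * 2 ^ c0 * 2 ^ (L - (j + c0)) := by
      rw [← pow_add, ← pow_add]; congr 1; omega
    have h2 : r = s * (2 ^ c0 * 2 ^ (L - (j + c0))) := by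
      rw [hrdef, hRs, h1]; field_simp
    rw [h2]
    have h3 : (1 : ℝ) ≤ 2 ^ (L - (j + c0)) := one_le_pow₀ (by norm_num)
    calc 16 * (2 * (d:ℝ) + 6) * s ≤ 2 ^ c0 * s := by gcongr
      _ = s * (2 ^ c0 * 1) := by ring
      _ ≤ _ := by gcongr
  have hδr : (1 - 2 * α) * r ≤ s := by
    calc (1 - 2 * α) * r ≤ ((2 : ℝ) ^ L)⁻¹ * R := by
          apply mul_le_mul (hδ (by omega)) hrR hr0.le (by positivity)
      _ = s := by rw [hRs]; field_simp
  obtain ⟨y', hy1, hy2⟩ := porous_hole μ x α r ε hα hα2 hr0 h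
  have hlat := dist_lat_cell s hs0 y'
  have hds : 0 ≤ (d : ℝ) * s := by positivity
  have htri := dist_triangle x y' (lat s (cellIdx s y'))
  refine ⟨cellIdx s y', ?_, ?_⟩
  · refine (measure_mono ?_).trans (hy2.trans ?_)
    · apply ball_subset_ball'
      rw [dist_comm]
      linarith
    · gcongr
      apply ball_subset_ball'
      nlinarith
  · linarith

/-- number of scales gained in block `k` at `x` -/
noncomputable def gain {d : ℕ} (μ : Measure (EuclideanSpace ℝ (Fin d))) (L c0 : ℕ) (α ε : ℝ) (k : ℕ)
    (x : EuclideanSpace ℝ (Fin d)) : ℕ :=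
  if x ∈ badSet μ L c0 ε k then 0 else
    if h : ∃ j, j + c0 ≤ L ∧ α < porMeas μ x ((2 : ℝ) ^ (-((k * L + j : ℕ) : ℤ))) ε then
      L - Nat.find h else 0

lemma gain_le {d : ℕ} (μ : Measure (EuclideanSpace ℝ (Fin d))) (L c0 : ℕ) (α ε : ℝ) (k : ℕ)
    (x : EuclideanSpace ℝ (Fin d)) : gain μ L c0 α ε k x ≤ L := by
  unfold gain
  split_ifs <;> omega

lemma gain_pos {d : ℕ} (μ : Measure (EuclideanSpace ℝ (Fin d))) (L c0 : ℕ) (α ε : ℝ) (k : ℕ)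
    (x : EuclideanSpace ℝ (Fin d)) (j : ℕ) (hj : j < L) (h : gain μ L c0 α ε k x = L - j) :
    j + c0 ≤ L ∧ x ∉ badSet μ L c0 ε k ∧
      α < porMeas μ x ((2 : ℝ) ^ (-((k * L + j : ℕ) : ℤ))) ε := by
  unfold gain at h
  split_ifs at h with h1 h2
  · omega
  · have := Nat.find_spec h2
    have hjj : Nat.find h2 = j := by omega
    rw [hjj] at this
    exact ⟨this.1, h1, this.2⟩
  · omega

lemma gain_block {d : ℕ} (μ : Measure (EuclideanSpace ℝ (Fin d))) (L c0 : ℕ) (α ε : ℝ) (k : ℕ)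
    (x : EuclideanSpace ℝ (Fin d)) :
    ((Finset.range L).filter fun j =>
      α < porMeas μ x ((2 : ℝ) ^ (-((k * L + j : ℕ) : ℤ))) ε).card ≤
    gain μ L c0 α ε k x + c0 + L * (if x ∈ badSet μ L c0 ε k then 1 else 0) := by
  unfold gain
  split_ifs with h1 h2
  · refine (Finset.card_filter_le _ _).trans ?_
    simp
  · have : ((Finset.range L).filter fun j =>
      α < porMeas μ x ((2 : ℝ) ^ (-((k * L + j : ℕ) : ℤ))) ε) ⊆ Finset.Ico (Nat.find h2) L := by
      intro j hj
      rw [Finset.mem_filter, Finset.mem_range] at hj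
      rw [Finset.mem_Ico]
      refine ⟨?_, hj.1⟩
      by_contra hlt
      push Not at hlt
      refine Nat.find_min h2 hlt ⟨?_, hj.2⟩
      have := (Nat.find_spec h2).1
      omega
    have := Finset.card_le_card this
    rw [Nat.card_Ico] at this
    omega
  · have : ((Finset.range L).filter fun j =>
      α < porMeas μ x ((2 : ℝ) ^ (-((k * L + j : ℕ) : ℤ))) ε) ⊆ Finset.Ico (L - c0) L := by
      intro j hj
      rw [Finset.mem_filter, Finset.mem_range] at hj
      rw [Finset.mem_Ico]
      refine ⟨?_, hj.1⟩
      by_contra hlt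
      exact h2 ⟨j, by omega, hj.2⟩
    have := Finset.card_le_card this
    rw [Nat.card_Ico] at this
    omega

lemma gain_total {d : ℕ} (μ : Measure (EuclideanSpace ℝ (Fin d))) (L c0 : ℕ) (α ε : ℝ)
    (x : EuclideanSpace ℝ (Fin d)) (k : ℕ) :
    ((Finset.range (k * L)).filter fun i : ℕ =>
      α < porMeas μ x ((2 : ℝ) ^ (-(i : ℤ))) ε).card ≤
    (∑ b ∈ Finset.range k, gain μ L c0 α ε b x) + c0 * k +
      L * ((Finset.range k).filter fun b => x ∈ badSet μ L c0 ε b).card := by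
  induction k with
  | zero => simp
  | succ k ih =>
    have h := gain_block μ L c0 α ε k x
    rw [Finset.card_filter] at ih h ⊢
    rw [Finset.card_filter] at ih ⊢
    rw [add_mul, one_mul, Finset.sum_range_add _ (k * L) L, Finset.sum_range_succ _ k,
      Finset.sum_range_succ _ k, mul_add, mul_add]
    linarith

/-- the counting constant -/
def cB (d : ℕ) : ℕ := 32 ^ d * (8 * (2 * d + 6)) * (d + 2) ^ d + (2 * (2 * d + 1)) ^ d

lemma gain_count {d : ℕ} (μ : Measure (EuclideanSpace ℝ (Fin d))) (L c0 : ℕ)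
    (hc0 : 16 * (2 * d + 6) ≤ 2 ^ c0) (α ε : ℝ) (hα : 0 < α) (hα2 : α < 1 / 2)
    (hδ : c0 ≤ L → 1 - 2 * α ≤ ((2 : ℝ) ^ L)⁻¹) (k : ℕ) (m : Fin d → ℤ) (F : Finset (Fin d → ℤ)) :
    ∑ γ ∈ Finset.range (L + 1), 2 ^ γ * (F.filter fun m' => ∃ x : EuclideanSpace ℝ (Fin d),
      cellIdx ((2 : ℝ) ^ (k * L))⁻¹ x = m ∧ cellIdx ((2 : ℝ) ^ ((k + 1) * L))⁻¹ x = m' ∧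
        gain μ L c0 α ε k x = γ).card ≤ cB d * 2 ^ (d * L) := by
  set R : ℝ := ((2 : ℝ) ^ (k * L))⁻¹ with hR
  set s : ℝ := ((2 : ℝ) ^ ((k + 1) * L))⁻¹ with hs
  have hR0 : 0 < R := by positivity
  have hs0 : 0 < s := by positivity
  have hRs : R = s * 2 ^ L := by
    rw [hR, hs, add_mul, one_mul, pow_add]; field_simp
  have hL1 : (1 : ℝ) ≤ 2 ^ L := one_le_pow₀ (by norm_num)
  have hcell : ∀ x : EuclideanSpace ℝ (Fin d), cellIdx R x = m → dist x (lat R m) ≤ d * R := by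
    rintro x rfl
    exact dist_lat_cell R hR0 x
  set U := F.filter fun m' => ∃ x : EuclideanSpace ℝ (Fin d), cellIdx R x = m ∧ cellIdx s x = m' with hU
  have hUc : (U.card : ℝ) ≤ (2 * (2 * d + 1)) ^ d * 2 ^ (d * L) := by
    have := lat_card_le s hs0 (lat R m) (2 * d * R) (by positivity) U (by
      intro m' hm'
      obtain ⟨-, x, hx, hx'⟩ := Finset.mem_filter.mp hm'
      have h1 := hcell x hx
      have h2 := dist_lat_cell s hs0 x
      rw [hx'] at h2
      have h3 := dist_triangle_left (lat s m') (lat R m) x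
      have h4 : (d : ℝ) * s ≤ d * R := by
        gcongr
        rw [hRs]; nlinarith
      linarith)
    refine this.trans ?_
    rw [mul_comm d L, pow_mul, ← mul_pow]
    gcongr
    rw [div_le_iff₀ hs0, hRs]
    nlinarith [mul_nonneg hs0.le (sub_nonneg.mpr hL1)]
  set S : ℕ → Finset (Fin d → ℤ) := fun j => F.filter fun m' => ∃ x : EuclideanSpace ℝ (Fin d),
    cellIdx R x = m ∧ cellIdx s x = m' ∧ x ∉ badSet μ L c0 ε k ∧
      α < porMeas μ x ((2 : ℝ) ^ (-((k * L + j : ℕ) : ℤ))) ε with hS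
  have hSsum := block_count L c0 hc0 R hR0 s (by rw [hRs]; field_simp) (lat R m)
    (fun j => hollow μ L ε k j) S (by
      intro j hj m' hm'
      obtain ⟨-, x, hx, hx', hb, hp⟩ := Finset.mem_filter.mp hm'
      refine ⟨x, hcell x hx, hx', ?_, porous_hollow μ L c0 hc0 α ε hα hα2 hδ k j hj x hp⟩
      intro j' hj' y hy
      by_contra hlt
      push Not at hlt
      exact hb ⟨j', hj', y, hy, hlt⟩)
  rw [← Finset.sum_range_reflect]
  have hterm : ∀ j ∈ Finset.range (L + 1), 2 ^ (L + 1 - 1 - j) * (F.filter fun m' => ∃ x : EuclideanSpace ℝ (Fin d),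
      cellIdx R x = m ∧ cellIdx s x = m' ∧ gain μ L c0 α ε k x = L + 1 - 1 - j).card ≤
      (if j + c0 ≤ L then 2 ^ (L - j) * (S j).card else 0) + (if j = L then U.card else 0) := by
    intro j hj
    rw [Finset.mem_range] at hj
    simp only [Nat.add_sub_cancel]
    by_cases hjL : j = L
    · rw [if_pos hjL, hjL, Nat.sub_self, pow_zero, one_mul]
      refine le_trans (Finset.card_le_card ?_) (Nat.le_add_left _ _)
      intro m' hm'
      obtain ⟨h1, x, hx, hx', -⟩ := Finset.mem_filter.mp hm'
      exact Finset.mem_filter.mpr ⟨h1, x, hx, hx'⟩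
    · have hjlt : j < L := by omega
      rw [if_neg hjL, add_zero]
      split_ifs with hjc
      · gcongr
        intro m' hm'
        obtain ⟨h1, x, hx, hx', hg⟩ := Finset.mem_filter.mp hm'
        have := gain_pos μ L c0 α ε k x j hjlt hg
        exact Finset.mem_filter.mpr ⟨h1, x, hx, hx', this.2⟩
      · rw [Finset.card_eq_zero.mpr, mul_zero]
        rw [Finset.filter_eq_empty_iff]
        rintro m' - ⟨x, hx, hx', hg⟩
        exact hjc (gain_pos μ L c0 α ε k x j hjlt hg).1
  refine (Finset.sum_le_sum hterm).trans ?_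
  rw [Finset.sum_add_distrib, ← Finset.sum_filter, Finset.sum_ite_eq' (Finset.range (L + 1)) L,
    if_pos (Finset.mem_range.mpr (Nat.lt_succ_self L))]
  have : ((∑ j ∈ (Finset.range (L + 1)).filter (fun j => j + c0 ≤ L), 2 ^ (L - j) * (S j).card + U.card : ℕ) : ℝ)
      ≤ ((cB d * 2 ^ (d * L) : ℕ) : ℝ) := by
    unfold cB
    push_cast
    linarith
  exact_mod_cast this

lemma meanPorous_iff {d : ℕ} (μ : Measure (EuclideanSpace ℝ (Fin d))) (α ρ : ℝ)
    (h : IsMeanPorous μ α ρ) (ε : ℝ) (hε : 0 < ε) : ∀ᵐ x ∂μ,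
    ρ ≤ Filter.liminf (fun n : ℕ =>
      (((Finset.range n).filter fun i : ℕ =>
        α < porMeas μ x ((2 : ℝ) ^ (-(i : ℤ))) ε).card : ℝ) / n) atTop := by
  filter_upwards [h ε hε] with x hx
  refine hx.trans (le_of_eq ?_)
  congr 1
  ext n
  congr 2
  have : ((Finset.range n : Finset ℕ) >>= fun a => (pure (a : ℤ) : Finset ℤ)) =
      (Finset.range n).image (fun i : ℕ => (i : ℤ)) := by
    ext a
    simp [Finset.bind_def]
  rw [this, Finset.filter_image, Finset.card_image_of_injective _ Nat.cast_injective]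

lemma cB_pos {d : ℕ} : 1 ≤ cB d := by
  unfold cB
  have : 0 < (2 * (2 * d + 1)) ^ d := by positivity
  omega

lemma porous_freq {u : ℕ → ℝ} {ρ η : ℝ} (hη : 0 < η) (hu : ∀ n, 0 ≤ u n) (hu1 : ∀ n, u n ≤ 1)
    (h : ρ ≤ liminf u atTop) {L : ℕ} (hL : 0 < L) : ∀ᶠ k : ℕ in atTop, ρ - η < u (k * L) := by
  have h1 : ρ - η < liminf u atTop := by linarith
  have h2 := Filter.eventually_lt_of_lt_liminf h1 (isBoundedUnder_of ⟨0, hu⟩)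
  exact (tendsto_id.atTop_mul_const' hL).eventually h2

lemma core_p {d : ℕ} (hd : 0 < d) (μ : Measure (EuclideanSpace ℝ (Fin d))) [IsProbabilityMeasure μ]
    (L c0 : ℕ) (hL : 0 < L) (hc0 : 16 * (2 * d + 6) ≤ 2 ^ c0) (α ρ : ℝ) (hα : 0 < α) (hα2 : α < 1 / 2)
    (hδ : c0 ≤ L → 1 - 2 * α ≤ ((2 : ℝ) ^ L)⁻¹) (hρ1 : ρ ≤ 1) (hμ : IsMeanPorous μ α ρ)
    (p : ℕ) (hp : 0 < p) :
    ∀ᵐ x ∂μ, upperLocalDim μ x ≤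
      (((d : ℝ) - ρ + 2 / p + (c0 + Real.logb 2 (cB d) + 2) / L : ℝ) : EReal) := by
  set N : ℝ := (L + 1) * (8 * 2 ^ L) ^ d with hN
  have hN0 : 0 < N := by positivity
  set ε : ℝ := (4⁻¹) ^ p / N with hεd
  have hε : 0 < ε := by positivity
  have hB : (1 : ℝ) ≤ cB d := by exact_mod_cast cB_pos
  have hlB : 0 ≤ Real.logb 2 (cB d) := Real.logb_nonneg (by norm_num) hB
  have hbad := bad_freq μ L c0 ε p (by
    have : ((L + 1 : ℕ) : ENNReal) * (((8 * 2 ^ L) ^ d : ℕ) : ENNReal) = ENNReal.ofReal N := by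
      rw [← Nat.cast_mul, ← ENNReal.ofReal_natCast]
      congr 1
      rw [hN]; push_cast; ring
    rw [this, ← ENNReal.ofReal_mul hN0.le]
    have h2 : N * ε = (4⁻¹) ^ p := by rw [hεd]; field_simp
    rw [h2, ENNReal.ofReal_pow (by norm_num), ENNReal.ofReal_inv_of_pos (by norm_num)]
    norm_num)
  obtain ⟨W0, hW0, hmk⟩ := markov_count μ (fun k x => cellIdx ((2 : ℝ) ^ (k * L))⁻¹ x) L
    (cB d * 2 ^ (d * L)) (Nat.mul_pos cB_pos (by positivity)) (gain μ L c0 α ε)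
    (fun k x => gain_le μ L c0 α ε k x)
    (fun k m F => gain_count μ L c0 hc0 α ε hα hα2 hδ k m F)
  filter_upwards [hbad, hmk, meanPorous_iff μ α ρ hμ ε hε] with x h1 h2 h3
  have hp0 : (0 : ℝ) < p := by exact_mod_cast hp
  have hL0 : (0 : ℝ) < L := by exact_mod_cast hL
  have hd1 : (1 : ℝ) ≤ d := by exact_mod_cast hd
  have h3' := porous_freq (η := 1 / p) (by positivity) (fun n => by positivity) (fun n => by
    refine div_le_one_of_le₀ ?_ (Nat.cast_nonneg n)
    have := Finset.card_filter_le (Finset.range n) fun i : ℕ =>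
        α < porMeas μ x ((2 : ℝ) ^ (-(i : ℤ))) ε
    rw [Finset.card_range] at this
    exact_mod_cast this) h3 hL
  have h4 : ∀ᶠ k : ℕ in atTop, ((2 : ENNReal)⁻¹) ^ k < W0 (cellIdx ((2 : ℝ) ^ (0 * L))⁻¹ x) :=
    (ENNReal.tendsto_pow_atTop_nhds_zero_of_lt_one (by norm_num)).eventually
      (gt_mem_nhds (hW0 _))
  set t : ℝ := (d : ℝ) - ρ + 2 / p + (c0 + Real.logb 2 (cB d) + 2) / L with ht
  have ht0 : 0 ≤ t := by
    have : 0 ≤ 2 / (p : ℝ) + (c0 + Real.logb 2 (cB d) + 2) / L := by positivity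
    linarith
  refine localDim_le μ x (2 * d + 1) ((2 : ℝ) ^ L) t (by positivity)
    (one_lt_pow₀ (by norm_num) hL.ne') ht0 ?_
  filter_upwards [h1, h2, h3', h4, eventually_gt_atTop 0] with k k1 k2 k3 k4 k5
  have hk0 : (0 : ℝ) < k := by exact_mod_cast k5
  set G := ∑ j ∈ Finset.range k, gain μ L c0 α ε j x with hG
  have hGt : ((ρ - 2 / p) * (k * L) - c0 * k : ℝ) ≤ G := by
    have e1 := gain_total μ L c0 α ε x k
    rw [← hG] at e1
    rw [lt_div_iff₀ (by push_cast; positivity)] at k3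
    have e1' : (((Finset.range (k * L)).filter fun i : ℕ =>
      α < porMeas μ x ((2 : ℝ) ^ (-(i : ℤ))) ε).card : ℝ) ≤ G + c0 * k +
      L * ((Finset.range k).filter fun b => x ∈ badSet μ L c0 ε b).card := by exact_mod_cast e1
    have k1' : (p : ℝ) * ((Finset.range k).filter fun b => x ∈ badSet μ L c0 ε b).card ≤ k := by
      exact_mod_cast k1
    rw [mul_comm, ← le_div_iff₀ hp0] at k1'
    have e2 := mul_le_mul_of_nonneg_left k1' hL0.le
    have e3 : (ρ - 2 / p) * (k * L : ℝ) = (ρ - 1 / p) * (k * L) - L * (k / p) := by ring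
    push_cast at k3
    linarith
  have hsub : {z | cellIdx ((2 : ℝ) ^ (k * L))⁻¹ z = cellIdx ((2 : ℝ) ^ (k * L))⁻¹ x} ⊆
      ball x ((2 * d + 1) * (((2 : ℝ) ^ L) ^ k)⁻¹) := by
    intro z hz
    have hR : (0 : ℝ) < ((2 : ℝ) ^ (k * L))⁻¹ := by positivity
    have a1 := dist_lat_cell _ hR z
    have a2 := dist_lat_cell _ hR x
    rw [Set.mem_ofPred_eq] at hz
    rw [hz] at a1
    rw [mem_ball, ← pow_mul, mul_comm L k]
    have := dist_triangle_right z x (lat ((2 : ℝ) ^ (k * L))⁻¹ (cellIdx ((2 : ℝ) ^ (k * L))⁻¹ x))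
    linarith
  have hfin : μ (ball x ((2 * d + 1) * (((2 : ℝ) ^ L) ^ k)⁻¹)) ≠ ⊤ := measure_ne_top _ _
  have hmain : ((2 : ENNReal)⁻¹) ^ k * (2 ^ G * (((cB d * 2 ^ (d * L) : ℕ) : ENNReal)⁻¹) ^ k) * (2⁻¹) ^ k ≤
      μ (ball x ((2 * d + 1) * (((2 : ℝ) ^ L) ^ k)⁻¹)) := by
    refine le_trans ?_ (k2.trans (measure_mono hsub))
    gcongr
  have hreal := ENNReal.toReal_mono hfin hmain
  refine le_trans ?_ hreal
  simp only [ENNReal.toReal_mul, ENNReal.toReal_pow, ENNReal.toReal_inv, ENNReal.toReal_natCast,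
    ENNReal.toReal_ofNat]
  have hr : ((2 : ℝ)⁻¹) ^ k * (2 ^ G * (((cB d * 2 ^ (d * L) : ℕ) : ℝ)⁻¹) ^ k) * (2⁻¹) ^ k =
      (2 : ℝ) ^ (-(k : ℝ) + (G + -((Real.logb 2 (cB d) + d * L) * k)) + -k) := by
    have b1 : ((cB d * 2 ^ (d * L) : ℕ) : ℝ) = (2 : ℝ) ^ (Real.logb 2 (cB d) + d * L) := by
      rw [Real.rpow_add (by norm_num), Real.rpow_logb (by norm_num) (by norm_num) (by linarith)]
      push_cast
      rw [← Nat.cast_mul, Real.rpow_natCast]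
    rw [Real.rpow_add (by norm_num), Real.rpow_add (by norm_num), Real.rpow_add (by norm_num),
      Real.rpow_neg (by norm_num), Real.rpow_neg (by norm_num), Real.rpow_natCast, Real.rpow_natCast,
      Real.rpow_mul (by norm_num), Real.rpow_natCast, b1, inv_pow, inv_pow]
  rw [hr, ← Real.rpow_natCast, ← Real.rpow_mul (by norm_num)]
  refine Real.rpow_le_rpow_of_exponent_le (by norm_num) ?_
  have : (L : ℝ) * -(k * t) = -(2 * k) + ((ρ - 2 / p) * (k * L) - c0 * k) -
      (Real.logb 2 (cB d) + d * L) * k := by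
    rw [ht]; field_simp; ring
  rw [this]
  linarith

lemma core {d : ℕ} (hd : 0 < d) (μ : Measure (EuclideanSpace ℝ (Fin d))) [IsProbabilityMeasure μ]
    (L c0 : ℕ) (hL : 0 < L) (hc0 : 16 * (2 * d + 6) ≤ 2 ^ c0) (α ρ : ℝ) (hα : 0 < α) (hα2 : α < 1 / 2)
    (hδ : c0 ≤ L → 1 - 2 * α ≤ ((2 : ℝ) ^ L)⁻¹) (hρ1 : ρ ≤ 1) (hμ : IsMeanPorous μ α ρ) :
    ∀ᵐ x ∂μ, upperLocalDim μ x ≤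
      (((d : ℝ) - ρ + (c0 + Real.logb 2 (cB d) + 2) / L : ℝ) : EReal) := by
  have := ae_all_iff.mpr fun p : ℕ =>
    core_p hd μ L c0 hL hc0 α ρ hα hα2 hδ hρ1 hμ (p + 1) (Nat.succ_pos p)
  filter_upwards [this] with x hx
  have h0 : Tendsto (fun p : ℕ => 2 / ((p + 1 : ℕ) : ℝ)) atTop (nhds 0) :=
    (tendsto_const_div_atTop_nhds_zero_nat 2).comp (tendsto_add_atTop_nat 1)
  have h1 := (h0.const_add ((d : ℝ) - ρ)).add_const ((c0 + Real.logb 2 (cB d) + 2) / L)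
  rw [add_zero] at h1
  exact ge_of_tendsto' ((continuous_coe_real_ereal.tendsto _).comp h1) hx


/-- (Large-porosity bound.) For every `d` there is a constant `C_d > 0`
such that every mean `(α,ρ)`-porous Borel probability measure on `ℝ^d`
(with `α ∈ (0,1/2)`, `ρ ∈ (0,1]`) has upper packing dimension at most
`d − ρ + C_d/|log(1−2α)|`. -/
theorem stmt7 (d : ℕ) (hd : 0 < d) :
    ∃ C : ℝ, 0 < C ∧ ∀ α ρ : ℝ, α ∈ Set.Ioo (0 : ℝ) (1 / 2) → ρ ∈ Set.Ioc (0 : ℝ) 1 →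
      ∀ μ : Measure (EuclideanSpace ℝ (Fin d)), IsProbabilityMeasure μ →
        IsMeanPorous μ α ρ →
          upperPackingDim μ ≤
            (((d : ℝ) - ρ + C / |Real.logb 2 (1 - 2 * α)| : ℝ) : EReal) := by
  set c0 : ℕ := 16 * (2 * d + 6) with hc0
  have hB : (1 : ℝ) ≤ cB d := by exact_mod_cast cB_pos
  have hlB : 0 ≤ Real.logb 2 (cB d) := Real.logb_nonneg (by norm_num) hB
  set C : ℝ := c0 + Real.logb 2 (cB d) + 2 with hC
  have hC0 : 0 < C := by positivity
  refine ⟨2 * C, by positivity, ?_⟩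
  rintro α ρ ⟨hα, hα2⟩ ⟨hρ, hρ1⟩ μ hprob hμ
  have hpos : 0 < 1 - 2 * α := by linarith
  have hlog : Real.logb 2 (1 - 2 * α) < 0 := Real.logb_neg (by norm_num) hpos (by linarith)
  rw [abs_of_neg hlog]
  set l : ℝ := -Real.logb 2 (1 - 2 * α) with hl
  have hl0 : 0 < l := by linarith
  have hpow : 1 - 2 * α = (2 : ℝ) ^ (-l) := by
    rw [hl, neg_neg, Real.rpow_logb (by norm_num) (by norm_num) hpos]
  set L : ℕ := max 1 ⌊l⌋₊ with hL
  have hL1 : 1 ≤ L := le_max_left _ _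
  have hLr : (1 : ℝ) ≤ L := by exact_mod_cast hL1
  have hδ : c0 ≤ L → 1 - 2 * α ≤ ((2 : ℝ) ^ L)⁻¹ := by
    intro h
    have h1 : L = ⌊l⌋₊ := by omega
    have h2 : (L : ℝ) ≤ l := by rw [h1]; exact Nat.floor_le hl0.le
    rw [hpow, ← Real.rpow_natCast, ← Real.rpow_neg (by norm_num)]
    exact Real.rpow_le_rpow_of_exponent_le (by norm_num) (by linarith)
  have hle : l ≤ 2 * L := by
    have h1 := (Nat.lt_floor_add_one l).le
    have h2 : ((⌊l⌋₊ : ℕ) : ℝ) ≤ L := by exact_mod_cast le_max_right _ _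
    linarith
  have hcore := core hd μ L c0 hL1 Nat.lt_two_pow_self.le α ρ hα hα2 hδ hρ1 hμ
  refine (essSup_le_of_ae_le _ hcore).trans ?_
  rw [EReal.coe_le_coe_iff]
  have : C / L ≤ 2 * C / l := by
    rw [div_le_div_iff₀ (by linarith) hl0]
    nlinarith
  linarith
end
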